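/- arXiv:2605.04464 — 2 statements merged into one kernel-verified Lean document; each statement's English description precedes it below -/
import Mathlib

section
/- Let F be a field, let R be a noncommutative unital associative F-algebra which is a prime ring (i.e., for a, b ∈ R, if a·r·b = 0 for all r ∈ R, then a = 0 or b = 0), and let p ∈ F[x] be a nonconstant polynomial of degree n ≥ 1. Assume the center Z(R) of R contains at least n+1 distinct elements. Then: (a) the additive subgroup p[R,R]⁺ generated by {p(ab) − p(ba) : a, b ∈ R} is contained in the additive subgroup [R,R] generated by all commutators xy − yx; (b) there exists a nonzero two-sided ideal M of R such that xm − mx ∈ p[R,R]⁺ for all m ∈ M and x ∈ R; and (c) if in addition R is a simple ring, then p[R,R]⁺ = [R,R]. -/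
/-!
Write `P` for the subgroup generated by the elements `p (a b) - p (b a)`. For an ideal `J`, the `v`
with `[v, J] ⊆ P` form a subring `T`, because `[v w, j] = [v, w j] + [w, j v]`. If `T` contains
elements `u`, `v` that do not commute, and also `[u, K]` and `[v, K]` for a nonzero ideal `K`, then,
as in Herstein's work on Lie ideals, `T` contains the nonzero ideal generated by some `x [u, v] y`.
Such `u` and `v` are found in one of three ways.

* If `R` has an idempotent `e ≠ 0, 1`, they are idempotents. A polynomial of degree `n` is not
  constant on `n + 1` central elements, so `p z ≠ p 0` for some central `z`, and
  `p (z e) = p 0 + (p z - p 0) e` puts multiples of idempotents into the commutators.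
* If the extended centroid `C` (the center of Martindale's ring of quotients) is infinite, they are
  `n`-th powers: replacing `y` by `a y` and `1 + v` by `1 + b v` with `a, b ∈ C` isolates
  `[y ^ n, v]`, as the bihomogeneous component of bidegree `(n, 1)` of
  `p (y (1 + v)) - p ((1 + v) y)`. If all `n`-th powers from a nonzero ideal
  commuted, those from a smaller one would be central, and `R` would be commutative.
* If `C` is finite and `R` has only trivial idempotents, they are values of the full polarization
  of `p (x y) - p (y x)`. By the Leibniz rule `[u, r]` is then again a sum of such values. Since
  `a R b` is infinite for all nonzero `a` and `b`, there are elements of `R` whose multilinear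
  monomials are linearly independent over `C`, and so two values that do not commute.
-/

open Polynomial

/-- A (not necessarily commutative) ring is prime if `a R b = 0` forces `a = 0` or `b = 0`. -/
class IsPrimeRing (R : Type*) [Ring R] : Prop where
  eq_zero_or_eq_zero : ∀ a b : R, (∀ r, a * r * b = 0) → a = 0 ∨ b = 0

theorem exists_mem_ne_zero_of_ne_bot {R : Type*} [Ring R] {J : TwoSidedIdeal R} (hJ : J ≠ ⊥) :
    ∃ x ∈ J, x ≠ 0 := by
  by_contra! h
  exact hJ (eq_bot_iff.2 fun x hx ↦ h x hx)

namespace IsPrimeRing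

variable {R : Type*} [Ring R] [IsPrimeRing R] {I J : TwoSidedIdeal R} {a b c : R}

theorem exists_mul_mul_ne_zero (ha : a ≠ 0) (hb : b ≠ 0) : ∃ r, a * r * b ≠ 0 := by
  by_contra! h
  exact (eq_zero_or_eq_zero a b h).elim ha hb

theorem exists_mem_mul_mul_ne_zero (hJ : J ≠ ⊥) (ha : a ≠ 0) (hb : b ≠ 0) :
    ∃ x ∈ J, a * x * b ≠ 0 := by
  obtain ⟨j, hj, hj0⟩ := exists_mem_ne_zero_of_ne_bot hJ
  obtain ⟨r, hr⟩ := exists_mul_mul_ne_zero ha hj0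
  obtain ⟨s, hs⟩ := exists_mul_mul_ne_zero hr hb
  exact ⟨r * j * s, J.mul_mem_right _ _ (J.mul_mem_left _ _ hj), by simpa only [mul_assoc] using hs⟩

theorem exists_mem_mul_ne_zero (hJ : J ≠ ⊥) (ha : a ≠ 0) : ∃ x ∈ J, a * x ≠ 0 := by
  obtain ⟨x, hx, h⟩ := exists_mem_mul_mul_ne_zero hJ ha ha
  exact ⟨x, hx, left_ne_zero_of_mul h⟩

theorem exists_mem_mul_ne_zero' (hJ : J ≠ ⊥) (ha : a ≠ 0) : ∃ x ∈ J, x * a ≠ 0 := by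
  obtain ⟨x, hx, h⟩ := exists_mem_mul_mul_ne_zero hJ ha ha
  exact ⟨x, hx, right_ne_zero_of_mul (by rwa [← mul_assoc])⟩

theorem mul_eq_zero_of_central (hc : c ∈ Subring.center R) (h : c * b = 0) : c = 0 ∨ b = 0 :=
  eq_zero_or_eq_zero c b fun r ↦ by
    rw [← Subring.mem_center_iff.1 hc r, mul_assoc, h, mul_zero]

instance isDomain_center {F : Type*} [CommRing F] [Algebra F R] [Nontrivial R] :
    IsDomain (Subalgebra.center F R) :=
  have : NoZeroDivisors (Subalgebra.center F R) :=
    ⟨fun {x y} h ↦ by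
      simpa only [Subtype.ext_iff] using! mul_eq_zero_of_central x.2 (congrArg Subtype.val h)⟩
  NoZeroDivisors.to_isDomain _

theorem inf_ne_bot (hI : I ≠ ⊥) (hJ : J ≠ ⊥) : I ⊓ J ≠ ⊥ := by
  obtain ⟨x, hx, hx0⟩ := exists_mem_ne_zero_of_ne_bot hI
  obtain ⟨y, hy, hxy⟩ := exists_mem_mul_ne_zero hJ hx0
  intro h
  exact hxy (h.le ⟨I.mul_mem_right _ _ hx, J.mul_mem_left _ _ hy⟩)

theorem exists_ideal_le_of_mul_mul_mem (hI : I ≠ ⊥) (hJ : J ≠ ⊥) {w : R} (hw : w ≠ 0)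
    {G : AddSubgroup R} (hG : ∀ x ∈ I, ∀ y ∈ J, x * w * y ∈ G) :
    ∃ M : TwoSidedIdeal R, M ≠ ⊥ ∧ ∀ m ∈ M, m ∈ G := by
  obtain ⟨x, hx, hxw⟩ := exists_mem_mul_ne_zero' hI hw
  obtain ⟨y, hy, hxwy⟩ := exists_mem_mul_ne_zero hJ hxw
  refine ⟨.span {x * w * y}, fun h ↦ hxwy (h.le (TwoSidedIdeal.subset_span rfl)), fun m hm ↦ ?_⟩
  rw [TwoSidedIdeal.mem_span_iff_mem_addSubgroup_closure] at hm
  refine (AddSubgroup.closure_le G).2 ?_ hm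
  rintro _ ⟨_, ⟨r, -, _, rfl, rfl⟩, s, -, rfl⟩
  simpa only [mul_assoc] using! hG _ (I.mul_mem_left r x hx) _ (J.mul_mem_right y s hy)

end IsPrimeRing

section Transporter

variable {R : Type*} [Ring R] {P : AddSubgroup R} {J K : TwoSidedIdeal R}

/-- The subring of all `v` with `[v, J] ⊆ P`. -/
def commTransporter (P : AddSubgroup R) (J : TwoSidedIdeal R) : Subring R where
  carrier := {v | ∀ j ∈ J, ⁅v, j⁆ ∈ P}
  mul_mem' {v w} hv hw j hj := by
    have h : ⁅v * w, j⁆ = ⁅v, w * j⁆ + ⁅w, j * v⁆ := by simp only [Ring.lie_def]; noncomm_ring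
    exact h ▸ add_mem (hv _ (J.mul_mem_left _ _ hj)) (hw _ (J.mul_mem_right _ _ hj))
  one_mem' j _ := by simp [Ring.lie_def]
  add_mem' {v w} hv hw j hj := by
    have h : ⁅v + w, j⁆ = ⁅v, j⁆ + ⁅w, j⁆ := by simp only [Ring.lie_def]; noncomm_ring
    exact h ▸ add_mem (hv j hj) (hw j hj)
  zero_mem' j _ := by simp [Ring.lie_def]
  neg_mem' {v} hv j hj := by
    have h : ⁅-v, j⁆ = -⁅v, j⁆ := by simp only [Ring.lie_def]; noncomm_ring
    exact h ▸ neg_mem (hv j hj)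

theorem lie_mul_mem_of_lie_mem {T : Subring R} {u v : R} (hv : v ∈ T)
    (huK : ∀ x ∈ K, ⁅u, x⁆ ∈ T) {x : R} (hx : x ∈ K) : ⁅u, v⁆ * x ∈ T := by
  have h : ⁅u, v⁆ * x = ⁅u, v * x⁆ - v * ⁅u, x⁆ := by simp only [Ring.lie_def]; noncomm_ring
  exact h ▸ sub_mem (huK _ (K.mul_mem_left _ _ hx)) (mul_mem hv (huK x hx))

theorem mul_lie_mul_mem_of_lie_mem {T : Subring R} {u v : R} (hv : v ∈ T)
    (huK : ∀ x ∈ K, ⁅u, x⁆ ∈ T) (hvK : ∀ x ∈ K, ⁅v, x⁆ ∈ T) {x y : R} (hx : x ∈ K) (hy : y ∈ K) :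
    x * ⁅u, v⁆ * y ∈ T := by
  have h : x * ⁅u, v⁆ * y = ⁅u, v⁆ * (x * y) + ⁅v, ⁅u, x⁆⁆ * y - ⁅u, ⁅v, x⁆⁆ * y := by
    simp only [Ring.lie_def]; noncomm_ring
  rw [h]
  exact sub_mem (add_mem (lie_mul_mem_of_lie_mem hv huK (K.mul_mem_left _ _ hy))
    (lie_mul_mem_of_lie_mem (huK x hx) hvK hy)) (lie_mul_mem_of_lie_mem (hvK x hx) huK hy)

variable [IsPrimeRing R]

/-- If `u` and `v` do not commute, then `T := commTransporter P J` contains the nonzero ideal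
`K [u, v] K`, and `[m j, r] = [m, j r] - [r m, j]` turns `M ⊆ T` into `[M J, R] ⊆ P`. -/
theorem exists_ideal_le_commTransporter_top (hJ : J ≠ ⊥) (hK : K ≠ ⊥) {u v : R}
    (huv : ⁅u, v⁆ ≠ 0) (hv : v ∈ commTransporter P J)
    (huK : ∀ x ∈ K, ⁅u, x⁆ ∈ commTransporter P J) (hvK : ∀ x ∈ K, ⁅v, x⁆ ∈ commTransporter P J) :
    ∃ M : TwoSidedIdeal R, M ≠ ⊥ ∧ ∀ m ∈ M, m ∈ commTransporter P ⊤ := by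
  obtain ⟨M, hM, hMT⟩ := IsPrimeRing.exists_ideal_le_of_mul_mul_mem hK hK huv
    (G := (commTransporter P J).toAddSubgroup)
    fun x hx y hy ↦ mul_lie_mul_mem_of_lie_mem hv huK hvK hx hy
  obtain ⟨j, -, hj⟩ := exists_mem_ne_zero_of_ne_bot hJ
  have : Nontrivial R := ⟨j, 0, hj⟩
  refine IsPrimeRing.exists_ideal_le_of_mul_mul_mem hM hJ one_ne_zero
    (G := (commTransporter P ⊤).toAddSubgroup) fun m hm j hj r _ ↦ ?_
  have h : ⁅m * 1 * j, r⁆ = ⁅m, j * r⁆ - ⁅r * m, j⁆ := by simp only [Ring.lie_def]; noncomm_ring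
  exact h ▸ sub_mem (hMT m hm _ (J.mul_mem_right _ _ hj)) (hMT _ (M.mul_mem_left _ _ hm) j hj)

end Transporter

section PCommutators

variable {F R : Type*} [CommRing F] [Ring R] [Algebra F R] {p : F[X]}

/-- The additive subgroup `p[R,R]⁺` generated by the additive `p`-commutators. -/
def pCommutators (R : Type*) [Ring R] [Algebra F R] (p : F[X]) : AddSubgroup R :=
  AddSubgroup.closure {x | ∃ a b : R, x = aeval (a * b) p - aeval (b * a) p}

theorem aeval_sub_aeval_mem_pCommutators (a b : R) :
    aeval (a * b) p - aeval (b * a) p ∈ pCommutators R p :=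
  AddSubgroup.subset_closure ⟨a, b, rfl⟩

theorem mul_aeval_mul_comm (p : F[X]) (a b : R) :
    b * aeval (a * b) p = aeval (b * a) p * b := by
  simp only [aeval_eq_sum_range, Finset.mul_sum, Finset.sum_mul, mul_smul_comm, smul_mul_assoc]
  have h : SemiconjBy b (a * b) (b * a) := (mul_assoc b a b).symm
  simp only [(h.pow_right _).eq]

theorem aeval_mul_sub_aeval_mul_comm (p : F[X]) (a b : R) :
    aeval (a * b) p - aeval (b * a) p =
      a * (b * aeval (a * b) p.divX) - b * aeval (a * b) p.divX * a := by
  conv_lhs => rw [← divX_mul_X_add p]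
  have h : aeval (a * b) p.divX * (a * b) = a * b * aeval (a * b) p.divX := by
    simpa using congrArg (aeval (a * b)) (mul_comm p.divX X)
  simp only [map_add, map_mul, aeval_X, aeval_C, h]
  simp only [mul_aeval_mul_comm, mul_assoc, add_sub_add_right_eq_sub]

theorem pCommutators_le_closure_commutators :
    pCommutators R p ≤ AddSubgroup.closure {x | ∃ a b : R, x = a * b - b * a} := by
  refine (AddSubgroup.closure_le _).2 ?_
  rintro _ ⟨a, b, rfl⟩
  exact AddSubgroup.subset_closure ⟨_, _, aeval_mul_sub_aeval_mul_comm p a b⟩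

end PCommutators

section Idempotent

variable {F R : Type*} [CommRing F] [Ring R] [Algebra F R] {p : F[X]} {e : R}

theorem isIdempotentElem_add_mul_mul_one_sub (he : IsIdempotentElem e) (x : R) :
    IsIdempotentElem (e + e * x * (1 - e)) := by
  have h (y : R) : e * (e * y) = e * y := by rw [← mul_assoc, he.eq]
  simp only [IsIdempotentElem, mul_add, add_mul, mul_sub, sub_mul, mul_one, mul_assoc, h, he.eq]
  abel

theorem isIdempotentElem_add_one_sub_mul_mul (he : IsIdempotentElem e) (x : R) :
    IsIdempotentElem (e + (1 - e) * x * e) := by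
  have h (y : R) : e * (e * y) = e * y := by rw [← mul_assoc, he.eq]
  simp only [IsIdempotentElem, mul_add, add_mul, mul_sub, sub_mul, one_mul, mul_assoc, h, he.eq]
  abel

theorem aeval_mem_center (p : F[X]) {z : R} (hz : z ∈ Subring.center R) :
    aeval z p ∈ Subalgebra.center F R :=
  Algebra.adjoin_le (Set.singleton_subset_iff.2 hz) (aeval_mem_adjoin_singleton F z)

theorem exists_center_aeval_ne [FaithfulSMul F R] [IsPrimeRing R] [Nontrivial R]
    (hp : p.natDegree ≠ 0)
    (hZ : ∃ g : Fin (p.natDegree + 1) → R, Function.Injective g ∧ ∀ i, g i ∈ Subring.center R) :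
    ∃ z ∈ Subring.center R, aeval z p - aeval 0 p ≠ 0 := by
  obtain ⟨g, hg, hgZ⟩ := hZ
  by_contra! h
  let q : (Subalgebra.center F R)[X] := (p - C (p.coeff 0)).map (algebraMap F _)
  have hdeg : q.natDegree = p.natDegree := by
    rw [natDegree_map_eq_of_injective fun a b hab ↦
      FaithfulSMul.algebraMap_injective F R (congrArg Subtype.val hab), natDegree_sub_C]
  have hq : q = 0 := by
    refine eq_zero_of_natDegree_lt_card_of_eval_eq_zero q (f := fun i ↦ ⟨g i, hgZ i⟩)
      (fun i j hij ↦ hg (congrArg Subtype.val hij)) (fun i ↦ Subtype.ext ?_) (by simp [hdeg])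
    have hgi := h (g i) (hgZ i)
    rw [eval_map_algebraMap, ← Subalgebra.coe_val, ← aeval_algHom_apply]
    simpa [aeval_def, eval₂_at_zero] using hgi
  exact hp (by rw [← hdeg, hq, natDegree_zero])

theorem aeval_mul_of_isIdempotentElem {z : R} (hz : z ∈ Subring.center R)
    (he : IsIdempotentElem e) :
    aeval (z * e) p = aeval 0 p + (aeval z p - aeval 0 p) * e := by
  have hze : Commute z e := (Subring.mem_center_iff.1 hz e).symm
  have h : aeval (z * e) p.divX * (z * e) = aeval z p.divX * z * e := by
    have hpow (i : ℕ) : (z * e) ^ i * (z * e) = z ^ i * z * e := by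
      rw [← pow_succ, hze.mul_pow, he.pow_succ_eq, pow_succ]
    simp only [aeval_eq_sum_range, Finset.sum_mul, smul_mul_assoc, hpow]
  conv_lhs => rw [← divX_mul_X_add p]
  conv_rhs => rw [← divX_mul_X_add p]
  simp [h, add_comm]

theorem mul_sub_mem_pCommutators {z a b : R} (hz : z ∈ Subring.center R)
    (hab : IsIdempotentElem (a * b)) (hba : IsIdempotentElem (b * a)) :
    (aeval z p - aeval 0 p) * (a * b - b * a) ∈ pCommutators R p := by
  have h := aeval_sub_aeval_mem_pCommutators (p := p) (z * a) b
  rwa [← mul_assoc b, Subring.mem_center_iff.1 hz b, mul_assoc, mul_assoc,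
    aeval_mul_of_isIdempotentElem hz hab, aeval_mul_of_isIdempotentElem hz hba,
    add_sub_add_left_eq_sub, ← mul_sub] at h

theorem mul_lie_mem_pCommutators_of_isIdempotentElem {z : R} (hz : z ∈ Subring.center R)
    (he : IsIdempotentElem e) (x : R) :
    (aeval z p - aeval 0 p) * ⁅e, x⁆ ∈ pCommutators R p := by
  have hee (y : R) : e * (e * y) = e * y := by rw [← mul_assoc, he.eq]
  have h₁ : e * (e + e * x * (1 - e)) = e + e * x * (1 - e) := by
    simp only [mul_add, mul_assoc, hee, he.eq]
  have h₂ : (e + e * x * (1 - e)) * e = e := by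
    simp only [add_mul, mul_assoc, sub_mul, one_mul, he.eq, sub_self, mul_zero, add_zero]
  have h₃ : e * (e + (1 - e) * x * e) = e := by
    simp only [mul_add, ← mul_assoc, mul_sub, mul_one, he.eq, sub_self, zero_mul, add_zero]
  have h₄ : (e + (1 - e) * x * e) * e = e + (1 - e) * x * e := by
    simp only [add_mul, mul_assoc, he.eq]
  have hadd := add_mem
    (mul_sub_mem_pCommutators (p := p) (a := e) (b := e + e * x * (1 - e)) hz
      (by rw [h₁]; exact isIdempotentElem_add_mul_mul_one_sub he x) (by rwa [h₂]))
    (mul_sub_mem_pCommutators (p := p) (a := e) (b := e + (1 - e) * x * e) hz (by rwa [h₃])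
      (by rw [h₄]; exact isIdempotentElem_add_one_sub_mul_mul he x))
  rw [← mul_add, h₁, h₂, h₃, h₄] at hadd
  convert hadd using 2
  rw [Ring.lie_def]
  noncomm_ring

theorem lie_mem_of_isIdempotentElem {T : Subring R} (hT : ∀ f : R, IsIdempotentElem f → f ∈ T)
    (he : IsIdempotentElem e) (x : R) : ⁅e, x⁆ ∈ T := by
  have h : ⁅e, x⁆ = (e + e * x * (1 - e)) - (e + (1 - e) * x * e) := by
    rw [Ring.lie_def]
    noncomm_ring
  exact h ▸ sub_mem (hT _ (isIdempotentElem_add_mul_mul_one_sub he x))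
    (hT _ (isIdempotentElem_add_one_sub_mul_mul he x))

theorem exists_ideal_le_commTransporter_of_isIdempotentElem [FaithfulSMul F R] [IsPrimeRing R]
    (hp : p.natDegree ≠ 0)
    (hZ : ∃ g : Fin (p.natDegree + 1) → R, Function.Injective g ∧ ∀ i, g i ∈ Subring.center R)
    (he : IsIdempotentElem e) (he0 : e ≠ 0) (he1 : e ≠ 1) :
    ∃ M : TwoSidedIdeal R, M ≠ ⊥ ∧ ∀ m ∈ M, m ∈ commTransporter (pCommutators R p) ⊤ := by
  have : Nontrivial R := ⟨e, 0, he0⟩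
  obtain ⟨z, hz, hq⟩ := exists_center_aeval_ne hp hZ
  set q := aeval z p - aeval 0 p
  let P' := (pCommutators R p).comap (AddMonoidHom.mulLeft q)
  have hT (f : R) (hf : IsIdempotentElem f) : f ∈ commTransporter P' ⊤ :=
    fun x _ ↦ mul_lie_mem_pCommutators_of_isIdempotentElem hz hf x
  obtain ⟨x, hx⟩ := IsPrimeRing.exists_mul_mul_ne_zero he0 (sub_ne_zero.2 he1.symm)
  set f := e + e * x * (1 - e) with hf_def
  have hf : IsIdempotentElem f := isIdempotentElem_add_mul_mul_one_sub he x
  have hef : ⁅e, f⁆ ≠ 0 := by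
    have hee (y : R) : e * (e * y) = e * y := by rw [← mul_assoc, he.eq]
    convert hx using 1
    simp only [hf_def, Ring.lie_def, mul_add, add_mul, mul_assoc, hee, sub_mul, one_mul, he.eq]
    simp
  obtain ⟨M, hM, hMT⟩ := exists_ideal_le_commTransporter_top top_ne_bot top_ne_bot hef (hT f hf)
    (fun y _ ↦ lie_mem_of_isIdempotentElem hT he y) (fun y _ ↦ lie_mem_of_isIdempotentElem hT hf y)
  refine IsPrimeRing.exists_ideal_le_of_mul_mul_mem hM top_ne_bot hq
    (G := (commTransporter _ ⊤).toAddSubgroup) fun m hm y _ r _ ↦ ?_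
  have hq_comm (s : R) : q * s = s * q := by
    have hqZ : q ∈ Subalgebra.center F R :=
      sub_mem (aeval_mem_center p hz) (aeval_mem_center p (zero_mem _))
    exact (Subalgebra.mem_center_iff.1 hqZ s).symm
  have h : ⁅m * q * y, r⁆ = q * ⁅m * y, r⁆ := by
    simp only [Ring.lie_def, mul_sub, ← mul_assoc, hq_comm r, hq_comm m]
    rw [mul_assoc r q, hq_comm m, ← mul_assoc]
  exact h ▸ hMT _ (M.mul_mem_right _ _ hm) r trivial

end Idempotent

section MartindaleExtension

/-- `ι : R →ₐ[F] Q` embeds `R` into a ring of right quotients in the sense of Martindale: every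
element of `Q` carries a nonzero ideal of `R` into `R`, elements annihilating a nonzero ideal
vanish, and the center of `Q` (the extended centroid) contains all fractions `a / b` of elements
of `R` for which `a x b = b x a` identically. -/
structure IsMartindaleExtension {F R Q : Type*} [Field F] [Ring R] [Algebra F R] [Ring Q]
    [Algebra F Q] (ι : R →ₐ[F] Q) : Prop where
  injective : Function.Injective ι
  exists_ideal (q : Q) : ∃ J : TwoSidedIdeal R, J ≠ ⊥ ∧ ∀ x ∈ J, ∃ y, ι y = q * ι x
  eq_zero_of_forall_mul_eq_zero {q : Q} {J : TwoSidedIdeal R} (hJ : J ≠ ⊥)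
    (h : ∀ x ∈ J, q * ι x = 0) : q = 0
  exists_center_smul_eq {a b : R} (hb : b ≠ 0) (h : ∀ x, a * x * b = b * x * a) :
    ∃ c : Subalgebra.center F Q, ι a = c • ι b

theorem exists_linearMap_of_graph {K V W : Type*} [Field K] [AddCommGroup V] [Module K V]
    [AddCommGroup W] [Module K W] (G : Submodule K (V × W)) (hG : ∀ w, (0, w) ∈ G → w = 0) :
    ∃ T : V →ₗ[K] W, ∀ v w, (v, w) ∈ G → T v = w := by
  obtain ⟨T, hT⟩ := G.toLinearPMap.toFun.exists_extend
  refine ⟨T, fun v w hvw ↦ ?_⟩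
  rw [← G.toLinearPMap_graph_eq fun x hx hx1 ↦ hG _ (by simpa [← hx1] using hx)] at hvw
  obtain ⟨y, rfl, rfl⟩ := (LinearPMap.mem_graph_iff _).1 hvw
  exact LinearMap.congr_fun hT y

/-- The graph of the fraction `a / b`, as a partially defined two-sided linear map. -/
def fractionGraph (F : Type*) {R : Type*} [Field F] [Ring R] [Algebra F R] (a b : R) :
    Submodule F (R × R) where
  carrier := {v | ∀ w, v.2 * w * b = v.1 * w * a}
  add_mem' {v v'} hv hv' w := by simp only [Prod.fst_add, Prod.snd_add, add_mul, hv w, hv' w]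
  zero_mem' w := by simp
  smul_mem' c v hv w := by simp only [Prod.smul_fst, Prod.smul_snd, smul_mul_assoc, hv w]

theorem mul_mem_fractionGraph {F R : Type*} [Field F] [Ring R] [Algebra F R]
    {a b x y : R} (h : (x, y) ∈ fractionGraph F a b) (r s : R) :
    (r * x * s, r * y * s) ∈ fractionGraph F a b := fun w ↦ by
  simpa only [mul_assoc] using! congrArg (r * ·) (h (s * w))

variable (F R : Type*) [Field F] [Ring R] [Algebra F R] [IsPrimeRing R] [Nontrivial R]

variable {F R} in
theorem exists_ideal_le_apply_mem {I J : TwoSidedIdeal R} (hI : I ≠ ⊥) (hJ : J ≠ ⊥)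
    {T : Module.End F R} (hT : ∀ x ∈ J, ∀ r, T (x * r) = T x * r) :
    ∃ K : TwoSidedIdeal R, K ≠ ⊥ ∧ K ≤ J ∧ ∀ x ∈ K, T x ∈ I := by
  obtain ⟨K, hK, hKI⟩ := IsPrimeRing.exists_ideal_le_of_mul_mul_mem hJ hI one_ne_zero
    (G := I.asIdeal.toAddSubgroup.comap T.toAddMonoidHom) fun x hx y hy ↦ by
      simpa [hT x hx] using! I.mul_mem_left (T x) y hy
  exact ⟨K ⊓ J, IsPrimeRing.inf_ne_bot hK hJ, inf_le_right, fun x hx ↦ hKI x hx.1⟩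

/-- The `F`-linear endomorphisms of `R` that are right `R`-linear on a nonzero ideal. -/
def partialRightLinear : Subalgebra F (Module.End F R) where
  carrier := {T | ∃ I : TwoSidedIdeal R, I ≠ ⊥ ∧ ∀ x ∈ I, ∀ r, T (x * r) = T x * r}
  mul_mem' {T S} := by
    rintro ⟨I, hI, hT⟩ ⟨J, hJ, hS⟩
    obtain ⟨K, hK, hKJ, hKI⟩ := exists_ideal_le_apply_mem hI hJ hS
    refine ⟨K, hK, fun x hx r ↦ ?_⟩
    rw [Module.End.mul_apply, hS x (hKJ hx), hT _ (hKI x hx), Module.End.mul_apply]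
  add_mem' {T S} := by
    rintro ⟨I, hI, hT⟩ ⟨J, hJ, hS⟩
    refine ⟨I ⊓ J, IsPrimeRing.inf_ne_bot hI hJ, fun x hx r ↦ ?_⟩
    rw [LinearMap.add_apply, hT x hx.1, hS x hx.2, LinearMap.add_apply, add_mul]
  algebraMap_mem' c := by
    exact ⟨⊤, top_ne_bot, fun x _ r ↦ by simp [Module.algebraMap_end_apply]⟩

instance : Ring (partialRightLinear F R) := Subalgebra.toRing _

/-- The ideal of those partially right linear endomorphisms that vanish on a nonzero ideal. -/
def partiallyZero : Ideal (partialRightLinear F R) where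
  carrier := {T | ∃ I : TwoSidedIdeal R, I ≠ ⊥ ∧ ∀ x ∈ I, T.1 x = 0}
  add_mem' {T S} := by
    rintro ⟨I, hI, hT⟩ ⟨J, hJ, hS⟩
    exact ⟨I ⊓ J, IsPrimeRing.inf_ne_bot hI hJ, fun x hx ↦ by simp [hT x hx.1, hS x hx.2]⟩
  zero_mem' := (partialRightLinear F R).zero_mem.imp fun I hI ↦ ⟨hI.1, fun x _ ↦ rfl⟩
  smul_mem' T S := by
    rintro ⟨I, hI, hS⟩
    exact ⟨I, hI, fun x hx ↦ by simp [hS x hx]⟩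

instance : (partiallyZero F R).IsTwoSided where
  mul_mem_of_left {T} S := by
    rintro ⟨I, hI, hT⟩
    obtain ⟨J, hJ, hS⟩ := S.2
    obtain ⟨K, hK, -, hKI⟩ := exists_ideal_le_apply_mem hI hJ hS
    exact ⟨K, hK, fun x hx ↦ hT _ (hKI x hx)⟩

/-- The ring of right quotients of `R`: germs, on nonzero ideals, of right linear maps to `R`. -/
abbrev MartindaleQuotient : Type _ := partialRightLinear F R ⧸ partiallyZero F R

/-- The embedding of `R` into its ring of right quotients by left multiplications. -/
def toMartindaleQuotient : R →ₐ[F] MartindaleQuotient F R :=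
  (Ideal.Quotient.mkₐ F (partiallyZero F R)).comp <|
    (Algebra.lmul F R).codRestrict _ fun a ↦
      (partialRightLinear F R).one_mem.imp fun _ hI ↦ ⟨hI.1, fun x _ r ↦ (mul_assoc a x r).symm⟩

variable {F R}

theorem toMartindaleQuotient_injective : Function.Injective (toMartindaleQuotient F R) := by
  refine (injective_iff_map_eq_zero _).2 fun a ha ↦ ?_
  obtain ⟨J, hJ, h⟩ := Ideal.Quotient.eq_zero_iff_mem.1 ha
  by_contra ha0
  obtain ⟨x, hx, hax⟩ := IsPrimeRing.exists_mem_mul_ne_zero hJ ha0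
  exact hax (h x hx)

theorem exists_toMartindaleQuotient_eq_mul (q : MartindaleQuotient F R) :
    ∃ J : TwoSidedIdeal R, J ≠ ⊥ ∧
      ∀ x ∈ J, ∃ y, toMartindaleQuotient F R y = q * toMartindaleQuotient F R x := by
  obtain ⟨T, rfl⟩ := Ideal.Quotient.mk_surjective q
  obtain ⟨J, hJ, hT⟩ := T.2
  exact ⟨J, hJ, fun x hx ↦ ⟨T.1 x, congrArg (Ideal.Quotient.mk _) <| Subtype.ext <|
    LinearMap.ext fun r ↦ (hT x hx r).symm⟩⟩

theorem eq_zero_of_forall_mul_toMartindaleQuotient_eq_zero {q : MartindaleQuotient F R}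
    {J : TwoSidedIdeal R} (hJ : J ≠ ⊥) (h : ∀ x ∈ J, q * toMartindaleQuotient F R x = 0) :
    q = 0 := by
  obtain ⟨T, rfl⟩ := Ideal.Quotient.mk_surjective q
  obtain ⟨I, hI, hT⟩ := T.2
  refine Ideal.Quotient.eq_zero_iff_mem.2 ⟨I ⊓ J, IsPrimeRing.inf_ne_bot hI hJ, fun x hx ↦ ?_⟩
  obtain ⟨K, hK, hK0⟩ := Ideal.Quotient.eq_zero_iff_mem.1 (h x hx.2)
  by_contra hx0
  obtain ⟨z, hz, hxz⟩ := IsPrimeRing.exists_mem_mul_ne_zero hK hx0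
  exact hxz ((hT x hx.1 z).symm.trans (hK0 z hz))

theorem exists_partialRightLinear_of_fraction {a b : R} (hb : b ≠ 0)
    (h : ∀ x, a * x * b = b * x * a) : ∃ T : partialRightLinear F R,
      (∀ x y, (x, y) ∈ fractionGraph F a b → T.1 x = y) ∧ ∃ I : TwoSidedIdeal R, I ≠ ⊥ ∧
        ∀ x ∈ I, (x, T.1 x) ∈ fractionGraph F a b := by
  obtain ⟨T, hT⟩ := exists_linearMap_of_graph (fractionGraph F a b) fun y hy ↦
    (IsPrimeRing.eq_zero_or_eq_zero y b fun r ↦ by simpa using hy r).resolve_right hb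
  have hTb (x : R) (hx : x ∈ TwoSidedIdeal.span {b}) : (x, T x) ∈ fractionGraph F a b := by
    rw [TwoSidedIdeal.mem_span_iff_mem_addSubgroup_closure] at hx
    induction hx using AddSubgroup.closure_induction with
    | mem x hx =>
      obtain ⟨_, ⟨r, -, b, rfl, rfl⟩, s, -, rfl⟩ := hx
      have hmem := mul_mem_fractionGraph (F := F) (x := b) (y := a) h r s
      rwa [← hT _ _ hmem] at hmem
    | zero => simpa using! zero_mem _
    | add x y _ _ hx hy => simpa using add_mem hx hy
    | neg x _ hx => simpa using neg_mem hx
  have hspan : TwoSidedIdeal.span {b} ≠ ⊥ := fun hbot ↦ hb (hbot.le (TwoSidedIdeal.subset_span rfl))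
  refine ⟨⟨T, _, hspan, fun x hx r ↦ hT _ _ ?_⟩, hT, _, hspan, hTb⟩
  simpa using mul_mem_fractionGraph (hTb x hx) 1 r

theorem exists_center_smul_toMartindaleQuotient_eq {a b : R} (hb : b ≠ 0)
    (h : ∀ x, a * x * b = b * x * a) : ∃ c : Subalgebra.center F (MartindaleQuotient F R),
      toMartindaleQuotient F R a = c • toMartindaleQuotient F R b := by
  obtain ⟨T, hT, I, hI, hTI⟩ := exists_partialRightLinear_of_fraction (F := F) hb h
  refine ⟨⟨Ideal.Quotient.mk _ T, Subalgebra.mem_center_iff.2 fun q ↦ ?_⟩, ?_⟩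
  · obtain ⟨S, rfl⟩ := Ideal.Quotient.mk_surjective q
    obtain ⟨J, hJ, hS⟩ := S.2
    rw [← map_mul, ← map_mul, ← sub_eq_zero, ← map_sub, Ideal.Quotient.eq_zero_iff_mem]
    obtain ⟨K, hK, hK0⟩ := IsPrimeRing.exists_ideal_le_of_mul_mul_mem hJ hI one_ne_zero
      (G := (LinearMap.ker (S * T - T * S).1).toAddSubgroup) fun u hu v hv ↦ by
        have hTv (r : R) : T.1 (r * v) = r * T.1 v :=
          hT _ _ (by simpa using mul_mem_fractionGraph (hTI v hv) r 1)
        simp [LinearMap.mem_ker, hTv, hS u hu]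
    exact ⟨K, hK, hK0⟩
  · refine congrArg (Ideal.Quotient.mk _) <| Subtype.ext <| LinearMap.ext fun r ↦ ?_
    refine (hT (b * r) (a * r) ?_).symm
    simpa using mul_mem_fractionGraph (F := F) (x := b) (y := a) h 1 r

variable (F R) in
theorem isMartindaleExtension_toMartindaleQuotient :
    IsMartindaleExtension (toMartindaleQuotient F R) :=
  ⟨toMartindaleQuotient_injective, exists_toMartindaleQuotient_eq_mul,
    eq_zero_of_forall_mul_toMartindaleQuotient_eq_zero, exists_center_smul_toMartindaleQuotient_eq⟩

end MartindaleExtension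

instance algebraCenter {F Q : Type*} [CommRing F] [Ring Q] [Algebra F Q] :
    Algebra (Subalgebra.center F Q) Q where
  algebraMap := (Subalgebra.center F Q).val
  commutes' c x := (Subalgebra.mem_center_iff.1 c.2 x).symm
  smul_def' _ _ := rfl

namespace IsMartindaleExtension

variable {F R Q : Type*} [Field F] [Ring R] [Algebra F R] [IsPrimeRing R] [Ring Q] [Algebra F Q]
  {ι : R →ₐ[F] Q} (hι : IsMartindaleExtension ι)

include hι

theorem exists_ideal_mul_mem {I : TwoSidedIdeal R} (hI : I ≠ ⊥) (S : Finset Q) :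
    ∃ J : TwoSidedIdeal R, J ≠ ⊥ ∧ J ≤ I ∧ ∀ q ∈ S, ∀ x ∈ J, ∃ y ∈ I, ι y = q * ι x := by
  classical
  induction S using Finset.induction_on with
  | empty => exact ⟨I, hI, le_rfl, by simp⟩
  | insert q S _ ih =>
    obtain ⟨j, -, hj⟩ := exists_mem_ne_zero_of_ne_bot hI
    have : Nontrivial R := ⟨j, 0, hj⟩
    obtain ⟨J, hJ, hJI, hJS⟩ := ih
    obtain ⟨K, hK, hKq⟩ := hι.exists_ideal q
    obtain ⟨M, hM, hMq⟩ := IsPrimeRing.exists_ideal_le_of_mul_mul_mem hK hI one_ne_zero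
      (G := (I.asIdeal.toAddSubgroup.map (ι : R →+ Q)).comap
        ((AddMonoidHom.mulLeft q).comp (ι : R →+ Q))) fun x hx y hy ↦ by
          obtain ⟨z, hz⟩ := hKq x hx
          exact ⟨z * y, I.mul_mem_left z y hy, by simp [hz, mul_assoc]⟩
    refine ⟨M ⊓ J, IsPrimeRing.inf_ne_bot hM hJ, inf_le_right.trans hJI, fun t ht x hx ↦ ?_⟩
    rcases Finset.mem_insert.1 ht with rfl | ht
    · obtain ⟨y, hy, hyx⟩ := hMq x hx.1
      exact ⟨y, hy, hyx⟩
    · exact hJS t ht x hx.2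

theorem exists_map_eq_mul_ne_zero {q : Q} (hq : q ≠ 0) {J : TwoSidedIdeal R} (hJ : J ≠ ⊥) :
    ∃ x ∈ J, ∃ y ∈ J, y ≠ 0 ∧ ι y = q * ι x := by
  obtain ⟨K, hK, hKJ, hKq⟩ := hι.exists_ideal_mul_mem hJ {q}
  by_contra! h
  refine hq (hι.eq_zero_of_forall_mul_eq_zero hK fun x hx ↦ ?_)
  obtain ⟨y, hy, hyx⟩ := hKq q (Finset.mem_singleton_self q) x hx
  by_contra hx0
  exact h x (hKJ hx) y hy (fun hy0 ↦ hx0 (by rw [← hyx, hy0, map_zero])) hyx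

theorem exists_mem_mul_map_mul_ne_zero {J : TwoSidedIdeal R} (hJ : J ≠ ⊥) {q q' : Q} (hq : q ≠ 0)
    (hq' : q' ≠ 0) : ∃ r ∈ J, q * ι r * q' ≠ 0 := by
  obtain ⟨x, hx, y, -, hy0, hy⟩ := hι.exists_map_eq_mul_ne_zero hq hJ
  obtain ⟨x', -, y', -, hy0', hy'⟩ := hι.exists_map_eq_mul_ne_zero hq' hJ
  obtain ⟨r, hr⟩ := IsPrimeRing.exists_mul_mul_ne_zero hy0 hy0'
  refine ⟨x * r, J.mul_mem_right _ _ hx, left_ne_zero_of_mul (b := ι x') ?_⟩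
  rw [← (map_ne_zero_iff ι hι.injective)] at hr
  simpa only [map_mul, hy, hy', mul_assoc] using hr

theorem isPrimeRing : IsPrimeRing Q where
  eq_zero_or_eq_zero a b h := by
    by_contra! hab
    obtain ⟨J, hJ, -⟩ := hι.exists_ideal 0
    obtain ⟨r, -, hr⟩ := hι.exists_mem_mul_map_mul_ne_zero hJ hab.1 hab.2
    exact hr (h (ι r))

theorem exists_center_smul_eq_of_forall {y v : Q} (hv : v ≠ 0)
    (h : ∀ w, y * ι w * v = v * ι w * y) : ∃ c : Subalgebra.center F Q, y = c • v := by
  classical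
  obtain ⟨I, hI, -⟩ := hι.exists_ideal 0
  obtain ⟨J, hJ, -, hJS⟩ := hι.exists_ideal_mul_mem hI {y, v}
  obtain ⟨j, hj, b, -, hb0, hb⟩ := hι.exists_map_eq_mul_ne_zero hv hJ
  obtain ⟨a, -, ha⟩ := hJS y (by simp) j hj
  obtain ⟨c, hc⟩ := hι.exists_center_smul_eq (a := a) hb0 fun x ↦ hι.injective <| by
    simpa only [map_mul, ha, hb, mul_assoc] using congrArg (· * ι j) (h (j * x))
  refine ⟨c, sub_eq_zero.1 ?_⟩
  have hz (w : R) : (y - c • v) * ι w * v = v * ι w * (y - c • v) := by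
    simp only [sub_mul, mul_sub, smul_mul_assoc, mul_smul_comm, h]
  have hzj : (y - c • v) * ι j = 0 := by
    rw [sub_mul, smul_mul_assoc, ← ha, ← hb, hc, sub_self]
  by_contra hyv
  obtain ⟨r, -, hr⟩ := hι.exists_mem_mul_map_mul_ne_zero hJ
    (hb ▸ (map_ne_zero_iff ι hι.injective).2 hb0 : v * ι j ≠ 0) hyv
  refine hr ?_
  rw [mul_assoc v, ← map_mul, ← hz, map_mul, ← mul_assoc, hzj, zero_mul, zero_mul]

theorem isUnit_of_ne_zero {c : Subalgebra.center F Q} (hc : c ≠ 0) : IsUnit c := by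
  obtain ⟨d, hd⟩ := hι.exists_center_smul_eq_of_forall (y := 1) (v := c) (by simpa using hc)
    fun w ↦ by simpa using (Subalgebra.mem_center_iff.1 c.2 (ι w))
  exact IsUnit.of_mul_eq_one d (Subtype.ext ((mul_comm c d).symm ▸ hd.symm))

end IsMartindaleExtension

section Elimination

theorem exists_pow_ne_pow {C : Type*} [CommRing C] [IsDomain C] [Infinite C] {k l : ℕ}
    (h : k ≠ l) : ∃ c : C, c ^ k ≠ c ^ l := by
  classical
  have hX : (X ^ k - X ^ l : C[X]) ≠ 0 := fun h0 ↦ h <| by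
    simpa using congrArg natDegree (sub_eq_zero.1 h0)
  obtain ⟨c, hc⟩ := Infinite.exists_notMem_finset (X ^ k - X ^ l : C[X]).roots.toFinset
  exact ⟨c, by simpa [hX, sub_eq_zero] using hc⟩

/-- A subgroup `G` of a module need not be closed under scalars, so a bihomogeneous component of
bidegree `(d s, e s)` is removed by comparing the substitutions `a ↦ a c ^ e s` and
`b ↦ b c ^ d s`. -/
theorem exists_smul_mem_of_forall_sum_smul_mem {C α M : Type*} [CommRing C] [IsDomain C]
    [Infinite C] [AddCommGroup M] [Module C M] (d e : α → ℕ) (I : Finset α) {t : α}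
    (ht : ∀ i ∈ I, d i * e t ≠ e i * d t) :
    ∃ S : Finset C, ∃ c : C, c ≠ 0 ∧ ∀ (v : α → M) (G : AddSubgroup M),
      (∀ a ∈ S, ∀ b ∈ S,
        (a ^ d t * b ^ e t) • v t + ∑ i ∈ I, (a ^ d i * b ^ e i) • v i ∈ G) → c • v t ∈ G := by
  classical
  induction I using Finset.induction_on with
  | empty => exact ⟨{1}, 1, one_ne_zero, fun v G h ↦ by simpa using h⟩
  | insert s I hs ih =>
    obtain ⟨S, c, hc, hS⟩ := ih fun i hi ↦ ht i (Finset.mem_insert_of_mem hi)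
    obtain ⟨l, hl⟩ := exists_pow_ne_pow (C := C) (ht s (Finset.mem_insert_self s I))
    have hsubst (a b : C) (i : α) : (a * l ^ e s) ^ d i * b ^ e i - a ^ d i * (b * l ^ d s) ^ e i =
        a ^ d i * b ^ e i * (l ^ (e s * d i) - l ^ (d s * e i)) := by ring
    refine ⟨S ∪ S.image (· * l ^ e s) ∪ S.image (· * l ^ d s),
      c * (l ^ (e s * d t) - l ^ (d s * e t)), mul_ne_zero hc (sub_ne_zero.2 hl.symm),
      fun v G h ↦ ?_⟩
    have hv := hS (fun i ↦ (l ^ (e s * d i) - l ^ (d s * e i)) • v i) G fun a ha b hb ↦ by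
      have hsub := sub_mem
        (h (a * l ^ e s) (Finset.mem_union_left _ <| Finset.mem_union_right _ <|
          Finset.mem_image_of_mem _ ha) b (by simp [hb]))
        (h a (by simp [ha]) (b * l ^ d s) (Finset.mem_union_right _ <|
          Finset.mem_image_of_mem _ hb))
      rwa [add_sub_add_comm, ← Finset.sum_sub_distrib, Finset.sum_insert hs, ← sub_smul,
        ← sub_smul, hsubst, hsubst, mul_comm (e s) (d s), sub_self, mul_zero, zero_smul, zero_add,
        mul_smul, Finset.sum_congr rfl fun i _ ↦ by rw [← sub_smul, hsubst, mul_smul]] at hsub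
    simpa only [smul_smul] using hv

end Elimination

section PowCoeff

variable {Q : Type*} [Ring Q]

/-- The sum of all products of `n` factors, `i` of them equal to `x` and the others to `y`. -/
noncomputable def powCoeff (x y : Q) (n i : ℕ) : Q := ((C x * X + C y) ^ n).coeff i

variable (x y : Q) (n : ℕ)

theorem powCoeff_succ_succ (i : ℕ) :
    powCoeff x y (n + 1) (i + 1) = x * powCoeff x y n i + y * powCoeff x y n (i + 1) := by
  simp only [powCoeff, pow_succ', add_mul, mul_assoc, coeff_add, coeff_C_mul, coeff_X_mul]

theorem powCoeff_zero_right : powCoeff x y n 0 = y ^ n := by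
  induction n with
  | zero => simp [powCoeff]
  | succ n ih =>
    rw [pow_succ', ← ih]
    simp [powCoeff, pow_succ', add_mul, mul_assoc]

theorem powCoeff_one_right :
    powCoeff x y n 1 = ∑ k ∈ Finset.range n, y ^ k * x * y ^ (n - 1 - k) := by
  induction n with
  | zero => simp [powCoeff, coeff_one]
  | succ n ih =>
    rw [powCoeff_succ_succ, powCoeff_zero_right, ih, Finset.sum_range_succ', Finset.mul_sum,
      add_comm]
    simp [pow_succ', mul_assoc, Nat.sub_add_eq, Nat.sub_right_comm]

theorem powCoeff_eq_zero {i : ℕ} (h : n < i) : powCoeff x y n i = 0 :=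
  coeff_eq_zero_of_natDegree_lt <|
    (natDegree_pow_le_of_le n natDegree_linear_le).trans_lt (by simpa)

theorem smul_add_smul_pow {C : Type*} [CommRing C] [Algebra C Q] (a b : C) :
    (a • x + b • y) ^ n = ∑ i ∈ Finset.range (n + 1), (a ^ i * b ^ (n - i)) • powCoeff x y n i := by
  induction n with
  | zero => simp [powCoeff]
  | succ n ih =>
    have hy : b • y * (a • x + b • y) ^ n =
        ∑ i ∈ Finset.range (n + 2), (a ^ i * b ^ (n + 1 - i)) • (y * powCoeff x y n i) := by
      rw [Finset.sum_range_succ, powCoeff_eq_zero x y n n.lt_succ_self, ih, Finset.mul_sum]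
      simp only [mul_zero, smul_zero, add_zero]
      refine Finset.sum_congr rfl fun i hi ↦ ?_
      rw [Nat.succ_sub (Finset.mem_range_succ_iff.1 hi), smul_mul_smul_comm, pow_succ',
        mul_left_comm]
    rw [pow_succ', add_mul, hy, Finset.sum_range_succ', Finset.sum_range_succ' _ (n + 1), ih,
      Finset.mul_sum, ← add_assoc, ← Finset.sum_add_distrib]
    simp [powCoeff_succ_succ, powCoeff_zero_right, smul_smul, mul_comm a, pow_succ, mul_assoc,
      pow_succ' y]

end PowCoeff

theorem powCoeff_one_lie {R : Type*} [Ring R] (y b : R) (n : ℕ) :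
    powCoeff ⁅y, b⁆ y n 1 = ⁅y ^ n, b⁆ := by
  induction n with
  | zero => simp [powCoeff, coeff_one, Ring.lie_def]
  | succ n ih =>
    rw [powCoeff_succ_succ, powCoeff_zero_right, ih]
    simp only [Ring.lie_def, pow_succ']
    noncomm_ring

theorem lie_powCoeff_one {R : Type*} [Ring R] (y b : R) (n : ℕ) :
    ⁅y, powCoeff b y n 1⁆ = ⁅y ^ n, b⁆ := by
  induction n with
  | zero => simp [powCoeff, coeff_one, Ring.lie_def]
  | succ n ih =>
    have h : ⁅y, powCoeff b y (n + 1) 1⁆ = ⁅y, b⁆ * y ^ n + y * ⁅y, powCoeff b y n 1⁆ := by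
      simp only [powCoeff_succ_succ, powCoeff_zero_right, Ring.lie_def, mul_add, add_mul, mul_sub,
        sub_mul, ← mul_assoc, zero_add]
      simp only [mul_assoc, pow_mul_comm']
      abel
    rw [h, ih]
    simp only [Ring.lie_def, pow_succ']
    noncomm_ring

theorem map_powCoeff {R S G : Type*} [Ring R] [Ring S] [FunLike G R S] [RingHomClass G R S] (f : G)
    (x y : R) (n i : ℕ) : f (powCoeff x y n i) = powCoeff (f x) (f y) n i := by
  have h := coeff_map (f : R →+* S) (p := (C x * X + C y) ^ n) i
  simpa [powCoeff] using h.symm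

theorem powCoeff_one_smul {C R : Type*} [CommRing C] [Ring R] [Algebra C R] (c : C) (x y : R)
    (n : ℕ) : powCoeff (c • x) y n 1 = c • powCoeff x y n 1 := by
  simp only [powCoeff_one_right, mul_smul_comm, smul_mul_assoc, Finset.smul_sum]

namespace IsMartindaleExtension

variable {F R Q : Type*} [Field F] [Ring R] [Algebra F R] [IsPrimeRing R] [Ring Q] [Algebra F Q]
  {ι : R →ₐ[F] Q} (hι : IsMartindaleExtension ι)

include hι

theorem exists_ideal_smul_mem {I : TwoSidedIdeal R} (hI : I ≠ ⊥)
    (S : Finset (Subalgebra.center F Q)) :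
    ∃ J : TwoSidedIdeal R, J ≠ ⊥ ∧ J ≤ I ∧ ∀ c ∈ S, ∀ x ∈ J, ∃ y ∈ I, ι y = c • ι x := by
  classical
  obtain ⟨J, hJ, hJI, hJS⟩ := hι.exists_ideal_mul_mem hI (S.image (↑))
  exact ⟨J, hJ, hJI, fun c hc ↦ hJS c (Finset.mem_image_of_mem _ hc)⟩

theorem exists_ideal_inv_smul_mem {I : TwoSidedIdeal R} (hI : I ≠ ⊥)
    (S : Finset (Subalgebra.center F Q)) {c : Subalgebra.center F Q} (hc : c ≠ 0) :
    ∃ J : TwoSidedIdeal R, J ≠ ⊥ ∧ ∀ x ∈ J, (∀ a ∈ S, ∃ y ∈ I, ι y = a • ι x) ∧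
      ∃ x', c • ι x' = ι x ∧ ∀ a ∈ S, ∃ y ∈ I, ι y = a • ι x' := by
  obtain ⟨K, hK, -, hKS⟩ := hι.exists_ideal_smul_mem hI S
  obtain ⟨d, hd⟩ := (hι.isUnit_of_ne_zero hc).exists_right_inv
  obtain ⟨J, hJ, hJK, hJd⟩ := hι.exists_ideal_smul_mem hK {d}
  refine ⟨J, hJ, fun x hx ↦ ⟨fun a ha ↦ hKS a ha x (hJK hx), ?_⟩⟩
  obtain ⟨x', hx', hx'd⟩ := hJd d (Finset.mem_singleton_self d) x hx
  exact ⟨x', by rw [hx'd, smul_smul, hd, one_smul], fun a ha ↦ hKS a ha x' hx'⟩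

variable [Infinite (Subalgebra.center F Q)]

theorem exists_ideal_powCoeff_one_mem [Nontrivial Q] {I : TwoSidedIdeal R} (hI : I ≠ ⊥) {n : ℕ}
    (hn : n ≠ 0) : ∃ J : TwoSidedIdeal R, J ≠ ⊥ ∧ ∀ (w : R) (G : AddSubgroup R),
      (∀ z ∈ I, (w * z) ^ n ∈ G) → ∀ x ∈ J, ∀ y ∈ J, powCoeff (w * x) (w * y) n 1 ∈ G := by
  have := hι.isPrimeRing
  obtain ⟨S, c, hc, hS⟩ := exists_smul_mem_of_forall_sum_smul_mem (C := Subalgebra.center F Q)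
    (M := Q) id (n - ·) ((Finset.range (n + 1)).erase 1) (t := 1) fun i hi ↦ by
      obtain ⟨hi1, hin⟩ := Finset.mem_erase.1 hi
      have hn' := Nat.one_le_iff_ne_zero.2 hn
      contrapose! hi1
      zify [hn', Finset.mem_range_succ_iff.1 hin] at hi1
      exact Nat.eq_of_mul_eq_mul_right hn' (by zify; simp only [id, Nat.cast_one] at hi1; linarith)
  obtain ⟨J, hJ, hJS⟩ := hι.exists_ideal_inv_smul_mem hI S hc
  refine ⟨J, hJ, fun w G hG x hx y hy ↦ ?_⟩
  obtain ⟨-, x', hx', hx'S⟩ := hJS x hx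
  have hmem := hS (powCoeff (ι (w * x')) (ι (w * y)) n) (G.map (ι : R →+ Q)) fun a ha b hb ↦ by
    obtain ⟨u, hu, hua⟩ := hx'S a ha
    obtain ⟨v, hv, hvb⟩ := (hJS y hy).1 b hb
    refine ⟨_, hG _ (add_mem hu hv), .trans ?_ <| (smul_add_smul_pow _ _ n a b).trans
      (Finset.add_sum_erase _ _ (by simpa using Nat.pos_of_ne_zero hn)).symm⟩
    simp [hua, hvb, mul_add]
  rw [← powCoeff_one_smul, map_mul, ← mul_smul_comm, hx', ← map_mul, ← map_powCoeff] at hmem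
  exact (AddSubgroup.mem_map_iff_mem hι.injective).1 hmem

end IsMartindaleExtension

theorem aeval_sub_aeval_eq_sum_powCoeff {F C Q : Type*} [CommRing F] [CommRing C] [Algebra F C]
    [Ring Q] [Algebra C Q] [Algebra F Q] [IsScalarTower F C Q] (p : F[X]) (y v : Q) (a b : C) :
    aeval (a • y * (1 + b • v)) p - aeval ((1 + b • v) * a • y) p =
      ∑ i ∈ (Finset.Ico 1 (p.natDegree + 1)).sigma fun m ↦ Finset.range (m + 1),
        (a ^ i.1 * b ^ i.2) • p.coeff i.1 •
          (powCoeff (y * v) y i.1 i.2 - powCoeff (v * y) y i.1 i.2) := by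
  have hpow (x : Q) (m : ℕ) : (a • (b • x + (1 : C) • y)) ^ m =
      ∑ k ∈ Finset.range (m + 1), (a ^ m * b ^ k) • powCoeff x y m k := by
    rw [_root_.smul_pow, smul_add_smul_pow, Finset.smul_sum]
    simp only [one_pow, mul_one, smul_smul]
  have hl : a • y * (1 + b • v) = a • (b • (y * v) + (1 : C) • y) := by
    simp [mul_add, add_comm, smul_comm b a]
  have hr : (1 + b • v) * a • y = a • (b • (v * y) + (1 : C) • y) := by
    simp [add_mul, add_comm]
  rw [hl, hr, aeval_eq_sum_range, aeval_eq_sum_range, Finset.range_eq_Ico, Finset.sum_sigma,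
    Finset.sum_eq_sum_Ico_succ_bot p.natDegree.succ_pos,
    Finset.sum_eq_sum_Ico_succ_bot p.natDegree.succ_pos, pow_zero, pow_zero,
    add_sub_add_left_eq_sub, ← Finset.sum_sub_distrib]
  refine Finset.sum_congr rfl fun m _ ↦ ?_
  rw [← smul_sub, hpow, hpow, ← Finset.sum_sub_distrib, Finset.smul_sum]
  exact Finset.sum_congr rfl fun k _ ↦ by rw [← smul_sub, smul_comm]

theorem powCoeff_one_mul_sub {R : Type*} [Ring R] (y v : R) (n : ℕ) :
    powCoeff (y * v) y n 1 - powCoeff (v * y) y n 1 = ⁅y ^ n, v⁆ := by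
  induction n with
  | zero => simp [powCoeff, coeff_one, Ring.lie_def]
  | succ n ih =>
    rw [powCoeff_succ_succ, powCoeff_succ_succ, add_sub_add_comm, ← mul_sub, ih,
      powCoeff_zero_right, powCoeff_zero_right, Ring.lie_def, Ring.lie_def, pow_succ']
    noncomm_ring

theorem exists_smul_lie_pow_mem {F C Q : Type*} [CommRing F] [CommRing C] [IsDomain C] [Infinite C]
    [Algebra F C] [Ring Q] [Algebra C Q] [Algebra F Q] [IsScalarTower F C Q] {p : F[X]}
    (hp : p.natDegree ≠ 0) : ∃ S : Finset C, ∃ c : C, c ≠ 0 ∧ ∀ (y v : Q) (G : AddSubgroup Q),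
      (∀ a ∈ S, ∀ b ∈ S, aeval (a • y * (1 + b • v)) p - aeval ((1 + b • v) * a • y) p ∈ G) →
        c • p.leadingCoeff • ⁅y ^ p.natDegree, v⁆ ∈ G := by
  classical
  set n := p.natDegree
  let I := (Finset.Ico 1 (n + 1)).sigma fun m ↦ Finset.range (m + 1)
  have ht : (⟨n, 1⟩ : (_ : ℕ) × ℕ) ∈ I := by simp [I]; omega
  obtain ⟨S, c, hc, hS⟩ := exists_smul_mem_of_forall_sum_smul_mem (C := C)
    (M := Q) Sigma.fst Sigma.snd (I.erase ⟨n, 1⟩) (t := ⟨n, 1⟩) fun ⟨m, k⟩ hi h ↦ by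
      simp only [I, Finset.mem_erase, Finset.mem_sigma, Finset.mem_Ico, Finset.mem_range] at hi
      have hmk : m = k * n := by simpa using h
      obtain rfl : k = 1 := by
        refine le_antisymm (Nat.le_of_mul_le_mul_right (c := n) (by omega) (by omega)) ?_
        exact Nat.one_le_iff_ne_zero.2 fun hk ↦ by simp [hmk, hk] at hi
      simp [hmk] at hi
  refine ⟨S, c, hc, fun y v G h ↦ ?_⟩
  have hmem := hS (fun i ↦ p.coeff i.1 • (powCoeff (y * v) y i.1 i.2 - powCoeff (v * y) y i.1 i.2))
    G fun a ha b hb ↦ by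
      rw [Finset.add_sum_erase I (fun i ↦ (a ^ i.1 * b ^ i.2) • p.coeff i.1 •
        (powCoeff (y * v) y i.1 i.2 - powCoeff (v * y) y i.1 i.2)) ht]
      exact aeval_sub_aeval_eq_sum_powCoeff p y v a b ▸ h a ha b hb
  rwa [powCoeff_one_mul_sub] at hmem

namespace IsMartindaleExtension

variable {F R Q : Type*} [Field F] [Ring R] [Algebra F R] [IsPrimeRing R] [Ring Q] [Algebra F Q]
  {ι : R →ₐ[F] Q} (hι : IsMartindaleExtension ι) [Infinite (Subalgebra.center F Q)] [Nontrivial Q]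

include hι

theorem exists_ideal_pow_mem_commTransporter {p : F[X]} (hp : p.natDegree ≠ 0) :
    ∃ J : TwoSidedIdeal R, J ≠ ⊥ ∧
      ∀ y ∈ J, y ^ p.natDegree ∈ commTransporter (pCommutators R p) J := by
  have := hι.isPrimeRing
  have hp0 : p.leadingCoeff ≠ 0 :=
    leadingCoeff_ne_zero.2 (ne_zero_of_natDegree_gt (Nat.pos_of_ne_zero hp))
  obtain ⟨S, c, hc, hS⟩ :=
    exists_smul_lie_pow_mem (C := Subalgebra.center F Q) (Q := Q) hp
  obtain ⟨K, hK, -⟩ := hι.exists_ideal 0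
  obtain ⟨J, hJ, hJS⟩ := hι.exists_ideal_inv_smul_mem hK S hc
  refine ⟨J, hJ, fun y hy x hx ↦ ?_⟩
  obtain ⟨-, x', hx', hx'S⟩ :=
    hJS (algebraMap F R p.leadingCoeff⁻¹ * x) (J.mul_mem_left _ _ hx)
  have hx'x : p.leadingCoeff • c • ι x' = ι x := by
    rw [hx', ← Algebra.smul_def, map_smul, smul_smul, mul_inv_cancel₀ hp0, one_smul]
  have hmem := hS (ι y) (ι x') ((pCommutators R p).map (ι : R →+ Q)) fun a ha b hb ↦ by
    obtain ⟨u, -, hu⟩ := (hJS y hy).1 a ha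
    obtain ⟨v, -, hv⟩ := hx'S b hb
    exact ⟨_, aeval_sub_aeval_mem_pCommutators u (1 + v), by simp [← aeval_algHom_apply, hu, hv]⟩
  have hlie : c • p.leadingCoeff • ⁅ι y ^ p.natDegree, ι x'⁆ = ι ⁅y ^ p.natDegree, x⁆ := by
    simp only [Ring.lie_def, map_sub, map_mul, map_pow, ← hx'x, smul_sub, mul_smul_comm,
      smul_mul_assoc, smul_comm c]
  rw [hlie] at hmem
  exact (AddSubgroup.mem_map_iff_mem hι.injective).1 hmem

theorem exists_ideal_le_commTransporter_of_lie_pow_ne_zero {p : F[X]} (hp : p.natDegree ≠ 0)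
    (h : ∀ J : TwoSidedIdeal R, J ≠ ⊥ → ∃ y ∈ J, ∃ z ∈ J, ⁅y ^ p.natDegree, z ^ p.natDegree⁆ ≠ 0) :
    ∃ M : TwoSidedIdeal R, M ≠ ⊥ ∧ ∀ m ∈ M, m ∈ commTransporter (pCommutators R p) ⊤ := by
  obtain ⟨J, hJ, hJP⟩ := hι.exists_ideal_pow_mem_commTransporter hp
  obtain ⟨K, hK, hKJ⟩ := hι.exists_ideal_powCoeff_one_mem hJ hp
  have hlie (y : R) (hy : y ∈ K) (x : R) (hx : x ∈ K) :
      ⁅y ^ p.natDegree, x⁆ ∈ commTransporter (pCommutators R p) J := by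
    rw [← powCoeff_one_lie]
    simpa using hKJ 1 (commTransporter (pCommutators R p) J).toAddSubgroup (by simpa using hJP)
      ⁅y, x⁆ (sub_mem (K.mul_mem_left _ _ hx) (K.mul_mem_right _ _ hx)) y hy
  obtain ⟨y, hy, z, hz, hyz⟩ := h (J ⊓ K) (IsPrimeRing.inf_ne_bot hJ hK)
  exact exists_ideal_le_commTransporter_top hJ hK hyz (hJP z hz.1) (hlie y hy.2) (hlie z hz.2)

end IsMartindaleExtension

section

variable {R : Type*} [Ring R] [IsPrimeRing R] {J : TwoSidedIdeal R}

theorem mem_center_of_forall_mem_commute (hJ : J ≠ ⊥) {u : R} (h : ∀ x ∈ J, Commute u x) :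
    u ∈ Subring.center R := by
  refine Subring.mem_center_iff.2 fun r ↦ sub_eq_zero.1 ?_
  by_contra hr
  obtain ⟨x, hx, hrx⟩ := IsPrimeRing.exists_mem_mul_ne_zero hJ hr
  refine hrx ?_
  rw [sub_mul, mul_assoc, mul_assoc, h x hx, (h _ (J.mul_mem_left r x hx)).eq, mul_assoc, sub_self]

theorem mem_center_of_forall_lie_mul_lie_eq_zero (hJ : J ≠ ⊥) {u : R}
    (h : ∀ x ∈ J, ∀ y ∈ J, ⁅u, x⁆ * ⁅u, y⁆ = 0) : u ∈ Subring.center R := by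
  refine mem_center_of_forall_mem_commute hJ fun x hx ↦ sub_eq_zero.1 ?_
  by_contra hux
  obtain ⟨s, hs, hxsx⟩ := IsPrimeRing.exists_mem_mul_mul_ne_zero hJ hux hux
  refine hxsx ?_
  have hleib : ⁅u, x⁆ * s * ⁅u, x⁆ = ⁅u, x⁆ * ⁅u, s * x⁆ - ⁅u, x⁆ * ⁅u, s⁆ * x := by
    simp only [Ring.lie_def]; noncomm_ring
  rw [← Ring.lie_def, hleib, h x hx _ (J.mul_mem_left s x hx), h x hx s hs, zero_mul, sub_zero]

theorem noZeroDivisors_of_sq_eq_zero (h : ∀ x : R, x ^ 2 = 0 → x = 0) : NoZeroDivisors R where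
  eq_zero_or_eq_zero_of_mul_eq_zero {x y} hxy := by
    have hyx : y * x = 0 := h _ (by rw [sq, mul_assoc, ← mul_assoc x, hxy, zero_mul, mul_zero])
    exact IsPrimeRing.eq_zero_or_eq_zero x y fun r ↦ h _ <| by
      rw [sq, mul_assoc, ← mul_assoc y, ← mul_assoc y, hyx, zero_mul, zero_mul, mul_zero]

end

theorem powCoeff_one_mul_right {R : Type*} [Ring R] (x y : R) (n : ℕ) :
    powCoeff (x * y) y n 1 = powCoeff x y n 1 * y := by
  simp only [powCoeff_one_right, Finset.sum_mul, mul_assoc, ← pow_succ, ← pow_succ']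

namespace IsMartindaleExtension

variable {F R Q : Type*} [Field F] [Ring R] [Algebra F R] [IsPrimeRing R] [Ring Q] [Algebra F Q]
  {ι : R →ₐ[F] Q} (hι : IsMartindaleExtension ι) [Infinite (Subalgebra.center F Q)] [Nontrivial Q]
  {J : TwoSidedIdeal R} {n : ℕ}

include hι

theorem exists_ideal_pow_mem_center (hJ : J ≠ ⊥) (hn : n ≠ 0)
    (h : ∀ y ∈ J, ∀ z ∈ J, Commute (y ^ n) (z ^ n)) :
    ∃ K : TwoSidedIdeal R, K ≠ ⊥ ∧ ∀ y ∈ K, y ^ n ∈ Subring.center R := by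
  obtain ⟨K, hK, hKJ⟩ := hι.exists_ideal_powCoeff_one_mem hJ hn
  have hcomm (x : R) (hx : x ∈ K) (y : R) (hy : y ∈ K) (z : R) (hz : z ∈ J) :
      Commute (z ^ n) (powCoeff x y n 1) := by
    have hmem := hKJ 1 (Subring.centralizer {z ^ n}).toAddSubgroup (fun u hu ↦ by
      rintro _ rfl
      simpa only [one_mul] using (h z hz u hu).eq) x hx y hy
    rw [one_mul, one_mul] at hmem
    exact hmem (z ^ n) rfl
  have hmul (x : R) (hx : x ∈ K) (y : R) (hy : y ∈ K) (z : R) (hz : z ∈ J) :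
      ⁅y ^ n, x⁆ * ⁅y, z ^ n⁆ = 0 := by
    have hlie : ⁅y, x⁆ ∈ K := sub_mem (K.mul_mem_left _ _ hx) (K.mul_mem_right _ _ hx)
    have h1 := (hcomm _ hlie y hy z hz).eq
    have h2 := (hcomm _ (K.mul_mem_right _ y hlie) y hy z hz).eq
    rw [powCoeff_one_mul_right, ← mul_assoc, h1] at h2
    rw [← powCoeff_one_lie, Ring.lie_def y (z ^ n), mul_sub, ← mul_assoc, ← mul_assoc, h2, sub_self]
  refine ⟨K, hK, fun y hy ↦ mem_center_of_forall_lie_mul_lie_eq_zero hK fun x hx z hz ↦ ?_⟩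
  have hmem : ⁅y ^ n, x⁆ * ⁅y, powCoeff (1 * z) (1 * y) n 1⁆ = 0 :=
    hKJ 1 ((AddMonoidHom.mulLeft ⁅y ^ n, x⁆).comp
      (AddMonoidHom.mulLeft y - AddMonoidHom.mulRight y)).ker
      (fun u hu ↦ by rw [one_mul]; exact hmul x hx y hy u hu) z hz y hy
  rwa [one_mul, one_mul, lie_powCoeff_one] at hmem

theorem eq_zero_of_forall_mul_pow_mul_eq_zero {y : R} (hJ : J ≠ ⊥)
    (h : ∀ r ∈ J, (y * r) ^ n * y = 0) : y = 0 := by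
  induction n generalizing J with
  | zero => simpa using h 0 J.zero_mem
  | succ n ih =>
    obtain ⟨K, hK, hKJ⟩ := hι.exists_ideal_powCoeff_one_mem hJ n.succ_ne_zero
    refine ih (IsPrimeRing.inf_ne_bot hJ hK) fun r hr ↦ ?_
    by_contra hry
    obtain ⟨x, hx, hrx⟩ := IsPrimeRing.exists_mem_mul_mul_ne_zero hK hry hry
    refine hrx ?_
    have hmem : powCoeff (y * x) (y * r) (n + 1) 1 * y = 0 :=
      hKJ y (AddMonoidHom.mulRight y).ker h x hx r hr.2
    have hterm (k : ℕ) (q : R) : (y * r) ^ n * ((y * r) ^ (k + 1) * (y * q)) = 0 := by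
      rw [← mul_assoc, ← mul_assoc, ← pow_add, add_comm, add_right_comm, add_assoc, pow_add,
        mul_assoc _ _ y, h r hr.1, mul_zero, zero_mul]
    have hmul := congrArg ((y * r) ^ n * ·) hmem
    simp only [powCoeff_one_right, Finset.sum_range_succ' _ n, mul_zero, add_mul, mul_add,
      Finset.sum_mul, Finset.mul_sum] at hmul
    simpa [mul_assoc, hterm] using hmul

end IsMartindaleExtension

theorem add_pow_of_choose_eq_zero {A : Type*} [Semiring A] {x y : A} (hxy : Commute x y) {n : ℕ}
    (hn : n ≠ 0) (h : ∀ i, 0 < i → i < n → (n.choose i : A) = 0) :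
    (x + y) ^ n = x ^ n + y ^ n := by
  obtain ⟨n, rfl⟩ := Nat.exists_eq_succ_of_ne_zero hn
  rw [hxy.add_pow, Finset.sum_range_succ, Finset.sum_range_succ',
    Finset.sum_eq_zero fun i hi ↦ by
      rw [h (i + 1) i.succ_pos (by simpa using hi), mul_zero]]
  simp [add_comm]

theorem lie_eq_zero_of_iterate_lie_eq_zero {R : Type*} [Ring R] {J : TwoSidedIdeal R} {y : R}
    (h : ∀ x ∈ J, ⁅y, ⁅y, x⁆⁆ = 0 → ⁅y, x⁆ = 0) {k : ℕ} {x : R} (hx : x ∈ J)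
    (hk : (fun z ↦ ⁅y, z⁆)^[k] x = 0) : ⁅y, x⁆ = 0 := by
  induction k generalizing x with
  | zero => simpa [Ring.lie_def] using congrArg (⁅y, ·⁆) hk
  | succ k ih =>
    exact h x hx (ih (sub_mem (J.mul_mem_left _ _ hx) (J.mul_mem_right _ _ hx)) hk)

theorem iterate_lie_eq_lie_pow {F R : Type*} [CommRing F] [Ring R] [Algebra F R] {n : ℕ}
    (hn : n ≠ 0) (h : ∀ i, 0 < i → i < n → (n.choose i : F) = 0) (y x : R) :
    (fun z ↦ ⁅y, z⁆)^[n] x = ⁅y ^ n, x⁆ := by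
  let D : Module.End F R := LinearMap.mulLeft F y - LinearMap.mulRight F y
  have hcomm : Commute (LinearMap.mulRight F y) D :=
    (LinearMap.commute_mulLeft_right y y).symm.sub_right (Commute.refl _)
  have hpow : LinearMap.mulLeft F y ^ n = LinearMap.mulRight F y ^ n + D ^ n := by
    rw [← add_pow_of_choose_eq_zero hcomm hn fun i hi hin ↦ by
      rw [← map_natCast (algebraMap F (Module.End F R)), h i hi hin, map_zero], add_sub_cancel]
  have hx := LinearMap.congr_fun hpow x
  rw [LinearMap.pow_mulLeft, LinearMap.pow_mulRight, LinearMap.add_apply,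
    Module.End.pow_apply] at hx
  exact (eq_sub_of_add_eq' hx.symm)

theorem mem_center_of_mul_mem_center {R : Type*} [Ring R] [IsPrimeRing R] {c v : R}
    (hc : c ∈ Subring.center R) (hc0 : c ≠ 0) (h : c * v ∈ Subring.center R) :
    v ∈ Subring.center R := by
  refine Subring.mem_center_iff.2 fun r ↦ sub_eq_zero.1 <|
    (IsPrimeRing.mul_eq_zero_of_central hc ?_).resolve_left hc0
  rw [mul_sub, ← mul_assoc, ← mul_assoc, ← Subring.mem_center_iff.1 h, ← mul_assoc,
    Subring.mem_center_iff.1 hc, sub_self]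

section PowMemCenter

variable {F R : Type*} [CommRing F] [Ring R] [Algebra F R] {J : TwoSidedIdeal R} {n : ℕ}

/-- If `y` is not central, then `w = [y, x] ≠ 0` commutes with `y` for some `x`, and `y` conjugates
`x w ^ (n - 1) y` to its translate by the central element `w ^ n`. -/
theorem commute_of_forall_pow_mem_center [NoZeroDivisors R] (hn : n ≠ 0)
    (hchoose : ∀ i, 0 < i → i < n → (n.choose i : F) = 0)
    (h : ∀ y ∈ J, y ^ n ∈ Subring.center R) {x y : R} (hy : y ∈ J) (hx : x ∈ J) : Commute y x := by
  have hlie (u : R) (hu : u ∈ J) : ⁅y, u⁆ ∈ J :=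
    sub_mem (J.mul_mem_left _ _ hu) (J.mul_mem_right _ _ hu)
  refine sub_eq_zero.1 (lie_eq_zero_of_iterate_lie_eq_zero (k := n) (fun x hx hw ↦ ?_) hx ?_)
  · set w := ⁅y, x⁆ with hwdef
    let s := x * w ^ (n - 1) * y
    have hyw : Commute y w := sub_eq_zero.1 hw
    have hw : w ^ n ∈ Subring.center R := h _ (hlie x hx)
    have hs : s ^ n ∈ Subring.center R := h _ (J.mul_mem_right _ _ (J.mul_mem_right _ _ hx))
    have hys : SemiconjBy y s (s + w ^ n) := by
      have hyx : y * x = x * y + w := by rw [hwdef, Ring.lie_def, add_sub_cancel]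
      calc y * (x * w ^ (n - 1) * y) = y * x * w ^ (n - 1) * y := by simp only [mul_assoc]
        _ = (x * (y * w ^ (n - 1)) + w ^ (n - 1 + 1)) * y := by
          rw [hyx, add_mul, pow_succ', mul_assoc x]
        _ = (x * w ^ (n - 1) * y + w ^ n) * y := by
          rw [(hyw.pow_right _).eq, mul_assoc x, Nat.sub_add_cancel (Nat.pos_of_ne_zero hn)]
    have hpow := (hys.pow_right n).eq
    rw [add_pow_of_choose_eq_zero (Subring.mem_center_iff.1 hw s) hn fun i hi hin ↦ by
      rw [← map_natCast (algebraMap F R), hchoose i hi hin, map_zero],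
      Subring.mem_center_iff.1 hs, add_mul, left_eq_add, mul_eq_zero] at hpow
    rcases hpow with hw0 | rfl
    · exact pow_eq_zero_iff hn |>.1 (pow_eq_zero_iff hn |>.1 hw0)
    · simp [w, Ring.lie_def]
  · rw [iterate_lie_eq_lie_pow hn hchoose, Ring.lie_def, Subring.mem_center_iff.1 (h y hy),
      sub_self]

end PowMemCenter

namespace IsMartindaleExtension

variable {F R Q : Type*} [Field F] [Ring R] [Algebra F R] [IsPrimeRing R] [Ring Q] [Algebra F Q]
  {ι : R →ₐ[F] Q} (hι : IsMartindaleExtension ι) [Infinite (Subalgebra.center F Q)] [Nontrivial Q]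
  {J : TwoSidedIdeal R} {n : ℕ}

include hι

theorem noZeroDivisors_of_forall_pow_mem_center (hJ : J ≠ ⊥) (hn : n ≠ 0)
    (h : ∀ y ∈ J, y ^ n ∈ Subring.center R) : NoZeroDivisors R := by
  refine noZeroDivisors_of_sq_eq_zero fun y hy ↦
    hι.eq_zero_of_forall_mul_pow_mul_eq_zero (n := n) hJ fun r hr ↦ ?_
  obtain ⟨n, rfl⟩ := Nat.exists_eq_succ_of_ne_zero hn
  rw [← Subring.mem_center_iff.1 (h _ (J.mul_mem_left y r hr)), pow_succ', ← mul_assoc,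
    ← mul_assoc, ← sq, hy, zero_mul, zero_mul]

theorem exists_ideal_choose_smul_mem_center (hJ : J ≠ ⊥)
    (h : ∀ y ∈ J, y ^ n ∈ Subring.center R) {i : ℕ} (hi : i ≤ n) :
    ∃ K : TwoSidedIdeal R, K ≠ ⊥ ∧ ∀ z ∈ K, z ∈ Subring.center R → ∀ y ∈ K,
      n.choose i • (z ^ i * y ^ (n - i)) ∈ Subring.center R := by
  have := hι.isPrimeRing
  obtain ⟨S, c, hc, hS⟩ := exists_smul_mem_of_forall_sum_smul_mem (C := Subalgebra.center F Q)
    (M := Q) id (n - ·) ((Finset.range (n + 1)).erase i) (t := i) fun j hj hji ↦ by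
      obtain ⟨hne, hj⟩ := Finset.mem_erase.1 hj
      have hjn := Finset.mem_range_succ_iff.1 hj
      zify [hi, hjn] at hji hne
      have hmul : ((j : ℤ) - i) * n = 0 := by simp only [id_eq] at hji; linear_combination hji
      have hn : (n : ℤ) = 0 := (mul_eq_zero.1 hmul).resolve_left (sub_ne_zero.2 hne)
      omega
  obtain ⟨K, hK, -, hKS⟩ := hι.exists_ideal_smul_mem hJ S
  refine ⟨K, hK, fun z hz hzc y hy ↦ Subring.mem_center_iff.2 fun r ↦ hι.injective ?_⟩
  have hzy : Commute (ι z) (ι y) := by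
    rw [Commute, SemiconjBy, ← map_mul, ← map_mul, Subring.mem_center_iff.1 hzc]
  have hmem := hS (fun i ↦ n.choose i • (ι z ^ i * ι y ^ (n - i)))
    (Subring.centralizer {ι r}).toAddSubgroup fun a ha b hb ↦ by
      obtain ⟨z', hz', hz'a⟩ := hKS a ha z hz
      obtain ⟨y', hy', hy'b⟩ := hKS b hb y hy
      rw [Finset.add_sum_erase _ (fun i ↦ (a ^ id i * b ^ (n - i)) •
        n.choose i • (ι z ^ i * ι y ^ (n - i))) (Finset.mem_range_succ_iff.2 hi)]
      have hpow : ∑ i ∈ Finset.range (n + 1), (a ^ id i * b ^ (n - i)) •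
          n.choose i • (ι z ^ i * ι y ^ (n - i)) = ι ((z' + y') ^ n) := by
        rw [map_pow, map_add, hz'a, hy'b, ((hzy.smul_left a).smul_right b).add_pow]
        refine Finset.sum_congr rfl fun i _ ↦ ?_
        rw [_root_.smul_pow, _root_.smul_pow, smul_mul_smul_comm, smul_comm, id_eq,
          nsmul_eq_mul', smul_mul_assoc]
      rw [hpow]
      rintro _ rfl
      rw [← map_mul, ← map_mul, Subring.mem_center_iff.1 (h _ (J.add_mem hz' hy'))]
  have hcomm := hmem _ rfl
  rw [mul_smul_comm, smul_mul_assoc, (hι.isUnit_of_ne_zero hc).smul_left_cancel] at hcomm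
  simpa using hcomm

theorem exists_forall_pow_mem_center_and_choose_eq_zero (hJ : J ≠ ⊥) (hn : n ≠ 0)
    (h : ∀ y ∈ J, y ^ n ∈ Subring.center R) :
    ∃ m ≠ 0, (∀ i, 0 < i → i < m → (m.choose i : F) = 0) ∧
      ∃ K : TwoSidedIdeal R, K ≠ ⊥ ∧ ∀ y ∈ K, y ^ m ∈ Subring.center R := by
  classical
  have := hι.noZeroDivisors_of_forall_pow_mem_center hJ hn h
  have hex : ∃ m ≠ 0, ∃ K : TwoSidedIdeal R, K ≠ ⊥ ∧ ∀ y ∈ K, y ^ m ∈ Subring.center R :=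
    ⟨n, hn, J, hJ, h⟩
  obtain ⟨hm, K, hK, hKm⟩ := Nat.find_spec hex
  refine ⟨Nat.find hex, hm, fun i hi him ↦ ?_, K, hK, hKm⟩
  by_contra hchoose
  have hchooseR (hR : Nontrivial R) : ((Nat.find hex).choose i : R) ≠ 0 := by
    rwa [← map_natCast (algebraMap F R), _root_.map_ne_zero]
  obtain ⟨L, hL, hLi⟩ := hι.exists_ideal_choose_smul_mem_center hK hKm him.le
  refine Nat.find_min hex (Nat.sub_lt (Nat.pos_of_ne_zero hm) hi)
    ⟨Nat.sub_ne_zero_of_lt him, K ⊓ L, IsPrimeRing.inf_ne_bot hK hL, fun y hy ↦ ?_⟩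
  obtain ⟨w, hw, hw0⟩ := exists_mem_ne_zero_of_ne_bot (IsPrimeRing.inf_ne_bot hK hL)
  have hwL : w ^ Nat.find hex ∈ L := by
    rw [← mul_pow_sub_one hm]
    exact L.mul_mem_right _ _ hw.2
  have hcentral := hLi _ hwL (hKm w hw.1) y hy.2
  rw [nsmul_eq_mul, ← mul_assoc] at hcentral
  exact mem_center_of_mul_mem_center (mul_mem (natCast_mem _ _) (pow_mem (hKm w hw.1) i))
    (mul_ne_zero (hchooseR ⟨w, 0, hw0⟩) (pow_ne_zero _ (pow_ne_zero _ hw0))) hcentral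

theorem exists_lie_pow_ne_zero (hnc : ∃ a b : R, a * b ≠ b * a) (hJ : J ≠ ⊥) (hn : n ≠ 0) :
    ∃ y ∈ J, ∃ z ∈ J, ⁅y ^ n, z ^ n⁆ ≠ 0 := by
  by_contra! h
  obtain ⟨K, hK, hKn⟩ := hι.exists_ideal_pow_mem_center hJ hn fun y hy z hz ↦
    sub_eq_zero.1 (h y hy z hz)
  obtain ⟨m, hm, hchoose, L, hL, hLm⟩ :=
    hι.exists_forall_pow_mem_center_and_choose_eq_zero hK hn hKn
  have := hι.noZeroDivisors_of_forall_pow_mem_center hK hn hKn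
  obtain ⟨a, b, hab⟩ := hnc
  refine hab (Subring.mem_center_iff.1 (mem_center_of_forall_mem_commute hL fun x hx ↦ ?_) a)
  exact (Subring.mem_center_iff.1 (mem_center_of_forall_mem_commute hL fun y hy ↦
    commute_of_forall_pow_mem_center hm hchoose hLm hx hy) b)

end IsMartindaleExtension

section FiniteCorner

variable {R : Type*} [Ring R]

theorem exists_isIdempotentElem_pow_of_injOn {c r : R}
    (hc : (Set.range fun x ↦ c * x * c).Finite) (hcrc : c * r * c ≠ 0)
    (h : Set.InjOn (c * r * ·) (Set.range fun x ↦ c * x * c)) :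
    ∃ n ≠ 0, IsIdempotentElem ((c * r) ^ n) ∧ (c * r) ^ n ≠ 0 := by
  have hmaps : Set.MapsTo (c * r * ·) (Set.range fun x ↦ c * x * c)
      (Set.range fun x ↦ c * x * c) := by
    rintro _ ⟨x, rfl⟩
    exact ⟨r * c * x, by simp only [mul_assoc]⟩
  have := hc.to_subtype
  obtain ⟨n, hn, hperiodic⟩ := (hmaps.restrict_inj.2 h).mem_periodicPts ⟨c * r * c, r, rfl⟩
  have hfix : (c * r) ^ n * (c * r * c) = c * r * c := by
    simpa [Function.IsPeriodicPt, Function.IsFixedPt, hmaps.iterate_restrict, Subtype.ext_iff]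
      using hperiodic
  have hadd (k : ℕ) (hk : 2 ≤ k) : (c * r) ^ (n + k) = (c * r) ^ k := by
    obtain ⟨k, rfl⟩ := Nat.exists_eq_add_of_le hk
    rw [← add_assoc, pow_add, pow_add _ 2, pow_add, sq, ← mul_assoc (c * r) c r, ← mul_assoc, hfix]
  refine ⟨n + n, by omega, ?_, fun h0 ↦ hcrc ?_⟩
  · rw [IsIdempotentElem, ← pow_add, add_assoc, hadd _ (by omega), hadd _ (by omega)]
  · rw [← hfix, ← hfix, ← mul_assoc, ← pow_add, h0, zero_mul]

variable [IsPrimeRing R]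

/-- Among the nonzero `c ∈ d R` choose one for which `c R c` has the least number of elements: then
left multiplication by a nonzero `c r` with `c r c ≠ 0` permutes `c R c`. -/
theorem isUnit_of_finite_range_mul_mul (h01 : ∀ e : R, IsIdempotentElem e → e = 0 ∨ e = 1) {d : R}
    (hd : d ≠ 0) (hfin : (Set.range fun r ↦ d * r * d).Finite) : IsUnit d := by
  let corner (c : R) : Set R := Set.range fun x ↦ c * x * c
  have hcorner (s : R) : (corner (d * s)).Finite := by
    refine (hfin.image (· * s)).subset ?_
    rintro _ ⟨x, rfl⟩
    exact ⟨_, ⟨s * x, rfl⟩, by simp only [mul_assoc]⟩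
  obtain ⟨_, ⟨hc0, s, rfl⟩, hmin⟩ := exists_minimalFor_of_wellFoundedLT
    (fun c ↦ c ≠ 0 ∧ ∃ s, c = d * s) (fun c ↦ (corner c).ncard) ⟨d, hd, 1, (mul_one d).symm⟩
  set c := d * s with hcdef
  obtain ⟨r, hr⟩ := IsPrimeRing.exists_mul_mul_ne_zero hc0 hc0
  have himage : (fun y ↦ c * r * y * (r * c)) '' corner c = corner (c * r * c) := by
    ext; simp [corner, mul_assoc]
  have hle : (corner c).ncard ≤ (corner (c * r * c)).ncard := by
    refine (le_total _ _).elim id fun h ↦ hmin ⟨hr, s * r * c, ?_⟩ h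
    simp only [c, mul_assoc]
  have hinj : Set.InjOn (fun y ↦ c * r * y * (r * c)) (corner c) :=
    Set.injOn_of_ncard_image_eq
      (le_antisymm (Set.ncard_image_le (hcorner s)) (himage ▸ hle)) (hcorner s)
  obtain ⟨n, hn, hidem, hpow⟩ := exists_isIdempotentElem_pow_of_injOn (hcorner s) hr
    fun x hx y hy hxy ↦ hinj hx hy (congrArg (· * (r * c)) hxy)
  have hone : d * (s * r * (c * r) ^ (n - 1)) = 1 := by
    rw [← (h01 _ hidem).resolve_left hpow, ← mul_pow_sub_one hn, hcdef]
    simp only [mul_assoc]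
  refine isUnit_iff_exists.2 ⟨_, hone, (h01 _ ?_).resolve_left fun h0 ↦ hd ?_⟩
  · rw [IsIdempotentElem, mul_assoc, ← mul_assoc d, hone, one_mul]
  · rw [← one_mul d, ← hone, mul_assoc, h0, mul_zero]

theorem infinite_range_mul_mul (h01 : ∀ e : R, IsIdempotentElem e → e = 0 ∨ e = 1)
    (hnc : ∃ a b : R, a * b ≠ b * a) {a b : R} (ha : a ≠ 0) (hb : b ≠ 0) :
    (Set.range fun r ↦ a * r * b).Infinite := by
  intro hfin
  obtain ⟨r, hr⟩ := IsPrimeRing.exists_mul_mul_ne_zero hb ha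
  have hcfin : (Set.range fun x ↦ b * r * a * x * (b * r * a)).Finite := by
    refine (hfin.image fun x ↦ b * r * x * (r * a)).subset ?_
    rintro _ ⟨x, rfl⟩
    exact ⟨_, ⟨x, rfl⟩, by simp only [mul_assoc]⟩
  have hunit : IsUnit (b * r * a) := isUnit_of_finite_range_mul_mul h01 hr hcfin
  have : Finite R := Set.finite_range_iff (fun x y hxy ↦
    hunit.mul_left_cancel (hunit.mul_right_cancel hxy)) |>.1 hcfin
  obtain ⟨x, y, hxy⟩ := hnc
  have : Nontrivial R := ⟨_, _, hxy⟩
  let _ : DivisionRing R := .ofIsUnitOrEqZero fun d ↦ or_iff_not_imp_right.2 fun hd ↦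
    isUnit_of_finite_range_mul_mul h01 hd (Set.toFinite _)
  exact hxy ((Finite.isDomain_to_isField R).mul_comm x y)

end FiniteCorner

theorem exists_forall_apply_ne {α A B : Type*} [Finite α] [AddGroup A] [AddGroup B]
    (T : α → A →+ B) (hT : ∀ i, (Set.range (T i)).Infinite) (q : α → B) :
    ∃ z, ∀ i, T i z ≠ q i := by
  cases nonempty_fintype α
  by_contra! h
  have hg (i : α) : ∃ g, ∀ z, T i z = q i → T i z = T i g := by
    by_cases hi : ∃ z, T i z = q i
    · exact hi.imp fun g hg z hz ↦ hz.trans hg.symm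
    · exact ⟨0, fun z hz ↦ (hi ⟨z, hz⟩).elim⟩
  choose g hg using hg
  obtain ⟨i, -, hi⟩ := AddSubgroup.exists_finiteIndex_of_leftCoset_cover
    (H := fun i ↦ (T i).ker) (g := g) (s := Finset.univ) <| Set.eq_univ_of_forall fun z ↦ by
      obtain ⟨i, hz⟩ := h z
      refine Set.mem_biUnion (Finset.mem_univ i) (mem_leftAddCoset_iff _ |>.2 ?_)
      rw [SetLike.mem_coe, AddMonoidHom.mem_ker, map_add, map_neg, hg i z hz, neg_add_cancel]
  refine hT i (Set.finite_coe_iff.1 (Nat.finite_of_card_ne_zero ?_))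
  exact AddSubgroup.index_ker (T i) ▸ hi.index_ne_zero

namespace IsMartindaleExtension

variable {F R Q β : Type*} [Field F] [Ring R] [Algebra F R] [IsPrimeRing R] [Ring Q] [Algebra F Q]
  {ι : R →ₐ[F] Q} (hι : IsMartindaleExtension ι)
  (hinf : ∀ a b : R, a ≠ 0 → b ≠ 0 → (Set.range fun r ↦ a * r * b).Infinite)
  {u : β → Q} (hu : LinearIndependent (Subalgebra.center F Q) u)

include hι hinf

theorem infinite_range_mul_map_mul_map {q : Q} (hq : q ≠ 0) {b : R} (hb : b ≠ 0) :
    (Set.range fun z ↦ q * ι z * ι b).Infinite := by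
  obtain ⟨J, hJ, -⟩ := hι.exists_ideal 0
  obtain ⟨x, -, y, -, hy, hyx⟩ := hι.exists_map_eq_mul_ne_zero hq hJ
  refine ((hinf y b hy hb).image hι.injective.injOn).mono ?_
  rintro _ ⟨_, ⟨r, rfl⟩, rfl⟩
  exact ⟨x * r, by simp only [map_mul, hyx, mul_assoc]⟩

include hu

theorem eq_zero_of_finite_range_sum_mul_map_mul_map (s : Finset β) {v : β → R}
    (h : (Set.range fun z ↦ ∑ i ∈ s, u i * ι z * ι (v i)).Finite) : ∀ i ∈ s, v i = 0 := by
  classical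
  induction s using Finset.induction_on generalizing v with
  | empty => simp
  | insert m s hm ih =>
    suffices hvm : v m = 0 from (Finset.forall_mem_insert ..).2
      ⟨hvm, ih (by simpa [Finset.sum_insert hm, hvm] using h)⟩
    by_contra hvm
    have hsymm (w : R) (i : β) (hi : i ∈ s) : v i * w * v m = v m * w * v i := by
      refine sub_eq_zero.1 (ih (v := fun i ↦ v i * w * v m - v m * w * v i) ?_ i hi)
      refine (h.image2 (fun a b ↦ a * ι (w * v m) - b) h).subset ?_
      rintro _ ⟨z, rfl⟩
      refine ⟨_, ⟨z, rfl⟩, _, ⟨z * v m * w, rfl⟩, ?_⟩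
      simp only [Finset.sum_insert hm, add_mul, Finset.sum_mul, map_mul, map_sub, mul_sub,
        Finset.sum_sub_distrib, mul_assoc, add_sub_add_left_eq_sub]
    have hc (i : β) (hi : i ∈ insert m s) : ∃ c : Subalgebra.center F Q, ι (v i) = c • ι (v m) :=
      hι.exists_center_smul_eq hvm <| by
        rcases Finset.mem_insert.1 hi with rfl | hi
        exacts [fun _ ↦ rfl, fun w ↦ hsymm w i hi]
    choose! c hc using hc
    have hsum : ∑ i ∈ insert m s, c i • u i ≠ 0 := fun h0 ↦ hvm <| hι.injective <| by
      rw [hc m (Finset.mem_insert_self m s),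
        linearIndependent_iff'.1 hu _ c h0 m (Finset.mem_insert_self m s), zero_smul, map_zero]
    refine hι.infinite_range_mul_map_mul_map hinf hsum hvm (h.subset ?_)
    rintro _ ⟨z, rfl⟩
    refine ⟨z, ?_⟩
    simp only [Finset.sum_mul]
    exact Finset.sum_congr rfl fun i hi ↦ by
      rw [hc i hi, mul_smul_comm, smul_mul_assoc, smul_mul_assoc]

theorem eq_zero_of_finite_range_sum_mul_map_mul [Fintype β] {v : β → Q}
    (h : (Set.range fun z ↦ ∑ i, u i * ι z * v i).Finite) (i : β) : v i = 0 := by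
  classical
  obtain ⟨I, hI, -⟩ := hι.exists_ideal 0
  obtain ⟨J, hJ, -, hJv⟩ := hι.exists_ideal_mul_mem hI (Finset.univ.image v)
  refine hι.eq_zero_of_forall_mul_eq_zero hJ fun r hr ↦ ?_
  choose y hy using fun i ↦ hJv (v i) (by simp) r hr
  rw [← (hy i).2, hι.eq_zero_of_finite_range_sum_mul_map_mul_map hinf hu Finset.univ (v := y) ?_ i
    (Finset.mem_univ i), map_zero]
  refine (h.image (· * ι r)).subset ?_
  rintro _ ⟨z, rfl⟩
  exact ⟨_, ⟨z, rfl⟩, by simp only [Finset.sum_mul, mul_assoc, (hy _).2]⟩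

theorem exists_linearIndependent_sumElim [Finite (Subalgebra.center F Q)] [Finite β] :
    ∃ z : R, LinearIndependent (Subalgebra.center F Q)
      (Sum.elim u fun p : β × β ↦ u p.1 * ι z * u p.2) := by
  classical
  cases nonempty_fintype β
  let T (c : β × β → Subalgebra.center F Q) : R →+ Q :=
    { toFun z := ∑ p, c p • (u p.1 * ι z * u p.2)
      map_zero' := by simp
      map_add' x y := by simp [mul_add, add_mul, Finset.sum_add_distrib] }
  have hT (c : β × β → Subalgebra.center F Q) (hc : c ≠ 0) : (Set.range (T c)).Infinite := by
    intro hfin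
    refine hc (funext fun p ↦ ?_)
    refine Fintype.linearIndependent_iff.1 hu (fun j ↦ c (p.1, j)) ?_ p.2
    refine hι.eq_zero_of_finite_range_sum_mul_map_mul hinf hu
      (v := fun i ↦ ∑ j, c (i, j) • u j) ?_ p.1
    convert hfin using 2
    ext z
    simp [T, Fintype.sum_prod_type, Finset.mul_sum]
  obtain ⟨z, hz⟩ := exists_forall_apply_ne
    (fun i : {c : β × β → Subalgebra.center F Q // c ≠ 0} × (β → Subalgebra.center F Q) ↦ T i.1)
    (fun i ↦ hT i.1 i.1.2) fun i ↦ -∑ j, i.2 j • u j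
  refine ⟨z, Fintype.linearIndependent_iff.2 fun c hc ↦ ?_⟩
  rw [Fintype.sum_sum_type] at hc
  have hr : c ∘ Sum.inr = 0 := by
    by_contra h0
    exact hz (⟨c ∘ Sum.inr, h0⟩, c ∘ Sum.inl) (eq_neg_of_add_eq_zero_right hc)
  have hl := Fintype.linearIndependent_iff.1 hu (c ∘ Sum.inl) (by
    simpa [show ∀ p, c (Sum.inr p) = 0 from congrFun hr] using hc)
  exact Sum.forall.2 ⟨hl, congrFun hr⟩

end IsMartindaleExtension

section NodupWords

variable {α : Type*}

/-- The lists without repetition whose entries lie in `s`. -/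
def nodupWords (s : Set α) : Set (List α) := {w | w.Nodup ∧ ∀ a ∈ w, a ∈ s}

/-- The words in `S`, and the words `u ++ a :: v` with `u` and `v` in `S`. -/
def insertLetter (a : α) (S : Set (List α)) : S ⊕ S × S → List α :=
  Sum.elim (↑) fun p ↦ p.1 ++ a :: p.2

theorem insertLetter_injective {a : α} {S : Set (List α)} (ha : ∀ w ∈ S, a ∉ w) :
    Function.Injective (insertLetter a S) := by
  rintro (u | ⟨u, u'⟩) (v | ⟨v, v'⟩) huv <;>
    simp only [insertLetter, Sum.elim_inl, Sum.elim_inr] at huv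
  · exact congrArg Sum.inl (Subtype.ext huv)
  · exact (ha _ u.2 (by simp [huv])).elim
  · exact (ha _ v.2 (by simp [← huv])).elim
  · obtain ⟨h, -, h'⟩ := (List.append_cons_inj_of_notMem (ha _ u.2) (ha _ u'.2)).1 huv
    rw [Subtype.ext h, Subtype.ext h']

theorem nodupWords_insert_subset_range (a : α) (s : Set α) :
    nodupWords (insert a s) ⊆ Set.range (insertLetter a (nodupWords s)) := by
  rintro w ⟨hw, hws⟩
  by_cases haw : a ∈ w
  · obtain ⟨u, v, rfl⟩ := List.append_of_mem haw
    rw [List.nodup_middle, List.nodup_cons, List.mem_append, not_or] at hw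
    have hu : u ∈ nodupWords s := ⟨hw.2.of_append_left, fun b hb ↦
      (hws b (by simp [hb])).resolve_left (by rintro rfl; exact hw.1.1 hb)⟩
    have hv : v ∈ nodupWords s := ⟨hw.2.of_append_right, fun b hb ↦
      (hws b (by simp [hb])).resolve_left (by rintro rfl; exact hw.1.2 hb)⟩
    exact ⟨Sum.inr (⟨u, hu⟩, ⟨v, hv⟩), rfl⟩
  · have hs : w ∈ nodupWords s :=
      ⟨hw, fun b hb ↦ (hws b hb).resolve_left (by rintro rfl; exact haw hb)⟩
    exact ⟨Sum.inl ⟨w, hs⟩, rfl⟩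

theorem nodupWords_empty_subset : nodupWords (∅ : Set α) ⊆ {[]} :=
  fun _ hw ↦ List.eq_nil_iff_forall_not_mem.2 hw.2

theorem finite_nodupWords {s : Set α} (hs : s.Finite) : (nodupWords s).Finite := by
  induction s, hs using Set.Finite.induction_on with
  | empty => exact (Set.finite_singleton _).subset nodupWords_empty_subset
  | @insert a s _ _ ih =>
    have := ih.to_subtype
    exact (Set.finite_range _).subset (nodupWords_insert_subset_range a s)

end NodupWords

namespace IsMartindaleExtension

variable {F R Q α : Type*} [Field F] [Ring R] [Algebra F R] [IsPrimeRing R] [Ring Q] [Algebra F Q]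
  {ι : R →ₐ[F] Q} (hι : IsMartindaleExtension ι)
  (hinf : ∀ a b : R, a ≠ 0 → b ≠ 0 → (Set.range fun r ↦ a * r * b).Infinite)
  [Finite (Subalgebra.center F Q)]

include hι hinf

theorem exists_linearIndepOn_nodupWords {s : Set α} (hs : s.Finite) : ∃ x : α → R,
    LinearIndepOn (Subalgebra.center F Q) (fun w ↦ ι (w.map x).prod) (nodupWords s) := by
  classical
  induction s, hs using Set.Finite.induction_on with
  | empty =>
    refine ⟨0, LinearIndepOn.mono ?_ nodupWords_empty_subset⟩
    refine Fintype.linearIndependent_iff.2 fun c hc w ↦ Subtype.ext ?_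
    obtain rfl := Subsingleton.elim default w
    simpa [Subalgebra.smul_def] using hc
  | @insert a s ha hs ih =>
    obtain ⟨x, hx⟩ := ih
    have := (finite_nodupWords hs).to_subtype
    have hS : ∀ w ∈ nodupWords s, a ∉ w := fun w hw haw ↦ ha (hw.2 a haw)
    obtain ⟨z, hz⟩ := hι.exists_linearIndependent_sumElim hinf hx
    have hmap (w : nodupWords s) : w.1.map (Function.update x a z) = w.1.map x :=
      List.map_congr_left fun b hb ↦ Function.update_of_ne (by rintro rfl; exact hS _ w.2 hb) ..
    refine ⟨Function.update x a z, LinearIndepOn.mono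
      ((linearIndepOn_range_iff (insertLetter_injective hS) _).2 ?_)
      (nodupWords_insert_subset_range a s)⟩
    convert hz using 1
    ext (w | ⟨w, w'⟩)
    · simp [insertLetter, hmap]
    · simp [insertLetter, hmap, mul_assoc]

end IsMartindaleExtension

section Polarization

theorem sum_neg_one_pow_card_smul_map_sum_compl {S κ α M N : Type*} [CommSemiring S]
    [AddCommMonoid M] [AddCommGroup N] [Module S M] [Module S N] [Fintype κ] [DecidableEq κ]
    [Fintype α] [DecidableEq α] (f : MultilinearMap S (fun _ : κ ↦ M) N) (y : κ → α → M) :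
    ∑ B : Finset α, (-1 : ℤ) ^ B.card • f (fun j ↦ ∑ i ∈ Bᶜ, y j i) =
      ∑ φ : κ → α with Function.Surjective φ, f fun j ↦ y j (φ j) := by
  have hmap (B : Finset α) : f (fun j ↦ ∑ i ∈ Bᶜ, y j i) =
      ∑ φ : κ → α, if B ⊆ (Finset.univ.image φ)ᶜ then f (fun j ↦ y j (φ j)) else 0 := by
    rw [f.map_sum_finset, ← Finset.sum_filter]
    refine Finset.sum_congr (Finset.ext fun φ ↦ ?_) fun _ _ ↦ rfl
    simp [Finset.subset_compl_comm (s := B), Finset.image_subset_iff]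
  have hcoeff (φ : κ → α) : ∑ B : Finset α with B ⊆ (Finset.univ.image φ)ᶜ, (-1 : ℤ) ^ B.card =
      if Function.Surjective φ then 1 else 0 := by
    rw [Finset.filter_subset_univ, Finset.sum_powerset_neg_one_pow_card]
    exact if_congr (by simp [Finset.eq_univ_iff_forall, Function.Surjective]) rfl rfl
  simp only [hmap, Finset.smul_sum, smul_ite, smul_zero]
  rw [Finset.sum_comm, Finset.sum_filter]
  refine Finset.sum_congr rfl fun φ _ ↦ ?_
  rw [← Finset.sum_filter, ← Finset.sum_smul, hcoeff, ite_smul, one_smul, zero_smul]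

theorem prod_ofFn_ite_even {M : Type*} [Monoid M] (a b : M) (k : ℕ) :
    (List.ofFn fun j : Fin (2 * k) ↦ if Even j.1 then a else b).prod = (a * b) ^ k := by
  induction k with
  | zero => simp
  | succ k ih =>
    rw [pow_succ', ← ih]
    simp [Nat.mul_succ, List.ofFn_succ, Nat.even_add_one, Nat.odd_add_one, mul_assoc]

theorem sum_filter_surjective_eq_sum_perm {α N : Type*} [Fintype α] [DecidableEq α]
    [AddCommMonoid N] (g : (α → α) → N) :
    ∑ φ : α → α with Function.Surjective φ, g φ = ∑ σ : Equiv.Perm α, g σ := by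
  refine (Finset.sum_nbij (fun σ : Equiv.Perm α ↦ ⇑σ) (fun σ _ ↦ by simpa using σ.surjective)
    DFunLike.coe_injective.injOn (fun φ hφ ↦ ?_) fun _ _ ↦ rfl).symm
  have hφ : Function.Surjective φ := by simpa using hφ
  exact ⟨Equiv.ofBijective φ ⟨Finite.injective_iff_surjective.2 hφ, hφ⟩, by simp, rfl⟩

variable {F R : Type*} [CommRing F] [Ring R] [Algebra F R]

theorem sum_neg_one_pow_card_smul_aeval_mul (p : F[X]) (u v : Fin (2 * p.natDegree) → R) :
    ∑ B : Finset (Fin (2 * p.natDegree)),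
        (-1 : ℤ) ^ B.card • aeval ((∑ i ∈ Bᶜ, u i) * ∑ i ∈ Bᶜ, v i) p =
      p.leadingCoeff • ∑ σ : Equiv.Perm (Fin (2 * p.natDegree)),
        (List.ofFn fun j ↦ if Even j.1 then u (σ j) else v (σ j)).prod := by
  have hpow (k : ℕ) : ∑ B : Finset (Fin (2 * p.natDegree)),
        (-1 : ℤ) ^ B.card • ((∑ i ∈ Bᶜ, u i) * ∑ i ∈ Bᶜ, v i) ^ k =
      ∑ φ : Fin (2 * k) → Fin (2 * p.natDegree) with Function.Surjective φ,
        (List.ofFn fun j ↦ if Even j.1 then u (φ j) else v (φ j)).prod := by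
    have h := sum_neg_one_pow_card_smul_map_sum_compl (MultilinearMap.mkPiAlgebraFin F (2 * k) R)
      fun j i ↦ if Even j.1 then u i else v i
    simpa only [MultilinearMap.mkPiAlgebraFin_apply, Finset.sum_ite_irrel, prod_ofFn_ite_even]
      using h
  simp only [aeval_eq_sum_range, Finset.smul_sum]
  rw [Finset.sum_comm]
  simp only [smul_comm (_ : ℤ) (_ : F), ← Finset.smul_sum, hpow]
  rw [Finset.sum_range_succ, Finset.sum_eq_zero fun k hk ↦ ?_, zero_add,
    sum_filter_surjective_eq_sum_perm, leadingCoeff]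
  rw [Finset.filter_false_of_mem fun φ _ hφ ↦ ?_, Finset.sum_empty, smul_zero]
  have := Fintype.card_le_of_surjective φ hφ
  simp only [Fintype.card_fin, Finset.mem_range] at this hk
  lia

end Polarization

section PermPolynomial

variable {F R : Type*} [CommRing F] [Ring R] [Algebra F R] {m : ℕ}

/-- The multilinear noncommutative polynomial `∑ σ, c σ • x (σ 0) * ⋯ * x (σ (m - 1))`. -/
def permPolynomial (R : Type*) [Ring R] [Algebra F R] (c : Equiv.Perm (Fin m) → F) :
    MultilinearMap F (fun _ : Fin m ↦ R) R :=
  ∑ σ, c σ • (MultilinearMap.mkPiAlgebraFin F m R).domDomCongr σ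

theorem permPolynomial_apply (c : Equiv.Perm (Fin m) → F) (x : Fin m → R) :
    permPolynomial R c x = ∑ σ, c σ • (List.ofFn fun j ↦ x (σ j)).prod := by
  simp [permPolynomial]

theorem lie_prod_ofFn (x : Fin m → R) (r : R) :
    ⁅(List.ofFn x).prod, r⁆ = ∑ i, (List.ofFn (Function.update x i ⁅x i, r⁆)).prod := by
  induction m with
  | zero => simp [Ring.lie_def]
  | succ m ih =>
    have hcons (y : Fin (m + 1) → R) :
        (List.ofFn y).prod = y 0 * (List.ofFn (Fin.tail y)).prod := by
      rw [List.ofFn_succ, List.prod_cons]; rfl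
    have htail (i : Fin m) : (List.ofFn (Function.update x i.succ ⁅x i.succ, r⁆)).prod =
        x 0 * (List.ofFn (Function.update (Fin.tail x) i ⁅Fin.tail x i, r⁆)).prod := by
      rw [hcons, Fin.tail_update_succ, Function.update_of_ne (Fin.succ_ne_zero i).symm]; rfl
    rw [Fin.sum_univ_succ, Finset.sum_congr rfl fun i _ ↦ htail i, ← Finset.mul_sum, ← ih, hcons,
      hcons, Fin.tail_update_zero, Function.update_self, Ring.lie_def, Ring.lie_def, Ring.lie_def]
    noncomm_ring

theorem lie_permPolynomial (c : Equiv.Perm (Fin m) → F) (x : Fin m → R) (r : R) :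
    ⁅permPolynomial R c x, r⁆ = ∑ i, permPolynomial R c (Function.update x i ⁅x i, r⁆) := by
  simp only [permPolynomial_apply]
  rw [Finset.sum_comm, Ring.lie_def, Finset.sum_mul, Finset.mul_sum, ← Finset.sum_sub_distrib]
  refine Finset.sum_congr rfl fun σ _ ↦ ?_
  rw [← Finset.smul_sum, smul_mul_assoc, mul_smul_comm, ← smul_sub, ← Ring.lie_def,
    lie_prod_ofFn]
  refine congrArg (c σ • ·) <| Fintype.sum_equiv σ _ _ fun i ↦ ?_
  exact congrArg (fun y ↦ (List.ofFn y).prod)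
    (Function.update_comp_eq_of_injective x σ.injective i ⁅x (σ i), r⁆).symm

/-- The coefficients of the multilinearization of `p (x y) - p (y x)`, where the variables with even
index linearize `x` and those with odd index linearize `y`. -/
def altCoeff (p : F[X]) (σ : Equiv.Perm (Fin (2 * p.natDegree))) : F :=
  (if ∀ j, Even j.1 ↔ Even (σ j).1 then p.leadingCoeff else 0) -
    if ∀ j, Even j.1 ↔ ¬ Even (σ j).1 then p.leadingCoeff else 0

theorem prod_ofFn_ite (q : Fin m → Prop) [DecidablePred q] (x : Fin m → R) :
    (List.ofFn fun j ↦ if q j then x j else 0).prod =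
      if ∀ j, q j then (List.ofFn x).prod else 0 := by
  split_ifs with h
  · simp [h]
  · obtain ⟨j, hj⟩ := not_forall.1 h
    exact List.prod_eq_zero (List.mem_ofFn.2 ⟨j, if_neg hj⟩)

theorem permPolynomial_altCoeff_mem_pCommutators (p : F[X]) (x : Fin (2 * p.natDegree) → R) :
    permPolynomial R (altCoeff p) x ∈ pCommutators R p := by
  let u (i : Fin (2 * p.natDegree)) := if Even i.1 then x i else 0
  let v (i : Fin (2 * p.natDegree)) := if Even i.1 then 0 else x i
  suffices permPolynomial R (altCoeff p) x = ∑ B : Finset (Fin (2 * p.natDegree)),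
      (-1 : ℤ) ^ B.card • (aeval ((∑ i ∈ Bᶜ, u i) * ∑ i ∈ Bᶜ, v i) p -
        aeval ((∑ i ∈ Bᶜ, v i) * ∑ i ∈ Bᶜ, u i) p) from
    this ▸ sum_mem fun B _ ↦ zsmul_mem (aeval_sub_aeval_mem_pCommutators _ _) _
  simp only [smul_sub, Finset.sum_sub_distrib, sum_neg_one_pow_card_smul_aeval_mul, u, v]
  have huv (i j : Fin (2 * p.natDegree)) :
      (if Even j.1 then if Even i.1 then x i else 0 else if Even i.1 then 0 else x i) =
        if Even j.1 ↔ Even i.1 then x i else 0 := by grind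
  have hvu (i j : Fin (2 * p.natDegree)) :
      (if Even j.1 then if Even i.1 then 0 else x i else if Even i.1 then x i else 0) =
        if Even j.1 ↔ ¬ Even i.1 then x i else 0 := by grind
  simp only [huv, hvu, prod_ofFn_ite, permPolynomial_apply, altCoeff, sub_smul, ite_smul, zero_smul,
    Finset.sum_sub_distrib, Finset.smul_sum, smul_ite, smul_zero]

theorem altCoeff_one_ne_zero {p : F[X]} (hp : p.natDegree ≠ 0) : altCoeff p 1 ≠ 0 := by
  have hp0 : p ≠ 0 := by rintro rfl; exact hp natDegree_zero
  have h : ¬ ∀ j : Fin (2 * p.natDegree), Even j.1 ↔ ¬ Even j.1 := fun h ↦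
    iff_not_self (h ⟨0, by lia⟩)
  rw [altCoeff, if_pos (by exact fun _ ↦ Iff.rfl), if_neg (by exact h), sub_zero]
  exact leadingCoeff_ne_zero.2 hp0

/-- The monomials of the product of two values of `permPolynomial` at disjoint families of
variables, in both orders: `inl (σ, τ)` gives `σ` in the left variables followed by `τ` in the right
ones, and `inr (σ, τ)` gives the same two blocks in the opposite order. -/
def pairWord (m : ℕ) : Equiv.Perm (Fin m) × Equiv.Perm (Fin m) ⊕
    Equiv.Perm (Fin m) × Equiv.Perm (Fin m) → List (Fin m ⊕ Fin m) :=
  Sum.elim (fun s ↦ List.ofFn (Sum.inl ∘ s.1) ++ List.ofFn (Sum.inr ∘ s.2))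
    fun s ↦ List.ofFn (Sum.inr ∘ s.2) ++ List.ofFn (Sum.inl ∘ s.1)

theorem pairWord_injective (hm : m ≠ 0) : Function.Injective (pairWord m) := by
  have inj {e : Fin m → Fin m ⊕ Fin m} (he : Function.Injective e) {σ τ : Equiv.Perm (Fin m)}
      (h : List.ofFn (e ∘ σ) = List.ofFn (e ∘ τ)) : σ = τ :=
    DFunLike.coe_injective (he.comp_left (List.ofFn_injective h))
  refine Function.Injective.sumElim ?_ ?_ ?_ <;> rintro ⟨σ, τ⟩ ⟨σ', τ'⟩ h <;>
    obtain ⟨h₁, h₂⟩ := List.append_inj h (by simp)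
  · exact Prod.ext (inj Sum.inl_injective h₁) (inj Sum.inr_injective h₂)
  · exact Prod.ext (inj Sum.inl_injective h₂) (inj Sum.inr_injective h₁)
  · exact Sum.inl_ne_inr (congrFun (List.ofFn_injective h₁) ⟨0, Nat.pos_of_ne_zero hm⟩)

theorem pairWord_mem_nodupWords (s) : pairWord m s ∈ nodupWords Set.univ := by
  have nodup {e : Fin m → Fin m ⊕ Fin m} (he : Function.Injective e) (σ : Equiv.Perm (Fin m)) :
      (List.ofFn (e ∘ σ)).Nodup := List.nodup_ofFn.2 (he.comp σ.injective)
  refine ⟨?_, fun _ _ ↦ Set.mem_univ _⟩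
  rcases s with s | s
  · exact (nodup Sum.inl_injective s.1).append (nodup Sum.inr_injective s.2)
      (by simp [List.disjoint_left, List.mem_ofFn])
  · exact (nodup Sum.inr_injective s.2).append (nodup Sum.inl_injective s.1)
      (by simp [List.disjoint_left, List.mem_ofFn])

theorem lie_permPolynomial_ne_zero [NoZeroDivisors F] (hm : m ≠ 0) {c : Equiv.Perm (Fin m) → F}
    (hc : c 1 ≠ 0) {x : Fin m ⊕ Fin m → R}
    (hx : LinearIndepOn F (fun w ↦ (w.map x).prod) (nodupWords Set.univ)) :
    ⁅permPolynomial R c (x ∘ Sum.inl), permPolynomial R c (x ∘ Sum.inr)⁆ ≠ 0 := by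
  intro h
  have hli : LinearIndependent F fun s ↦ ((pairWord m s).map x).prod :=
    hx.linearIndependent.comp (fun s ↦ ⟨pairWord m s, pairWord_mem_nodupWords s⟩) fun _ _ hst ↦
      pairWord_injective hm (congrArg Subtype.val hst)
  refine hc (mul_self_eq_zero.1 (Fintype.linearIndependent_iff.1 hli
    (Sum.elim (fun s ↦ c s.1 * c s.2) fun s ↦ -(c s.1 * c s.2)) ?_ (Sum.inl (1, 1))))
  rw [← h, Ring.lie_def, permPolynomial_apply, permPolynomial_apply, Finset.sum_mul_sum,
    Finset.mul_sum]
  simp only [Fintype.sum_sum_type, Fintype.sum_prod_type, pairWord, Sum.elim_inl, Sum.elim_inr,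
    List.map_append, List.map_ofFn, List.prod_append, neg_smul, Finset.sum_neg_distrib,
    ← sub_eq_add_neg, Finset.sum_mul, smul_mul_assoc,
    mul_smul_comm, mul_smul, Function.comp_def]
  simp only [Finset.smul_sum, smul_comm (c _) (c _)]

end PermPolynomial

namespace IsMartindaleExtension

variable {F R Q : Type*} [Field F] [Ring R] [Algebra F R] [IsPrimeRing R] [Ring Q] [Algebra F Q]
  {ι : R →ₐ[F] Q}

theorem exists_ideal_le_commTransporter_of_finite_center (hι : IsMartindaleExtension ι)
    [Nontrivial R] [Finite (Subalgebra.center F Q)]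
    (hinf : ∀ a b : R, a ≠ 0 → b ≠ 0 → (Set.range fun r ↦ a * r * b).Infinite)
    {p : F[X]} (hp : p.natDegree ≠ 0) :
    ∃ M : TwoSidedIdeal R, M ≠ ⊥ ∧ ∀ m ∈ M, m ∈ commTransporter (pCommutators R p) ⊤ := by
  have : Nontrivial Q := hι.injective.nontrivial
  obtain ⟨x, hx⟩ := hι.exists_linearIndepOn_nodupWords hinf
    (Set.finite_univ (α := Fin (2 * p.natDegree) ⊕ Fin (2 * p.natDegree)))
  have hxF : LinearIndepOn F (fun w ↦ (w.map x).prod) (nodupWords Set.univ) :=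
    .of_comp ι.toLinearMap (hx.linearIndependent.restrict_scalars' F)
  have hmem (y) : permPolynomial R (altCoeff p) y ∈ commTransporter (pCommutators R p) ⊤ :=
    fun r _ ↦ lie_permPolynomial (altCoeff p) y r ▸
      sum_mem fun _ _ ↦ permPolynomial_altCoeff_mem_pCommutators p _
  have hlie (y r) : ⁅permPolynomial R (altCoeff p) y, r⁆ ∈
      commTransporter (pCommutators R p) ⊤ :=
    lie_permPolynomial (altCoeff p) y r ▸ sum_mem fun _ _ ↦ hmem _
  exact exists_ideal_le_commTransporter_top top_ne_bot top_ne_bot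
    (lie_permPolynomial_ne_zero (by lia) (altCoeff_one_ne_zero hp) hxF) (hmem _)
    (fun r _ ↦ hlie _ r) fun r _ ↦ hlie _ r

end IsMartindaleExtension

theorem exists_ideal_le_commTransporter_pCommutators {F R : Type*} [Field F] [Ring R] [Algebra F R]
    [IsPrimeRing R] (hnc : ∃ a b : R, a * b ≠ b * a) {p : F[X]} (hp : p.natDegree ≠ 0)
    (hZ : ∃ g : Fin (p.natDegree + 1) → R, Function.Injective g ∧ ∀ i, g i ∈ Subring.center R) :
    ∃ M : TwoSidedIdeal R, M ≠ ⊥ ∧ ∀ m ∈ M, m ∈ commTransporter (pCommutators R p) ⊤ := by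
  have : Nontrivial R := let ⟨a, b, hab⟩ := hnc; ⟨a * b, b * a, hab⟩
  by_cases h01 : ∀ e : R, IsIdempotentElem e → e = 0 ∨ e = 1
  · have hι := isMartindaleExtension_toMartindaleQuotient F R
    have : Nontrivial (MartindaleQuotient F R) := hι.injective.nontrivial
    rcases finite_or_infinite (Subalgebra.center F (MartindaleQuotient F R)) with hC | hC
    · exact hι.exists_ideal_le_commTransporter_of_finite_center
        (fun _ _ ↦ infinite_range_mul_mul h01 hnc) hp
    · exact hι.exists_ideal_le_commTransporter_of_lie_pow_ne_zero hp fun J hJ ↦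
        hι.exists_lie_pow_ne_zero hnc hJ hp
  · push Not at h01
    obtain ⟨e, he, he0, he1⟩ := h01
    exact exists_ideal_le_commTransporter_of_isIdempotentElem hp hZ he he0 he1

theorem closure_commutators_le_of_forall_mem_commTransporter {R : Type*} [Ring R]
    {P : AddSubgroup R} (h : ∀ m : R, m ∈ commTransporter P ⊤) :
    AddSubgroup.closure {x : R | ∃ a b : R, x = a * b - b * a} ≤ P := by
  rw [AddSubgroup.closure_le]
  rintro _ ⟨a, b, rfl⟩
  exact h a b trivial

/-- Let `R` be a noncommutative prime unital `F`-algebra and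
`p ∈ F[x]` nonconstant of degree `n ≥ 1`, with the center of `R` containing at least
`n+1` distinct elements. Then (a) the additive subgroup generated by the additive
`p`-commutators `p(ab) − p(ba)` is contained in the additive subgroup generated by
commutators, (b) there is a nonzero two-sided ideal `M` with `xm − mx` an element of
that subgroup for all `m ∈ M`, `x ∈ R`, and (c) if `R` is simple the two subgroups are
equal. -/
theorem stmt_16 (F : Type*) [Field F] (R : Type*) [Ring R] [Algebra F R]
    (hnc : ∃ a b : R, a * b ≠ b * a)
    (hprime : ∀ a b : R, (∀ r : R, a * r * b = 0) → a = 0 ∨ b = 0)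
    (p : Polynomial F) (n : ℕ) (hdeg : p.natDegree = n) (hn : 1 ≤ n)
    (hZ : ∃ g : Fin (n + 1) → R, Function.Injective g ∧
      ∀ i, g i ∈ Subring.center R) :
    (AddSubgroup.closure
        {x : R | ∃ a b : R,
          x = Polynomial.aeval (a * b) p - Polynomial.aeval (b * a) p} ≤
      AddSubgroup.closure {x : R | ∃ a b : R, x = a * b - b * a}) ∧
    (∃ M : TwoSidedIdeal R, M ≠ ⊥ ∧ ∀ m ∈ M, ∀ x : R,
        x * m - m * x ∈ AddSubgroup.closure
          {y : R | ∃ a b : R,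
            y = Polynomial.aeval (a * b) p - Polynomial.aeval (b * a) p}) ∧
    (IsSimpleRing R →
      AddSubgroup.closure
          {x : R | ∃ a b : R,
            x = Polynomial.aeval (a * b) p - Polynomial.aeval (b * a) p} =
        AddSubgroup.closure {x : R | ∃ a b : R, x = a * b - b * a}) := by
  subst hdeg
  have : IsPrimeRing R := ⟨hprime⟩
  have hle := pCommutators_le_closure_commutators (R := R) (p := p)
  obtain ⟨M, hM, hMP⟩ :=
    exists_ideal_le_commTransporter_pCommutators hnc (Nat.one_le_iff_ne_zero.1 hn) hZ
  refine ⟨hle, ⟨M, hM, fun m hm x ↦ ?_⟩, fun _ ↦ le_antisymm hle ?_⟩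
  · exact neg_sub (m * x) (x * m) ▸ neg_mem (hMP m hm x trivial)
  · have hMtop : M = ⊤ := (eq_bot_or_eq_top M).resolve_left hM
    exact closure_commutators_le_of_forall_mem_commTransporter fun m ↦ hMP m (hMtop ▸ trivial)
end

section
/- Let F be a field, let R be an infinite, noncommutative, simple unital associative F-algebra, and let p ∈ F[x] be a nonconstant polynomial. Then the additive subgroup of R generated by {p(ab) − p(ba) : a, b ∈ R} equals the additive subgroup [R,R] of R generated by all commutators xy − yx, and the subring of R generated by {p(ab) − p(ba) : a, b ∈ R} equals R. -/
/-!
Let `V` be the additive subgroup generated by the additive `p`-commutators. It suffices to find a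
Lie ideal `L ⊆ V` of `R` with two noncommuting elements: in a simple ring `R`, by an argument of
Herstein, a noncommutative subring that is also a Lie ideal is equal to `R`. For the subring
`{x | [x, R] ⊆ L}` this gives `[R, R] ⊆ L`. Hence the subring generated by `V` is a Lie ideal too,
and so equal to `R`.

For the construction of `L` we may replace `F` by the centre `k` of `R`. Let `n` be the degree of
`p`. If `k` is infinite, a weight argument shows that `V` contains the derivatives of
`b ↦ (ab) ^ n - (ba) ^ n`, and `L` is the `k`-span of these. It is a Lie ideal because polynomial
identities modulo a subspace persist over the dual numbers and hence may be differentiated along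
`x ↦ [x, r]`. If `k` is finite, polarizing `p(ab) - p(ba)` shows that `V` contains all values of a
nonzero multilinear polynomial of degree `2n`, and `L` is the additive subgroup generated by these.

If all elements of `L` commuted, then `R` would satisfy an identity that passes to `K ⊗ R` for each
field extension `K` of `k`. Let `K` be a maximal subfield of the endomorphism ring of a simple
`R`-module `M`. By the density theorem `K ⊗ R` acts densely on the `K`-space `M`, whose dimension is
at least `2`, and infinite when `k` is finite because `R` is infinite. There explicit elements
violate the identity.
-/

open TensorProduct

universe u

namespace PolynomialCommutator

attribute [local instance] LieRing.ofAssociativeRing TensorProduct.Algebra.module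

/-- An additive subgroup of a ring closed under commutators with arbitrary elements, i.e. a Lie
ideal of the ring viewed as a Lie ring over `ℤ`. -/
def IsLieIdeal {R : Type*} [Ring R] (L : AddSubgroup R) : Prop :=
  ∀ x ∈ L, ∀ r : R, ⁅x, r⁆ ∈ L

/-- The subring of those `x` whose commutators with all elements lie in `V`. -/
def lieIdealizer {R : Type*} [Ring R] (V : AddSubgroup R) : Subring R where
  carrier := {x | ∀ r : R, ⁅x, r⁆ ∈ V}
  mul_mem' {x y} hx hy r := by
    have h : ⁅x * y, r⁆ = ⁅x, y * r⁆ + ⁅y, r * x⁆ := by simp only [Ring.lie_def]; noncomm_ring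
    exact h ▸ V.add_mem (hx _) (hy _)
  one_mem' r := by simp [Ring.lie_def]
  add_mem' hx hy r := by simpa only [add_lie] using V.add_mem (hx r) (hy r)
  zero_mem' r := by simp only [zero_lie, V.zero_mem]
  neg_mem' hx r := by simpa only [neg_lie] using V.neg_mem (hx r)

section Herstein

variable {R : Type*} [Ring R] [IsSimpleRing R]

theorem eq_top_of_forall_mul_mul_mem {A : AddSubgroup R} {z : R} (hz : z ≠ 0)
    (h : ∀ s r, s * z * r ∈ A) : A = ⊤ := by
  have hspan : TwoSidedIdeal.span {z} = ⊤ := (eq_bot_or_eq_top _).resolve_left fun hbot =>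
    hz <| (TwoSidedIdeal.mem_bot R).1 <| hbot ▸ TwoSidedIdeal.subset_span (Set.mem_singleton z)
  refine eq_top_iff.2 fun x _ => ?_
  have hx : x ∈ TwoSidedIdeal.span {z} := hspan ▸ trivial
  rw [TwoSidedIdeal.mem_span_iff_mem_addSubgroup_closure] at hx
  refine (AddSubgroup.closure_le A).2 ?_ hx
  rintro _ ⟨_, ⟨s, -, _, rfl, rfl⟩, r, -, rfl⟩
  exact h s r

theorem subring_eq_top_of_isLieIdeal {B : Subring R} (hB : IsLieIdeal B.toAddSubgroup) {x y : R}
    (hx : x ∈ B) (hy : y ∈ B) (hxy : ⁅x, y⁆ ≠ 0) : B = ⊤ := by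
  have hmul : ∀ r, ⁅x, y⁆ * r ∈ B := fun r => by
    have h : ⁅x, y⁆ * r = ⁅x, y * r⁆ - y * ⁅x, r⁆ := by simp only [Ring.lie_def]; noncomm_ring
    exact h ▸ B.sub_mem (hB x hx _) (B.mul_mem hy (hB x hx r))
  have hmul' : ∀ s r, s * ⁅x, y⁆ * r ∈ B := fun s r => by
    have h : s * ⁅x, y⁆ * r = ⁅x, y⁆ * (r * s) - ⁅⁅x, y⁆ * r, s⁆ := by
      simp only [Ring.lie_def]; noncomm_ring
    exact h ▸ B.sub_mem (hmul _) (hB _ (hmul r) s)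
  have htop := eq_top_of_forall_mul_mul_mem (A := B.toAddSubgroup) hxy hmul'
  exact eq_top_iff.2 fun z _ => show z ∈ B.toAddSubgroup from htop ▸ trivial

theorem lie_mem_of_isLieIdeal {L : AddSubgroup R} (hL : IsLieIdeal L) {x y : R} (hx : x ∈ L)
    (hy : y ∈ L) (hxy : ⁅x, y⁆ ≠ 0) (a b : R) : ⁅a, b⁆ ∈ L := by
  have htop : lieIdealizer L = ⊤ :=
    subring_eq_top_of_isLieIdeal (fun b hb r s => hL _ (hb r) s) (hL x hx) (hL y hy) hxy
  exact (htop ▸ trivial : a ∈ lieIdealizer L) b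

theorem subringClosure_eq_top_of_isLieIdeal {S : Set R} {L : AddSubgroup R}
    (hLS : L ≤ AddSubgroup.closure S) (hL : IsLieIdeal L) {x y : R} (hx : x ∈ L) (hy : y ∈ L)
    (hxy : ⁅x, y⁆ ≠ 0) : Subring.closure S = ⊤ := by
  have hLC : L ≤ (Subring.closure S).toAddSubgroup :=
    hLS.trans <| (AddSubgroup.closure_le _).2 Subring.subset_closure
  exact subring_eq_top_of_isLieIdeal (fun a _ b => hLC (lie_mem_of_isLieIdeal hL hx hy hxy a b))
    (hLC hx) (hLC hy) hxy

end Herstein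

theorem exists_eq_centralizer (D : Type*) [Ring D] : ∃ S : Set D, S = S.centralizer := by
  obtain ⟨S, hS⟩ := zorn_subset {S : Set D | S ⊆ S.centralizer} fun c hc hchain => by
    refine ⟨⋃₀ c, ?_, fun s hs => Set.subset_sUnion_of_mem hs⟩
    rintro x ⟨s, hs, hx⟩ y ⟨t, ht, hy⟩
    rcases hchain.total hs ht with h | h
    · exact hc ht (h hx) y hy
    · exact hc hs hx y (h hy)
  refine ⟨S, hS.1.antisymm fun x hx => hS.2 (y := insert x S) ?_ (S.subset_insert x)
    (S.mem_insert x)⟩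
  rintro a (rfl | ha) b (rfl | hb)
  · rfl
  · exact hx b hb
  · exact (hx a ha).symm
  · exact hS.1 ha b hb

/-- Every `K`-linear endomorphism of `M` agrees on each finite set with the action of an element
of `E`: the conclusion of the Jacobson density theorem. -/
def ActsDensely (E K M : Type*) [Semiring K] [AddCommMonoid M] [Module K M] [SMul E M] : Prop :=
  ∀ (f : Module.End K M) (s : Finset M), ∃ t : E, ∀ m ∈ s, t • m = f m

theorem ActsDensely.exists_smul_eq {E K M ι : Type*} [DivisionRing K] [AddCommGroup M] [Module K M]
    [SMul E M] (h : ActsDensely E K M) {v : ι → M} (hv : LinearIndependent K v) (s : Finset ι)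
    (w : ι → M) : ∃ t : E, ∀ i ∈ s, t • v i = w i := by
  classical
  obtain ⟨f, hf⟩ := LinearMap.exists_extend (p := Submodule.span K (Set.range v))
    ((Module.Basis.span hv).constr ℕ w)
  obtain ⟨t, ht⟩ := h f (s.image v)
  refine ⟨t, fun i hi => ?_⟩
  have hfi := DFunLike.congr_fun hf (Module.Basis.span hv i)
  rw [Module.Basis.constr_basis] at hfi
  rw [ht _ (Finset.mem_image_of_mem v hi), ← hfi, LinearMap.comp_apply, Submodule.subtype_apply,
    Module.Basis.span_apply]

theorem exists_field_algHom_range_eq_centralizer (k : Type*) (D : Type u) [CommRing k]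
    [DivisionRing D] [Algebra k D] : ∃ (K : Type u) (_ : Field K) (_ : Algebra k K)
      (j : K →ₐ[k] D), ∀ x, (∀ c, j c * x = x * j c) → x ∈ j.range := by
  obtain ⟨S, hS⟩ := exists_eq_centralizer D
  let K := Subalgebra.centralizer k S
  have hKS : ∀ c, c ∈ K ↔ c ∈ S := fun c => (Set.ext_iff.1 hS c).symm
  have hK : IsField K :=
    { exists_pair_ne := ⟨0, 1, zero_ne_one⟩
      mul_comm := fun c d => Subtype.ext (d.2 c ((hKS c).1 c.2))
      mul_inv_cancel := fun {c} hc => ⟨⟨(c : D)⁻¹, Set.inv_mem_centralizer₀ c.2⟩,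
        Subtype.ext (mul_inv_cancel₀ fun h => hc (Subtype.ext h))⟩ }
  exact ⟨K, hK.toField, K.algebra, K.val,
    fun x hx => ⟨⟨x, fun c hc => hx ⟨c, (hKS c).2 hc⟩⟩, rfl⟩⟩

theorem actsDensely_of_isSimpleModule {E K M : Type*} [Ring E] [Semiring K] [AddCommGroup M]
    [Module E M] [Module K M] [IsSimpleModule E M]
    (h : ∀ g : Module.End E M, ∃ c : K, ∀ m, g m = c • m) : ActsDensely E K M := by
  intro f s
  let f' : Module.End (Module.End E M) M :=
    { toFun := f
      map_add' := map_add f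
      map_smul' := fun g m => by
        obtain ⟨c, hc⟩ := h g
        simp [Module.End.smul_def, hc] }
  obtain ⟨t, ht⟩ := jacobson_density f' s
  exact ⟨t, fun m hm => (ht m hm).symm⟩

section TensorAction

variable {k K R M : Type*} [CommRing k] [CommRing K] [Algebra k K] [Ring R] [Algebra k R]
  [AddCommGroup M] [Module k M] [Module K M] [Module R M] [IsScalarTower k K M]
  [IsScalarTower k R M] [SMulCommClass K R M]

theorem isSimpleModule_tensorProduct [IsSimpleModule R M] : IsSimpleModule (K ⊗[k] R) M := by
  refine isSimpleModule_iff_toSpanSingleton_surjective.2 ⟨IsSimpleModule.nontrivial R M,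
    fun x hx m => ?_⟩
  obtain ⟨r, rfl⟩ := IsSimpleModule.toSpanSingleton_surjective R hx m
  exact ⟨1 ⊗ₜ[k] r, by simp [TensorProduct.Algebra.smul_def]⟩

theorem actsDensely_tensorProduct [IsSimpleModule R M]
    (h : ∀ g : Module.End R M, (∀ (c : K) m, g (c • m) = c • g m) → ∃ c : K, ∀ m, g m = c • m) :
    ActsDensely (K ⊗[k] R) K M := by
  have := isSimpleModule_tensorProduct (k := k) (K := K) (R := R) (M := M)
  refine actsDensely_of_isSimpleModule fun g => ?_
  have hgR : ∀ (r : R) m, g (r • m) = r • g m := fun r m => by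
    simpa only [TensorProduct.Algebra.smul_def, one_smul] using map_smul g ((1 : K) ⊗ₜ[k] r) m
  have hgK : ∀ (c : K) m, g (c • m) = c • g m := fun c m => by
    simpa only [TensorProduct.Algebra.smul_def, one_smul] using map_smul g (c ⊗ₜ[k] (1 : R)) m
  exact h { toFun := g, map_add' := map_add g, map_smul' := hgR } hgK

end TensorAction

theorem exists_field_actsDensely (k R : Type*) (M : Type u) [Field k] [Ring R] [Algebra k R]
    [AddCommGroup M] [Module k M] [Module R M] [IsScalarTower k R M] [IsSimpleModule R M] :
    ∃ (K : Type u) (_ : Field K) (_ : Algebra k K) (_ : Module K M) (_ : IsScalarTower k K M)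
      (_ : SMulCommClass K R M), ActsDensely (K ⊗[k] R) K M := by
  classical
  obtain ⟨K, _, _, j, hj⟩ := exists_field_algHom_range_eq_centralizer k (Module.End R M)
  let : Module K M := Module.compHom M j.toRingHom
  have hjc : ∀ (c : K) (m : M), c • m = j c m := fun c m => rfl
  have : IsScalarTower k K M := ⟨fun a c m => by simp [hjc]⟩
  have : SMulCommClass K R M := ⟨fun c r m => map_smul (j c) r m⟩
  refine ⟨K, ‹_›, ‹_›, ‹_›, ‹_›, ‹_›, actsDensely_tensorProduct fun g hg => ?_⟩
  obtain ⟨c, rfl⟩ := hj g fun c => LinearMap.ext fun m => (hg c m).symm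
  exact ⟨c, fun m => rfl⟩

section PolynomialIdentities

variable {k N : Type*} [Field k] [AddCommGroup N] [Module k N]

theorem eq_zero_of_forall_rTensor_aeval_eq_zero [Infinite k] {σ : Type*}
    {t : MvPolynomial σ k ⊗[k] N}
    (h : ∀ c : σ → k, (MvPolynomial.aeval (R := k) c).toLinearMap.rTensor N t = 0) : t = 0 := by
  let b := Module.Basis.ofVectorSpace k N
  obtain ⟨p, rfl⟩ := TensorProduct.eq_repr_basis_right b t
  have hp : p = 0 := Finsupp.ext fun i => MvPolynomial.funext fun c => by
    have hc := TensorProduct.sum_tmul_basis_right_eq_zero b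
      (p.mapRange (MvPolynomial.aeval (R := k) c) (map_zero _)) <| by
        rw [Finsupp.sum_mapRange_index (by simp), ← h c, map_finsuppSum]
        rfl
    simpa [MvPolynomial.aeval_eq_eval] using DFunLike.congr_fun hc i
  rw [hp, Finsupp.sum_zero_index]

variable {R ι B B' : Type*} [Ring R] [Algebra k R] [CommRing B] [Algebra k B] [CommRing B']
  [Algebra k B']

theorem map_freeAlgebra_lift {A A' : Type*} [Semiring A] [Algebra k A] [Semiring A'] [Algebra k A']
    (g : A →ₐ[k] A') (x : ι → A) (f : FreeAlgebra k ι) :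
    g (FreeAlgebra.lift k x f) = FreeAlgebra.lift k (g ∘ x) f :=
  DFunLike.congr_fun (f := g.comp (FreeAlgebra.lift k x)) (FreeAlgebra.hom_ext (by ext; simp)) f

theorem lTensor_map_id (l : R →ₗ[k] N) (ψ : B →ₐ[k] B') (t : B ⊗[k] R) :
    l.lTensor B' (Algebra.TensorProduct.map ψ (AlgHom.id k R) t) =
      ψ.toLinearMap.rTensor N (l.lTensor B t) := by
  induction t <;> simp_all

theorem lTensor_freeAlgebra_lift_eq_zero [Infinite k] {l : R →ₗ[k] N} {f : FreeAlgebra k ι}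
    (h : ∀ x : ι → R, l (FreeAlgebra.lift k x f) = 0) (X : ι → B ⊗[k] R) :
    l.lTensor B (FreeAlgebra.lift k X f) = 0 := by
  let φ : MvPolynomial B k →ₐ[k] B := MvPolynomial.aeval id
  have hφ : Function.Surjective (Algebra.TensorProduct.map φ (AlgHom.id k R)) :=
    TensorProduct.map_surjective (fun b => ⟨MvPolynomial.X b, by simp [φ]⟩) Function.surjective_id
  obtain ⟨Y, rfl⟩ := hφ.comp_left X
  have hgeneric : l.lTensor (MvPolynomial B k) (FreeAlgebra.lift k Y f) = 0 := by
    refine eq_zero_of_forall_rTensor_aeval_eq_zero fun c => ?_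
    let e := (Algebra.TensorProduct.lid k R).toAlgHom.comp
      (Algebra.TensorProduct.map (MvPolynomial.aeval c) (AlgHom.id k R))
    rw [← lTensor_map_id, ← (TensorProduct.lid k N).map_eq_zero_iff]
    have := h (e ∘ Y)
    rw [← map_freeAlgebra_lift] at this
    rw [← this]
    generalize (FreeAlgebra.lift k Y) f = t
    induction t <;> simp_all [e]
  rw [← map_freeAlgebra_lift, lTensor_map_id, hgeneric, map_zero]

/-- The algebra homomorphism `x ↦ x + ε ⁅x, r⁆`, where `ε ^ 2 = 0`. -/
def dualNumberInner (k : Type*) {R : Type*} [Field k] [Ring R] [Algebra k R] (r : R) :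
    R →ₐ[k] DualNumber k ⊗[k] R :=
  AlgHom.ofLinearMap
    (TensorProduct.mk k _ R 1 + (TensorProduct.mk k _ R DualNumber.eps).comp
      (LinearMap.mulRight k r - LinearMap.mulLeft k r))
    (by simp [Algebra.TensorProduct.one_def])
    (fun x y => by
      have h : ⁅x * y, r⁆ = ⁅x, r⁆ * y + x * ⁅y, r⁆ := by simp only [Ring.lie_def]; noncomm_ring
      simp [← Ring.lie_def, h, add_mul, mul_add, tmul_add, add_assoc])

theorem lie_freeAlgebra_lift_mem [Infinite k] {W : Submodule k R} {f : FreeAlgebra k ι}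
    (h : ∀ x : ι → R, FreeAlgebra.lift k x f ∈ W) (x : ι → R) (r : R) :
    ⁅FreeAlgebra.lift k x f, r⁆ ∈ W := by
  have hx := lTensor_freeAlgebra_lift_eq_zero (l := W.mkQ) (fun x => (by simpa using h x))
    (dualNumberInner k r ∘ x)
  rw [← map_freeAlgebra_lift] at hx
  have hε := congrArg (TensorProduct.lid k _ ∘ (TrivSqZeroExt.sndHom k k).rTensor _) hx
  rw [← Submodule.Quotient.mk_eq_zero, Ring.lie_def, Submodule.Quotient.mk_sub]
  simpa [dualNumberInner] using hε

end PolynomialIdentities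

section Separation

variable {k M ι : Type*} [Field k] [AddCommGroup M] [Module k M]

theorem exists_units_zpow_ne_one [Infinite k] {m : ℤ} (hm : m ≠ 0) : ∃ t : kˣ, t ^ m ≠ 1 := by
  by_contra! h
  have hX : (Polynomial.X ^ (m.natAbs + 1) : Polynomial k) = Polynomial.X := by
    refine Polynomial.funext fun c => ?_
    rcases eq_or_ne c 0 with rfl | hc
    · simp
    · have hpow := congrArg Units.val (pow_natAbs_eq_one.2 (h (Units.mk0 c hc)))
      rw [Units.val_pow_eq_pow_val, Units.val_mk0, Units.val_one] at hpow
      rw [Polynomial.eval_pow, Polynomial.eval_X, pow_succ, hpow, one_mul]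
  have hdeg := congrArg Polynomial.natDegree hX
  rw [Polynomial.natDegree_X_pow, Polynomial.natDegree_X] at hdeg
  lia

/-- The subring of functions `ℤ → k` generated by the characters `m ↦ u ^ m` for units `u`. -/
def zpowSubring (k : Type*) [Field k] : Subring (ℤ → k) :=
  Subring.closure (Set.range fun (u : kˣ) (m : ℤ) => ((u ^ m : kˣ) : k))

theorem zpow_mem_zpowSubring (u : kˣ) : (fun m : ℤ => ((u ^ m : kˣ) : k)) ∈ zpowSubring k :=
  Subring.subset_closure ⟨u, rfl⟩

theorem sum_smul_mem_of_mem_zpowSubring {V : AddSubgroup M}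
    {I : Finset ι} {e : ι → ℤ} {v : ι → M} (hV : ∀ u : kˣ, ∑ i ∈ I, u ^ e i • v i ∈ V)
    {f : ℤ → k} (hf : f ∈ zpowSubring k) : ∑ i ∈ I, f (e i) • v i ∈ V := by
  let φ : kˣ →* ℤ → k :=
    { toFun u m := ((u ^ m : kˣ) : k)
      map_one' := by ext; simp
      map_mul' u t := by ext; simp [mul_zpow] }
  have hφ : f ∈ AddSubgroup.closure (MonoidHom.mrange φ : Set (ℤ → k)) := by
    rw [← Submonoid.closure_eq (MonoidHom.mrange φ)]
    exact Subring.mem_closure_iff.1 hf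
  clear hf
  induction hφ using AddSubgroup.closure_induction with
  | mem f hf =>
    obtain ⟨u, rfl⟩ := hf
    exact hV u
  | zero => simp
  | add f g _ _ hf hg => simpa [add_smul, Finset.sum_add_distrib] using V.add_mem hf hg
  | neg f _ hf => simpa using V.neg_mem hf

theorem exists_mem_zpowSubring_apply_eq_zero [Infinite k] {m : ℤ} (hm : m ≠ 0) :
    ∃ f ∈ zpowSubring k, f 0 = 1 ∧ f m = 0 := by
  obtain ⟨t, ht⟩ := exists_units_zpow_ne_one (k := k) hm
  let x : ℤ → k := 1 - fun l : ℤ => ((t ^ l : kˣ) : k)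
  have hxm : x m ≠ 0 := sub_ne_zero.2 fun h => ht (Units.val_eq_one.1 h.symm)
  let w := Units.mk0 (x m) hxm ^ (-m.sign)
  have hw : x m ^ m.natAbs * ((w ^ m : kˣ) : k) = 1 := by
    have hunit : Units.mk0 (x m) hxm ^ m.natAbs * w ^ m = 1 := by
      rw [← zpow_mul, neg_mul, Int.sign_mul_self_eq_natAbs, zpow_neg, zpow_natCast, mul_inv_cancel]
    exact congrArg Units.val hunit
  refine ⟨1 - x ^ m.natAbs * fun l : ℤ => ((w ^ l : kˣ) : k), ?_, ?_, ?_⟩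
  · have hx : x ∈ zpowSubring k := sub_mem (one_mem _) (zpow_mem_zpowSubring t)
    exact sub_mem (one_mem _) (mul_mem (pow_mem hx _) (zpow_mem_zpowSubring w))
  · simp [x, hm]
  · exact sub_eq_zero.2 hw.symm

theorem exists_mem_zpowSubring_eq_ite [Infinite k] (S : Finset ℤ) :
    ∃ f ∈ zpowSubring k, ∀ m ∈ S, f m = if m = 0 then 1 else 0 := by
  choose! f hf hf0 hfm using fun m (hm : m ≠ 0) =>
    exists_mem_zpowSubring_apply_eq_zero (k := k) hm
  refine ⟨∏ m ∈ S.erase 0, f m, prod_mem fun m hm => hf m (Finset.ne_of_mem_erase hm),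
    fun m hm => ?_⟩
  rw [Finset.prod_apply]
  split_ifs with h
  · exact Finset.prod_eq_one fun l hl => h ▸ hf0 l (Finset.ne_of_mem_erase hl)
  · exact Finset.prod_eq_zero (Finset.mem_erase.2 ⟨h, hm⟩) (hfm m h)

/-- An additive subgroup need not be closed under scalars, so the Vandermonde argument is not
available here; instead one multiplies characters, which only uses integral combinations. -/
theorem sum_filter_eq_zero_mem [Infinite k] {V : AddSubgroup M} {I : Finset ι} {e : ι → ℤ}
    {v : ι → M} (hV : ∀ u : kˣ, ∑ i ∈ I, u ^ e i • v i ∈ V) : ∑ i ∈ I with e i = 0, v i ∈ V := by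
  obtain ⟨f, hf, hfI⟩ := exists_mem_zpowSubring_eq_ite (k := k) (I.image e)
  convert sum_smul_mem_of_mem_zpowSubring hV hf using 1
  rw [Finset.sum_filter]
  refine Finset.sum_congr rfl fun i hi => ?_
  rw [hfI _ (Finset.mem_image_of_mem e hi), ite_smul, one_smul, zero_smul]

end Separation

section PowDeriv

/-- The derivative at `a` in the direction `b` of `x ↦ x ^ (n + 1)`. -/
def powDeriv {R : Type*} [Ring R] (n : ℕ) (a b : R) : R :=
  ∑ l ∈ Finset.range (n + 1), a ^ l * b * a ^ (n - l)

/-- The derivative at `y` in the direction `z` of `b ↦ (a * b) ^ (n + 1) - (b * a) ^ (n + 1)`. -/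
def powCommutatorDeriv {R : Type*} [Ring R] (n : ℕ) (a y z : R) : R :=
  powDeriv n (a * y) (a * z) - powDeriv n (y * a) (z * a)

variable {k R : Type*} [Field k] [Ring R] [Algebra k R]

theorem coeff_one_C_mul_X_add_C_pow (n : ℕ) (a b : R) :
    ((Polynomial.C b * Polynomial.X + Polynomial.C a) ^ (n + 1)).coeff 1 =
      powDeriv n a b := by
  have h0 : ∀ m, ((Polynomial.C b * Polynomial.X + Polynomial.C a) ^ m).coeff 0 = a ^ m := by
    intro m
    induction m with
    | zero => simp
    | succ m ih => simp [pow_succ, Polynomial.mul_coeff_zero, ih]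
  induction n with
  | zero => simp [powDeriv]
  | succ n ih =>
    rw [pow_succ', Polynomial.mul_coeff_one, ih, h0, powDeriv, powDeriv,
      Finset.sum_range_succ' _ (n + 1)]
    simp [Finset.mul_sum, pow_succ', mul_assoc]

theorem add_smul_pow_eq_sum {N j : ℕ} (hj : j < N) (a b : R) (s : k) :
    (a + s • b) ^ j = ∑ i ∈ Finset.range N,
      s ^ i • ((Polynomial.C b * Polynomial.X + Polynomial.C a) ^ j).coeff i := by
  let ev := Polynomial.eval₂RingHom' (RingHom.id R) (algebraMap k R s)
    fun x => (Algebra.commutes s x).symm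
  have hdeg : ((Polynomial.C b * Polynomial.X + Polynomial.C a) ^ j).natDegree < N :=
    (Polynomial.natDegree_pow_le_of_le j Polynomial.natDegree_linear_le).trans_lt (by simpa)
  have hev : ev (Polynomial.C b * Polynomial.X + Polynomial.C a) = a + s • b := by
    simp [ev, Polynomial.eval₂RingHom', Algebra.smul_def, Algebra.commutes, add_comm]
  rw [← hev, ← map_pow]
  change Polynomial.eval₂ _ _ _ = _
  rw [Polynomial.eval₂_eq_sum_range' _ hdeg]
  simp [Algebra.smul_def, ← Algebra.commutes, ← map_pow]

theorem powDeriv_smul (n : ℕ) (a b : R) (s : k) : powDeriv n a (s • b) = s • powDeriv n a b := by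
  simp [powDeriv, Finset.smul_sum]

theorem powCommutatorDeriv_smul (n : ℕ) (a y z : R) (s : k) :
    powCommutatorDeriv n a y (s • z) = s • powCommutatorDeriv n a y z := by
  simp [powCommutatorDeriv, powDeriv_smul, smul_sub]

theorem aeval_smul_add_smul (p : Polynomial k) (a b : R) (s t : k) :
    Polynomial.aeval (s • (a + t • b)) p =
      ∑ x ∈ Finset.range (p.natDegree + 1) ×ˢ Finset.range (p.natDegree + 1), (s ^ x.1 * t ^ x.2) •
        p.coeff x.1 • ((Polynomial.C b * Polynomial.X + Polynomial.C a) ^ x.1).coeff x.2 := by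
  rw [Polynomial.aeval_eq_sum_range, Finset.sum_product]
  refine Finset.sum_congr rfl fun j hj => ?_
  rw [smul_pow, add_smul_pow_eq_sum (Finset.mem_range.1 hj), Finset.smul_sum, Finset.smul_sum]
  refine Finset.sum_congr rfl fun i _ => ?_
  simp only [smul_smul]
  ring_nf

/-- The additive `p`-commutators of `R`. -/
def polyCommutators {k : Type*} [CommRing k] (p : Polynomial k) (R : Type*) [Ring R]
    [Algebra k R] : Set R :=
  {x | ∃ a b : R, x = Polynomial.aeval (a * b) p - Polynomial.aeval (b * a) p}

/-- With `b = u • y + u ^ (-n) • z`, the terms of `(a * b) ^ j` containing `z` exactly `i` times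
scale with `u ^ (j - (n + 1) * i)`. For `j ≤ n + 1` only `j = n + 1`, `i = 1` has weight `0`. -/
theorem powCommutatorDeriv_mem_closure [Infinite k] {p : Polynomial k} {n : ℕ}
    (hp : p.natDegree = n + 1) (a y z : R) :
    powCommutatorDeriv n a y z ∈ AddSubgroup.closure (polyCommutators p R) := by
  let z' := p.leadingCoeff⁻¹ • z
  let v : ℕ × ℕ → R := fun x => p.coeff x.1 •
    (((Polynomial.C (a * z') * Polynomial.X + Polynomial.C (a * y)) ^ x.1).coeff x.2 -
      ((Polynomial.C (z' * a) * Polynomial.X + Polynomial.C (y * a)) ^ x.1).coeff x.2)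
  have hv : v (n + 1, 1) = powCommutatorDeriv n a y z := by
    have hc : p.leadingCoeff ≠ 0 := Polynomial.leadingCoeff_ne_zero.2 fun h => by simp [h] at hp
    have hcoeff : p.coeff (n + 1) = p.leadingCoeff := hp ▸ rfl
    simp only [v, coeff_one_C_mul_X_add_C_pow, hcoeff]
    rw [← powCommutatorDeriv, powCommutatorDeriv_smul, smul_inv_smul₀ hc]
  have hsum := sum_filter_eq_zero_mem (k := k) (V := AddSubgroup.closure (polyCommutators p R))
    (I := Finset.range (p.natDegree + 1) ×ˢ Finset.range (p.natDegree + 1))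
    (e := fun x => x.1 - (n + 1) * x.2) (v := v) fun u => by
      refine AddSubgroup.subset_closure ⟨a, (u : k) • (y + ((u⁻¹ ^ (n + 1) : kˣ) : k) • z'), ?_⟩
      rw [mul_smul_comm, smul_mul_assoc, mul_add, add_mul, mul_smul_comm, smul_mul_assoc,
        aeval_smul_add_smul, aeval_smul_add_smul, ← Finset.sum_sub_distrib]
      refine Finset.sum_congr rfl fun x _ => ?_
      rw [← smul_sub, ← smul_sub, Units.smul_def]
      congr 1
      rw [← Units.val_pow_eq_pow_val, ← Units.val_pow_eq_pow_val, ← Units.val_mul, zpow_sub,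
        ← pow_mul, inv_pow, zpow_natCast]
      norm_cast
  rwa [Finset.sum_eq_single (n + 1, 1), hv] at hsum
  · rintro ⟨j, i⟩ hx hne
    simp only [Finset.mem_filter, Finset.mem_product, Finset.mem_range, hp] at hx
    have hi : i < 2 := by
      by_contra! hi
      nlinarith
    interval_cases i
    · obtain rfl : j = 0 := by simpa using hx.2
      simp [v]
    · exact absurd (by lia : j = n + 1) fun h => hne (h ▸ rfl)
  · simp [hp]

end PowDeriv

section InfiniteField

variable {k R : Type*} [Field k] [Ring R] [Algebra k R]

theorem lift_powCommutatorDeriv {ι : Type*} (x : ι → R) (n : ℕ) (a y z : FreeAlgebra k ι) :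
    FreeAlgebra.lift k x (powCommutatorDeriv n a y z) = powCommutatorDeriv n
      (FreeAlgebra.lift k x a) (FreeAlgebra.lift k x y) (FreeAlgebra.lift k x z) := by
  simp [powCommutatorDeriv, powDeriv]

theorem exists_isLieIdeal_of_infinite [Infinite k] {p : Polynomial k} {n : ℕ}
    (hp : p.natDegree = n + 1) : ∃ L ≤ AddSubgroup.closure (polyCommutators p R),
      IsLieIdeal L ∧ ∀ a y z, powCommutatorDeriv n a y z ∈ L := by
  let S : Set R := Set.range fun x : Fin 3 → R => powCommutatorDeriv n (x 0) (x 1) (x 2)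
  have hS : ∀ a y z, powCommutatorDeriv n a y z ∈ S := fun a y z => ⟨![a, y, z], rfl⟩
  refine ⟨(Submodule.span k S).toAddSubgroup, fun x hx => ?_, fun x hx r => ?_,
    fun a y z => Submodule.subset_span (hS a y z)⟩
  · induction hx using Submodule.closure_induction with
    | zero => exact zero_mem _
    | add x y _ _ hx hy => exact add_mem hx hy
    | smul_mem c x hx =>
      obtain ⟨x, rfl⟩ := hx
      rw [← powCommutatorDeriv_smul]
      exact powCommutatorDeriv_mem_closure hp _ _ _
  · let f : FreeAlgebra k (Fin 3) :=
      powCommutatorDeriv n (FreeAlgebra.ι k 0) (FreeAlgebra.ι k 1) (FreeAlgebra.ι k 2)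
    have hf : ∀ x : Fin 3 → R, FreeAlgebra.lift k x f = powCommutatorDeriv n (x 0) (x 1) (x 2) :=
      fun x => by simp [f, lift_powCommutatorDeriv]
    induction hx using Submodule.span_induction with
    | zero => simp
    | add x y _ _ hx hy => simpa using add_mem hx hy
    | smul c x _ hx => simpa using Submodule.smul_mem _ c hx
    | mem x hx =>
      obtain ⟨x, rfl⟩ := hx
      have hx := lie_freeAlgebra_lift_mem (W := Submodule.span k S) (f := f)
        (fun x => hf x ▸ Submodule.subset_span (hS _ _ _)) x r
      rwa [hf] at hx

section Action

variable {E M : Type*} [Ring E] [AddCommGroup M] [Module E M] {a z : E} {v w : M}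

theorem powDeriv_smul_of_smul_eq_zero {b : E} (ha : a • w = 0) (n : ℕ) :
    powDeriv n a b • w = a ^ n • b • w := by
  have hsum : ∀ l ∈ Finset.range n, (a ^ l * b * a ^ (n - l)) • w = 0 := fun l hl => by
    obtain ⟨i, hi⟩ := Nat.exists_eq_add_of_lt (Finset.mem_range.1 hl)
    rw [show n - l = i + 1 by lia, pow_succ, mul_smul, mul_smul _ a, ha, smul_zero, smul_zero]
  rw [powDeriv, Finset.sum_smul, Finset.sum_range_succ, Finset.sum_eq_zero hsum, zero_add,
    Nat.sub_self, pow_zero, mul_one, mul_smul]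

theorem mul_self_pow_smul_eq (ha : a • v = v) (l : ℕ) : (a * a) ^ l • v = v := by
  induction l with
  | zero => rw [pow_zero, one_smul]
  | succ l ih => rw [pow_succ, mul_smul, mul_smul, ha, ha, ih]

theorem powCommutatorDeriv_smul_eq_zero (hav : a • v = v) (hzv : z • v = 0) (n : ℕ) :
    powCommutatorDeriv n a a z • v = 0 := by
  simp [powCommutatorDeriv, powDeriv, sub_smul, Finset.sum_smul, mul_smul,
    mul_self_pow_smul_eq hav, hav, hzv]

theorem powCommutatorDeriv_smul_eq (hav : a • v = v) (haw : a • w = 0) (hzw : z • w = v) (n : ℕ) :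
    powCommutatorDeriv n a a z • w = v := by
  have haw' : (a * a) • w = 0 := by rw [mul_smul, haw, smul_zero]
  rw [powCommutatorDeriv, sub_smul, powDeriv_smul_of_smul_eq_zero haw',
    powDeriv_smul_of_smul_eq_zero haw', mul_smul a, mul_smul z, hzw, haw, hav,
    mul_self_pow_smul_eq hav, smul_zero, smul_zero, sub_zero]

theorem ActsDensely.exists_smul_eq_and_smul_eq {K : Type*} [DivisionRing K] [Module K M]
    (h : ActsDensely E K M) (hvw : LinearIndependent K ![v, w]) (x y : M) :
    ∃ t : E, t • v = x ∧ t • w = y := by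
  obtain ⟨t, ht⟩ := h.exists_smul_eq hvw Finset.univ ![x, y]
  exact ⟨t, ht 0 (Finset.mem_univ 0), ht 1 (Finset.mem_univ 1)⟩

end Action

theorem exists_linearIndependent_pair {K M : Type*} [Field K] [AddCommGroup M] [Module K M]
    [Module R M] [SMulCommClass K R M] [FaithfulSMul R M] (hnc : ∃ a b : R, a * b ≠ b * a) :
    ∃ v w : M, LinearIndependent K ![v, w] := by
  rcases lt_or_ge 1 (Module.rank K M) with hrank | hrank
  · obtain ⟨x, hx⟩ := rank_pos_iff_exists_ne_zero.1 (zero_lt_one.trans hrank)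
    obtain ⟨y, hy⟩ := exists_linearIndependent_pair_of_one_lt_rank hrank hx
    exact ⟨x, y, hy⟩
  obtain ⟨v, hv⟩ := rank_le_one_iff.1 hrank
  obtain ⟨a, b, hab⟩ := hnc
  refine absurd (FaithfulSMul.eq_of_smul_eq_smul fun m : M => ?_) hab
  obtain ⟨α, hα⟩ := hv (a • v)
  obtain ⟨β, hβ⟩ := hv (b • v)
  obtain ⟨c, rfl⟩ := hv m
  rw [← smul_comm c, ← smul_comm c, mul_smul, mul_smul, ← hα, ← hβ, ← smul_comm β, ← smul_comm α,
    ← hα, ← hβ, smul_comm α]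

theorem faithfulSMul_of_isSimpleRing (R M : Type*) [Ring R] [IsSimpleRing R] [AddCommGroup M]
    [Nontrivial M] [Module R M] : FaithfulSMul R M := by
  obtain ⟨m, hm⟩ := exists_ne (0 : M)
  have : Nontrivial (AddMonoid.End M) := ⟨1, 0, fun h => hm (DFunLike.congr_fun h m)⟩
  exact ⟨fun h => (Module.toAddMonoidEnd R M).injective (AddMonoidHom.ext h)⟩

theorem exists_field_actsDensely_of_isSimpleRing (k : Type*) (R : Type u) [Field k] [Ring R]
    [Algebra k R] [IsSimpleRing R] :
    ∃ (K M : Type u) (_ : Field K) (_ : Algebra k K) (_ : AddCommGroup M) (_ : Module k M)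
      (_ : Module K M) (_ : Module R M) (_ : IsScalarTower k K M) (_ : IsScalarTower k R M)
      (_ : SMulCommClass K R M), Nontrivial M ∧ ActsDensely (K ⊗[k] R) K M := by
  obtain ⟨I, hI⟩ := Ideal.exists_maximal R
  have : IsSimpleModule R (R ⧸ I) := isSimpleModule_iff_isCoatom.2 hI.out
  obtain ⟨K, _, _, _, _, _, hdense⟩ := exists_field_actsDensely k R (R ⧸ I)
  exact ⟨K, R ⧸ I, ‹_›, ‹_›, inferInstance, inferInstance, ‹_›, inferInstance, ‹_›, inferInstance,
    ‹_›, IsSimpleModule.nontrivial R _, hdense⟩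

theorem exists_not_commute_powCommutatorDeriv_of_actsDensely {E K M : Type*} [Ring E]
    [DivisionRing K] [AddCommGroup M] [Module K M] [Module E M]
    (hdense : ActsDensely E K M) {v w : M} (hvw : LinearIndependent K ![v, w]) (n : ℕ) :
    ∃ a y z a' y' z' : E,
      ¬Commute (powCommutatorDeriv n a y z) (powCommutatorDeriv n a' y' z') := by
  obtain ⟨a, hav, haw⟩ := hdense.exists_smul_eq_and_smul_eq hvw v 0
  obtain ⟨z, hzv, hzw⟩ := hdense.exists_smul_eq_and_smul_eq hvw 0 v
  obtain ⟨a', hav', haw'⟩ := hdense.exists_smul_eq_and_smul_eq hvw 0 w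
  obtain ⟨z', hzv', -⟩ := hdense.exists_smul_eq_and_smul_eq hvw w 0
  refine ⟨a, a, z, a', a', z', fun h => hvw.ne_zero 0 (?_ : v = 0)⟩
  have hv := congrArg (· • v) h.eq
  simpa only [mul_smul, powCommutatorDeriv_smul_eq_zero hav hzv, smul_zero,
    powCommutatorDeriv_smul_eq haw' hav' hzv', powCommutatorDeriv_smul_eq hav haw hzw] using hv

theorem commute_powCommutatorDeriv_tensorProduct [Infinite k] {n : ℕ}
    (h : ∀ a y z a' y' z' : R,
      Commute (powCommutatorDeriv n a y z) (powCommutatorDeriv n a' y' z'))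
    {B : Type*} [CommRing B] [Algebra k B] (a y z a' y' z' : B ⊗[k] R) :
    Commute (powCommutatorDeriv n a y z) (powCommutatorDeriv n a' y' z') := by
  let Φ (x : Fin 3 → FreeAlgebra k (Fin 3 ⊕ Fin 3)) := powCommutatorDeriv n (x 0) (x 1) (x 2)
  let Φ₁ := Φ fun i => FreeAlgebra.ι k (Sum.inl i)
  let Φ₂ := Φ fun i => FreeAlgebra.ι k (Sum.inr i)
  have hf := lTensor_freeAlgebra_lift_eq_zero (B := B) (l := LinearMap.id) (f := Φ₁ * Φ₂ - Φ₂ * Φ₁)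
    (fun x => by
      simpa [Φ₁, Φ₂, Φ, lift_powCommutatorDeriv] using sub_eq_zero.2 (h _ _ _ _ _ _).eq)
    (Sum.elim ![a, y, z] ![a', y', z'])
  exact sub_eq_zero.1 (by simpa [Φ₁, Φ₂, Φ, lift_powCommutatorDeriv] using hf)

theorem exists_not_commute_powCommutatorDeriv (k : Type*) {R : Type u} [Field k] [Infinite k]
    [Ring R] [Algebra k R] [IsSimpleRing R] (hnc : ∃ a b : R, a * b ≠ b * a) (n : ℕ) :
    ∃ a y z a' y' z' : R,
      ¬Commute (powCommutatorDeriv n a y z) (powCommutatorDeriv n a' y' z') := by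
  by_contra! h
  obtain ⟨K, M, _, _, _, _, _, _, _, _, _, _, hdense⟩ :=
    exists_field_actsDensely_of_isSimpleRing k R
  have := faithfulSMul_of_isSimpleRing R M
  obtain ⟨v, w, hvw⟩ := exists_linearIndependent_pair (R := R) (K := K) (M := M) hnc
  obtain ⟨a, y, z, a', y', z', hcomm⟩ :=
    exists_not_commute_powCommutatorDeriv_of_actsDensely hdense hvw n
  exact hcomm (commute_powCommutatorDeriv_tensorProduct h a y z a' y' z')

end InfiniteField

section PermSum

theorem lie_prod_ofFn {R : Type*} [Ring R] (r : R) : ∀ {m : ℕ} (x : Fin m → R),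
    ⁅(List.ofFn x).prod, r⁆ = ∑ i, (List.ofFn (Function.update x i ⁅x i, r⁆)).prod
  | 0, x => by simp [Ring.lie_def]
  | m + 1, x => by
    have hsucc : ∀ (i : Fin m) (y : R), (List.ofFn (Function.update x i.succ y)).prod =
        x 0 * (List.ofFn (Function.update (x ∘ Fin.succ) i y)).prod := fun i y => by
      rw [List.ofFn_succ, List.prod_cons, Function.update_of_ne (Fin.succ_ne_zero i).symm,
        ← Function.update_comp_eq_of_injective x (Fin.succ_injective m)]
      rfl
    have hzero : ∀ y : R, (List.ofFn (Function.update x 0 y)).prod =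
        y * (List.ofFn (x ∘ Fin.succ)).prod := fun y => by
      simp [List.ofFn_succ, Function.comp_def]
    have ih := lie_prod_ofFn r (x ∘ Fin.succ)
    simp only [Fin.sum_univ_succ, hsucc, hzero, ← Finset.mul_sum]
    rw [List.ofFn_succ, List.prod_cons]
    simp only [Function.comp_def] at ih ⊢
    rw [← ih]
    simp only [Ring.lie_def]
    noncomm_ring

variable {k R : Type*} [CommRing k] [Ring R] [Algebra k R] {m : ℕ} (c : Equiv.Perm (Fin m) → ℤ)

/-- The value at `x` of the multilinear noncommutative polynomial `∑ σ, c σ • X_σ(0) ⋯ X_σ(m-1)`,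
as a multilinear map over `k`. -/
def permSum (k : Type*) {R : Type*} [CommRing k] [Ring R] [Algebra k R] {m : ℕ}
    (c : Equiv.Perm (Fin m) → ℤ) : MultilinearMap k (fun _ : Fin m => R) R :=
  ∑ σ, c σ • (MultilinearMap.mkPiAlgebraFin k m R).domDomCongr σ

theorem permSum_apply (x : Fin m → R) :
    permSum k c x = ∑ σ, c σ • (List.ofFn (x ∘ σ)).prod := by
  simp [permSum, Function.comp_def]

theorem permSum_sub (c d : Equiv.Perm (Fin m) → ℤ) (x : Fin m → R) :
    permSum k (c - d) x = permSum k c x - permSum k d x := by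
  simp [permSum_apply, sub_smul]

theorem lie_permSum (x : Fin m → R) (r : R) :
    ⁅permSum k c x, r⁆ = ∑ i, permSum k c (Function.update x i ⁅x i, r⁆) := by
  simp only [permSum_apply, sum_lie, smul_lie]
  rw [Finset.sum_comm]
  refine Finset.sum_congr rfl fun σ _ => ?_
  rw [lie_prod_ofFn, Finset.smul_sum,
    ← Equiv.sum_comp σ fun i => c σ • (List.ofFn (Function.update x i ⁅x i, r⁆ ∘ σ)).prod]
  exact Finset.sum_congr rfl fun i _ => by
    rw [Function.update_comp_eq_of_injective x σ.injective, Function.comp_apply]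

theorem isLieIdeal_closure_range_permSum :
    IsLieIdeal (AddSubgroup.closure (Set.range (permSum k c : (Fin m → R) → R))) := by
  intro x hx r
  induction hx using AddSubgroup.closure_induction with
  | mem x hx =>
    obtain ⟨x, rfl⟩ := hx
    rw [lie_permSum]
    exact sum_mem fun i _ => AddSubgroup.subset_closure ⟨_, rfl⟩
  | zero => simp
  | add x y _ _ hx hy => simpa using add_mem hx hy
  | neg x _ hx => simpa using neg_mem hx

end PermSum

section Polarization

theorem sum_neg_one_pow_card_of_superset {ι : Type*} [Fintype ι] [DecidableEq ι] (T : Finset ι) :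
    ∑ S : Finset ι, (if T ⊆ S then (-1 : ℤ) ^ S.card else 0) =
      if T = Finset.univ then (-1) ^ Fintype.card ι else 0 := by
  have h := Finset.prod_add (fun _ => -1) (fun i => if i ∉ T then (1 : ℤ) else 0) Finset.univ
  have hT : ∀ i, (-1 + if i ∉ T then (1 : ℤ) else 0) = if i ∈ T then -1 else 0 := fun i => by
    by_cases hi : i ∈ T <;> simp [hi]
  have hS : ∀ S : Finset ι, (∀ i ∈ Finset.univ \ S, i ∉ T) ↔ T ⊆ S := fun S => by grind
  simp only [Finset.powerset_univ, hT, Finset.prod_ite_zero, Finset.prod_const, one_pow, hS] at h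
  simpa [Finset.eq_univ_iff_forall, Finset.card_univ] using h.symm

theorem sum_neg_one_pow_card_smul_map_sum {κ ι M N : Type*} [Fintype κ] [DecidableEq κ] [Fintype ι]
    [DecidableEq ι] [AddCommGroup M] [AddCommGroup N] (μ : MultilinearMap ℤ (fun _ : κ => M) N)
    (y : κ → ι → M) : ∑ S : Finset ι, (-1 : ℤ) ^ S.card • μ (fun t => ∑ i ∈ S, y t i) =
      (-1) ^ Fintype.card ι • ∑ w : κ → ι with w.Surjective, μ fun t => y t (w t) := by
  have hS : ∀ S : Finset ι, (-1 : ℤ) ^ S.card • μ (fun t => ∑ i ∈ S, y t i) = ∑ w : κ → ι,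
      (if Finset.univ.image w ⊆ S then (-1 : ℤ) ^ S.card else 0) • μ fun t => y t (w t) := by
    intro S
    have hw : ∀ w : κ → ι, w ∈ Fintype.piFinset (fun _ => S) ↔ Finset.univ.image w ⊆ S :=
      fun w => by simp [Fintype.mem_piFinset, Finset.image_subset_iff]
    simp_rw [MultilinearMap.map_sum_finset, Finset.smul_sum, ite_smul, zero_smul, ← hw,
      Finset.sum_ite_mem, Finset.univ_inter]
  have hsurj : ∀ w : κ → ι, Finset.univ.image w = Finset.univ ↔ w.Surjective := fun w => by
    simp [Finset.eq_univ_iff_forall, Function.Surjective]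
  simp_rw [hS]
  rw [Finset.sum_comm]
  simp_rw [← Finset.sum_smul, sum_neg_one_pow_card_of_superset, hsurj, ite_smul, zero_smul,
    Finset.smul_sum, Finset.sum_filter]

/-- The sum of the `x i` with `i ∈ S` and `i + t` even. The values at `t = 0` and `t = 1` are
substituted for `a` and `b` in `p(ab) - p(ba)`, so that polarization over `S` leaves only the words
whose letters alternate in parity. -/
def parityPart {R : Type*} [AddCommMonoid R] {m : ℕ} (x : Fin m → R) (S : Finset (Fin m)) (t : ℕ) :
    R :=
  ∑ i ∈ S, if Even (i + t) then x i else 0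

theorem parityPart_add_two {R : Type*} [AddCommMonoid R] {m : ℕ} (x : Fin m → R)
    (S : Finset (Fin m)) (t : ℕ) : parityPart x S (t + 2) = parityPart x S t := by
  have h : ∀ i : ℕ, Even (i + (t + 2)) ↔ Even (i + t) := fun i => by grind
  simp only [parityPart, h]

theorem prod_ofFn_of_periodic {R : Type*} [Monoid R] (u : ℕ → R) (hu : ∀ t, u (t + 2) = u t)
    (j : ℕ) : (List.ofFn fun t : Fin (2 * j) => u t).prod = (u 0 * u 1) ^ j := by
  induction j with
  | zero => simp
  | succ j ih =>
    change (List.ofFn fun t : Fin (2 * j + 2) => u t).prod = _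
    simp [List.ofFn_succ, hu, ih, pow_succ', mul_assoc]

/-- The indicator function of the permutations `σ` with `σ t + t + s` even for all `t`. -/
def parityIndicator {m : ℕ} (s : ℕ) (σ : Equiv.Perm (Fin m)) : ℤ :=
  if ∀ t, Even ((σ t : ℕ) + (s + t)) then 1 else 0

theorem sum_surjective_eq_sum_perm {ι N : Type*} [Fintype ι] [DecidableEq ι] [AddCommMonoid N]
    (f : (ι → ι) → N) : ∑ w : ι → ι with w.Surjective, f w = ∑ σ : Equiv.Perm ι, f σ := by
  refine (Finset.sum_bij (fun (σ : Equiv.Perm ι) _ => ⇑σ) (fun σ _ => by simp [σ.surjective])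
    (fun σ _ τ _ h => DFunLike.coe_injective h) (fun w hw => ?_) fun σ _ => rfl).symm
  have hw : w.Surjective := by simpa using hw
  exact ⟨Equiv.ofBijective w (Finite.surjective_iff_bijective.1 hw), Finset.mem_univ _, rfl⟩

variable {k R : Type*} [CommRing k] [Ring R] [Algebra k R]

theorem parityPart_mul_pow {m j : ℕ} (x : Fin m → R) (S : Finset (Fin m)) (s : ℕ) :
    (parityPart x S s * parityPart x S (s + 1)) ^ j = MultilinearMap.mkPiAlgebraFin ℤ (2 * j) R
      fun t => ∑ i ∈ S, if Even (i + (s + t) : ℕ) then x i else 0 := by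
  rw [MultilinearMap.mkPiAlgebraFin_apply]
  exact (prod_ofFn_of_periodic (fun t => parityPart x S (s + t))
    (fun t => parityPart_add_two x S _) j).symm

theorem prod_ofFn_ite {R : Type*} [MonoidWithZero R] {m : ℕ} (P : Fin m → Prop) [DecidablePred P]
    (x : Fin m → R) : (List.ofFn fun t => if P t then x t else 0).prod =
      if ∀ t, P t then (List.ofFn x).prod else 0 := by
  split_ifs with h
  · simp [h]
  · push Not at h
    obtain ⟨t, ht⟩ := h
    exact List.prod_eq_zero (List.mem_ofFn.2 ⟨t, if_neg ht⟩)

theorem sum_neg_one_pow_card_smul_parityPart_pow_eq_zero {m j : ℕ} (hj : 2 * j < m) (x : Fin m → R)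
    (s : ℕ) : ∑ S : Finset (Fin m),
      (-1 : ℤ) ^ S.card • (parityPart x S s * parityPart x S (s + 1)) ^ j = 0 := by
  have hsurj : ∀ w : Fin (2 * j) → Fin m, ¬w.Surjective := fun w hw => by
    have := Fintype.card_le_of_surjective w hw
    simp only [Fintype.card_fin] at this
    lia
  simp_rw [parityPart_mul_pow, sum_neg_one_pow_card_smul_map_sum, hsurj]
  simp

theorem sum_neg_one_pow_card_smul_parityPart_pow {n : ℕ} (x : Fin (2 * n) → R) (s : ℕ) :
    ∑ S : Finset (Fin (2 * n)),
      (-1 : ℤ) ^ S.card • (parityPart x S s * parityPart x S (s + 1)) ^ n =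
        permSum k (parityIndicator s) x := by
  simp_rw [parityPart_mul_pow, sum_neg_one_pow_card_smul_map_sum, sum_surjective_eq_sum_perm,
    MultilinearMap.mkPiAlgebraFin_apply, permSum_apply, prod_ofFn_ite, parityIndicator]
  simp [Function.comp_def]

theorem sum_neg_one_pow_card_smul_aeval (p : Polynomial k) (x : Fin (2 * p.natDegree) → R) (s : ℕ) :
    ∑ S : Finset (Fin (2 * p.natDegree)),
      (-1 : ℤ) ^ S.card • p.aeval (parityPart x S s * parityPart x S (s + 1)) =
        p.leadingCoeff • permSum k (parityIndicator s) x := by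
  simp_rw [Polynomial.aeval_eq_sum_range, Finset.smul_sum, smul_comm _ (p.coeff _)]
  rw [Finset.sum_comm]
  simp_rw [← Finset.smul_sum]
  rw [Finset.sum_range_succ, sum_neg_one_pow_card_smul_parityPart_pow (k := k),
    Finset.sum_eq_zero fun j hj => ?_, zero_add, Polynomial.leadingCoeff]
  rw [sum_neg_one_pow_card_smul_parityPart_pow_eq_zero (by simpa using hj), smul_zero]

theorem leadingCoeff_smul_permSum_mem_closure (p : Polynomial k) (x : Fin (2 * p.natDegree) → R) :
    p.leadingCoeff • permSum k (parityIndicator 0 - parityIndicator 1) x ∈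
      AddSubgroup.closure (polyCommutators p R) := by
  rw [permSum_sub, smul_sub, ← sum_neg_one_pow_card_smul_aeval,
    ← sum_neg_one_pow_card_smul_aeval, ← Finset.sum_sub_distrib]
  simp_rw [← smul_sub, zero_add, parityPart_add_two x _ 0]
  refine sum_mem fun S _ => zsmul_mem ?_ _
  exact AddSubgroup.subset_closure ⟨_, _, rfl⟩

theorem permSum_mem_closure {k R : Type*} [Field k] [Ring R] [Algebra k R] {p : Polynomial k}
    (hp : 0 < p.natDegree) (x : Fin (2 * p.natDegree) → R) :
    permSum k (parityIndicator 0 - parityIndicator 1) x ∈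
      AddSubgroup.closure (polyCommutators p R) := by
  let i : Fin (2 * p.natDegree) := ⟨0, by lia⟩
  have hlead : p.leadingCoeff ≠ 0 := fun h => by simp [Polynomial.leadingCoeff_eq_zero.1 h] at hp
  have h := leadingCoeff_smul_permSum_mem_closure p
    (Function.update x i (p.leadingCoeff⁻¹ • x i))
  rwa [MultilinearMap.map_update_smul, Function.update_eq_self, smul_inv_smul₀ hlead] at h

end Polarization

section PermSumAction

theorem commute_map_of_forall_basis {B A κ ι : Type*} [CommRing B] [Ring A] [Algebra B A]
    [Finite κ] (b : Module.Basis ι B A) (μ : MultilinearMap B (fun _ : κ => A) A) {z : A}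
    (h : ∀ v : κ → ι, Commute (μ fun t => b (v t)) z) (x : κ → A) : Commute (μ x) z := by
  have hμ : (LinearMap.mulRight B z).compMultilinearMap μ =
      (LinearMap.mulLeft B z).compMultilinearMap μ :=
    Module.Basis.ext_multilinear (fun _ => b) fun v => (h v).eq
  exact DFunLike.congr_fun hμ x

theorem map_permSum {k B R A : Type*} [CommRing k] [CommRing B] [Ring R] [Ring A] [Algebra k R]
    [Algebra B A] {m : ℕ} (c : Equiv.Perm (Fin m) → ℤ) (f : R →+* A) (x : Fin m → R) :
    f (permSum k c x) = permSum B c fun t => f (x t) := by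
  simp [permSum_apply, map_list_prod, List.map_ofFn, Function.comp_def]

theorem commute_permSum_tensorProduct {k B R : Type*} [Field k] [CommRing B] [Algebra k B] [Ring R]
    [Algebra k R] {m : ℕ} {c : Equiv.Perm (Fin m) → ℤ}
    (h : ∀ x y : Fin m → R, Commute (permSum k c x) (permSum k c y)) (x y : Fin m → B ⊗[k] R) :
    Commute (permSum B c x) (permSum B c y) := by
  let b := Algebra.TensorProduct.basis B (Module.Basis.ofVectorSpace k R)
  have hb : ∀ v : Fin m → _, permSum B c (fun t => b (v t)) = Algebra.TensorProduct.includeRight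
      (permSum k c fun t => Module.Basis.ofVectorSpace k R (v t)) := fun v => by
    simpa [b] using (map_permSum (B := B) c
      (Algebra.TensorProduct.includeRight : R →ₐ[k] B ⊗[k] R).toRingHom _).symm
  refine commute_map_of_forall_basis b _ (fun v => ?_) x
  refine (commute_map_of_forall_basis b _ (fun w => ?_) y).symm
  rw [hb, hb]
  exact (h _ _).map Algebra.TensorProduct.includeRight

variable {E M : Type*} [Ring E] [AddCommGroup M] [Module E M] {v : ℕ → M} {z : ℕ → E} {N : ℕ}

theorem prod_ofFn_smul_of_shift (hz : ∀ i, ∀ j ≤ N, z i • v j = if j = i + 1 then v i else 0) :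
    ∀ {m j : ℕ} (_ : j + m ≤ N) (w : Fin m → ℕ),
      (List.ofFn fun t => z (w t)).prod • v (j + m) = if ∀ t, w t = j + t then v j else 0
  | 0, j, _, w => by simp
  | m + 1, j, hj, w => by
    have ih := prod_ofFn_smul_of_shift hz (m := m) (j := j + 1) (by lia) (fun t => w t.succ)
    rw [List.ofFn_succ, List.prod_cons, mul_smul, show j + (m + 1) = j + 1 + m by lia, ih,
      smul_ite, smul_zero, hz _ _ (by lia)]
    simp only [Fin.forall_fin_succ, Fin.val_succ, Fin.val_zero]
    grind

theorem add_perm_eq_add_iff {m : ℕ} (hm : 0 < m) {s j : ℕ} (σ : Equiv.Perm (Fin m)) :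
    (∀ t, s + (σ t : ℕ) = j + t) ↔ s = j ∧ σ = 1 := by
  refine ⟨fun h => ?_, by rintro ⟨rfl, rfl⟩ t; rfl⟩
  have h₀ := h ⟨0, hm⟩
  have h₁ := h (σ.symm ⟨0, hm⟩)
  rw [Equiv.apply_symm_apply] at h₁
  have hs : s = j := by simp only at h₀ h₁; lia
  exact ⟨hs, Equiv.ext fun t => Fin.ext (by simpa [hs] using h t)⟩

theorem permSum_smul_of_shift {k : Type*} [CommRing k] [Algebra k E]
    (hz : ∀ i, ∀ j ≤ N, z i • v j = if j = i + 1 then v i else 0)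
    {m : ℕ} (hm : 0 < m) (c : Equiv.Perm (Fin m) → ℤ) (s : ℕ) {j : ℕ} (hj : j + m ≤ N) :
    permSum k c (fun t => z (s + t)) • v (j + m) = if s = j then c 1 • v j else 0 := by
  rw [permSum_apply, Finset.sum_smul]
  simp_rw [smul_assoc, Function.comp_def, prod_ofFn_smul_of_shift hz hj, add_perm_eq_add_iff hm]
  simp [ite_and]

theorem exists_not_commute_permSum_of_actsDensely {K : Type*} (k : Type*) [CommRing k]
    [Algebra k E] [DivisionRing K] [Module K M]
    (hdense : ActsDensely E K M) (hv : LinearIndependent K v) {m : ℕ} (hm : 0 < m)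
    {c : Equiv.Perm (Fin m) → ℤ} (hc : c 1 = 1) :
    ∃ x y : Fin m → E, ¬Commute (permSum k c x) (permSum k c y) := by
  choose z hz using fun i : ℕ =>
    hdense.exists_smul_eq hv (Finset.range (m + m + 1)) fun j => if j = i + 1 then v i else 0
  replace hz : ∀ i, ∀ j ≤ m + m, z i • v j = if j = i + 1 then v i else 0 :=
    fun i j hj => hz i j (Finset.mem_range.2 (by lia))
  refine ⟨fun t => z (0 + t), fun t => z (m + t), fun h => hv.ne_zero 0 ?_⟩
  have hv := congrArg (· • v (m + m)) h.eq
  simp only [mul_smul] at hv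
  rw [permSum_smul_of_shift hz hm c m le_rfl, permSum_smul_of_shift hz hm c 0 le_rfl,
    if_pos rfl, if_neg hm.ne, hc, one_smul, smul_zero] at hv
  have h₀ := permSum_smul_of_shift (k := k) hz hm c 0 (j := 0) (by lia)
  rw [zero_add m, hv, if_pos rfl, hc, one_smul] at h₀
  exact h₀.symm

theorem parityIndicator_sub_apply_one {m : ℕ} (hm : 0 < m) :
    (parityIndicator 0 - parityIndicator 1 : Equiv.Perm (Fin m) → ℤ) 1 = 1 := by
  have h : ¬∀ t : Fin m, Even ((t : ℕ) + (1 + t)) := fun h => by simpa using h ⟨0, hm⟩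
  simp [parityIndicator, h]

end PermSumAction

section CentralSimple

variable {k R K M : Type*} [Field k] [Ring R] [Algebra k R] [Field K] [AddCommGroup M] [Module K M]
  [Module R M] [SMulCommClass K R M]

theorem sum_smul_tensorProduct_smul_eq_zero {ι : Type*} {s : Finset ι} {c : ι → K} {r : ι → R}
    (h : ∀ m : M, ∑ i ∈ s, c i • r i • m = 0) (τ : R ⊗[k] Rᵐᵒᵖ) (m : M) :
    ∑ i ∈ s, c i • (τ • r i) • m = 0 := by
  induction τ with
  | zero =>
    have h₀ : ∀ x : R, (0 : R ⊗[k] Rᵐᵒᵖ) • x = 0 := fun x => zero_smul (R ⊗[k] Rᵐᵒᵖ) x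
    simp only [h₀, zero_smul, smul_zero, Finset.sum_const_zero]
  | add τ τ' hτ hτ' => simp only [add_smul, smul_add, Finset.sum_add_distrib, hτ, hτ', add_zero]
  | tmul a b =>
    simp only [TensorProduct.Algebra.smul_def, MulOpposite.smul_eq_mul_unop, smul_eq_mul, mul_smul,
      smul_comm (_ : K) a, ← Finset.smul_sum, h, smul_zero]

variable [IsSimpleRing R]

instance isSimpleModule_tensorProduct_mulOpposite : IsSimpleModule (R ⊗[k] Rᵐᵒᵖ) R := by
  refine isSimpleModule_iff_toSpanSingleton_surjective.2 ⟨inferInstance, fun x hx => ?_⟩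
  let f := (LinearMap.toSpanSingleton (R ⊗[k] Rᵐᵒᵖ) R x).toAddMonoidHom
  refine f.range_eq_top.1 (eq_top_of_forall_mul_mul_mem hx fun s r => ?_)
  exact ⟨s ⊗ₜ MulOpposite.op r, by simp [f, TensorProduct.Algebra.smul_def, mul_assoc]⟩

theorem actsDensely_tensorProduct_mulOpposite [Algebra.IsCentral k R] :
    ActsDensely (R ⊗[k] Rᵐᵒᵖ) k R := by
  refine actsDensely_of_isSimpleModule fun g => ?_
  have hl : ∀ r, g r = r * g 1 := fun r => by
    simpa [TensorProduct.Algebra.smul_def] using map_smul g (r ⊗ₜ[k] (1 : Rᵐᵒᵖ)) 1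
  have hr : ∀ r, g r = g 1 * r := fun r => by
    simpa [TensorProduct.Algebra.smul_def] using map_smul g ((1 : R) ⊗ₜ[k] MulOpposite.op r) 1
  obtain ⟨c, hc⟩ := Algebra.IsCentral.mem_center_iff (K := k) |>.1
    (Subalgebra.mem_center_iff.2 fun r => (hl r).symm.trans (hr r))
  exact ⟨c, fun r => by rw [hr, hc, Algebra.smul_def]⟩

variable [Algebra k K] [Module k M] [IsScalarTower k K M] [IsScalarTower k R M]

/-- As `R` is central, `R ⊗ Rᵐᵒᵖ` acts densely on `R`, and therefore a relation
`∑ i, c i • b i • m = 0` for all `m` can be transformed into `c j • m = 0` for any chosen `j`. -/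
theorem faithfulSMul_tensorProduct [Algebra.IsCentral k R] [Nontrivial M] :
    FaithfulSMul (K ⊗[k] R) M := by
  classical
  refine ⟨fun {t t'} htt' => sub_eq_zero.1 ?_⟩
  let b := Module.Basis.ofVectorSpace k R
  let b' := Algebra.TensorProduct.basis K b
  let c := b'.repr (t - t')
  have hc : ∀ m : M, ∑ i ∈ c.support, c i • b i • m = 0 := fun m => by
    have h : t - t' = ∑ i ∈ c.support, c i ⊗ₜ[k] b i := by
      conv_lhs => rw [← b'.linearCombination_repr (t - t'), Finsupp.linearCombination_apply]
      simp [b', b, Finsupp.sum, TensorProduct.smul_tmul', c]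
    have h' : (t - t') • m = 0 := by rw [sub_smul, htt', sub_self]
    simpa only [h, Finset.sum_smul, TensorProduct.Algebra.smul_def] using h'
  rw [← b'.repr.map_eq_zero_iff]
  ext i
  by_contra hi
  obtain ⟨τ, hτ⟩ := actsDensely_tensorProduct_mulOpposite.exists_smul_eq b.linearIndependent
    c.support fun j => if j = i then 1 else 0
  obtain ⟨m, hm⟩ := exists_ne (0 : M)
  have h := sum_smul_tensorProduct_smul_eq_zero hc τ m
  rw [Finset.sum_congr rfl fun j hj => by rw [hτ j hj], Finset.sum_eq_single_of_mem i
    (Finsupp.mem_support_iff.2 hi) fun j _ hji => by simp [hji], if_pos rfl, one_smul] at h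
  exact (smul_eq_zero.1 h).elim hi hm

theorem finite_of_finite_module [Algebra.IsCentral k R] [Nontrivial M] [Module.Finite K M] :
    Module.Finite k R := by
  have := faithfulSMul_tensorProduct (k := k) (R := R) (K := K) (M := M)
  have : IsScalarTower K (K ⊗[k] R) M := .of_algebraMap_smul fun c m => by
    simp [TensorProduct.Algebra.smul_def]
  have : Module.Finite K (K ⊗[k] R) := Module.Finite.of_injective
    (Algebra.lsmul K K M : K ⊗[k] R →ₐ[K] Module.End K M).toLinearMap
    fun t t' h => FaithfulSMul.eq_of_smul_eq_smul fun m : M => DFunLike.congr_fun h m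
  exact Module.Finite.of_finite_tensorProduct_of_faithfullyFlat K

end CentralSimple

theorem exists_linearIndependent_nat_of_not_finite {K M : Type*} [DivisionRing K]
    [AddCommGroup M] [Module K M] (h : ¬Module.Finite K M) :
    ∃ v : ℕ → M, LinearIndependent K v := by
  let b := Module.Basis.ofVectorSpace K M
  have : Infinite (Module.Basis.ofVectorSpaceIndex K M) :=
    not_finite_iff_infinite.1 fun _ => h (Module.Finite.of_basis b)
  exact ⟨_, b.linearIndependent.comp _ (Infinite.natEmbedding _).injective⟩

theorem exists_not_commute_permSum_of_finite (k : Type*) {R : Type u} [Field k] [Finite k] [Ring R]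
    [Algebra k R] [Algebra.IsCentral k R] [IsSimpleRing R] [Infinite R] {m : ℕ} (hm : 0 < m)
    {c : Equiv.Perm (Fin m) → ℤ} (hc : c 1 = 1) :
    ∃ x y : Fin m → R, ¬Commute (permSum k c x) (permSum k c y) := by
  by_contra! h
  obtain ⟨K, M, _, _, _, _, _, _, _, _, _, _, hdense⟩ :=
    exists_field_actsDensely_of_isSimpleRing k R
  have hM : ¬Module.Finite K M := fun _ => by
    have := finite_of_finite_module (k := k) (R := R) (K := K) (M := M)
    have := Module.finite_of_finite k (M := R)
    exact not_finite R
  obtain ⟨v, hv⟩ := exists_linearIndependent_nat_of_not_finite hM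
  obtain ⟨x, y, hxy⟩ := exists_not_commute_permSum_of_actsDensely K hdense hv hm hc
  exact hxy (commute_permSum_tensorProduct h x y)

section Assembly

variable {k : Type*}

theorem closure_polyCommutators_le {R : Type*} [CommRing k] [Ring R] [Algebra k R]
    (p : Polynomial k) : AddSubgroup.closure (polyCommutators p R) ≤
      AddSubgroup.closure {x : R | ∃ a b : R, x = a * b - b * a} := by
  refine (AddSubgroup.closure_le _).2 ?_
  rintro _ ⟨a, b, rfl⟩
  rw [Polynomial.aeval_eq_sum_range, Polynomial.aeval_eq_sum_range, ← Finset.sum_sub_distrib]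
  refine AddSubgroup.sum_mem _ fun j _ => ?_
  rcases j with _ | j
  · simp
  refine AddSubgroup.subset_closure ⟨p.coeff (j + 1) • a, b * (a * b) ^ j, ?_⟩
  rw [pow_succ' (a * b), pow_succ (b * a), ← mul_assoc ((b * a) ^ j), mul_pow_mul]
  simp only [smul_mul_assoc, mul_smul_comm, mul_assoc]

theorem exists_isLieIdeal_lie_ne_zero {R : Type u} [Field k] [Ring R] [Algebra k R]
    [Algebra.IsCentral k R] [IsSimpleRing R] [Infinite R] (hnc : ∃ a b : R, a * b ≠ b * a)
    {p : Polynomial k} (hp : 0 < p.natDegree) :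
    ∃ L ≤ AddSubgroup.closure (polyCommutators p R), IsLieIdeal L ∧
      ∃ x ∈ L, ∃ y ∈ L, ⁅x, y⁆ ≠ 0 := by
  rcases finite_or_infinite k with _ | _
  · let c : Equiv.Perm (Fin (2 * p.natDegree)) → ℤ := parityIndicator 0 - parityIndicator 1
    obtain ⟨x, y, hxy⟩ := exists_not_commute_permSum_of_finite k (R := R) (c := c) (by lia)
      (parityIndicator_sub_apply_one (by lia))
    refine ⟨AddSubgroup.closure (Set.range (permSum k c)), (AddSubgroup.closure_le _).2 ?_,
      isLieIdeal_closure_range_permSum c, permSum k c x, AddSubgroup.subset_closure ⟨x, rfl⟩,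
      permSum k c y, AddSubgroup.subset_closure ⟨y, rfl⟩, fun h => hxy (sub_eq_zero.1 h)⟩
    rintro _ ⟨z, rfl⟩
    exact permSum_mem_closure hp z
  · obtain ⟨n, hn⟩ := Nat.exists_eq_add_one.2 hp
    obtain ⟨L, hLp, hL, hmem⟩ := exists_isLieIdeal_of_infinite (R := R) hn
    obtain ⟨a, y, z, a', y', z', hcomm⟩ := exists_not_commute_powCommutatorDeriv k hnc n
    exact ⟨L, hLp, hL, _, hmem a y z, _, hmem a' y' z', fun h => hcomm (sub_eq_zero.1 h)⟩

theorem polyCommutators_map {K R : Type*} [CommRing k] [CommRing K] [Ring R] [Algebra k R]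
    [Algebra K R] {φ : k →+* K} (hφ : (algebraMap K R).comp φ = algebraMap k R)
    (p : Polynomial k) : polyCommutators (p.map φ) R = polyCommutators p R := by
  simp only [polyCommutators, Polynomial.aeval_def, Polynomial.eval₂_map, hφ]

theorem exists_isCentral_polyCommutators_eq {R : Type u} [Field k] [Ring R] [Algebra k R]
    [IsSimpleRing R] (p : Polynomial k) :
    ∃ (Z : Type u) (_ : Field Z) (_ : Algebra Z R) (_ : Algebra.IsCentral Z R) (q : Polynomial Z),
      q.natDegree = p.natDegree ∧ polyCommutators q R = polyCommutators p R := by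
  let := (IsSimpleRing.isField_center R).toField
  let φ : k →+* Subring.center R := (algebraMap k R).codRestrict _ fun c =>
    Subring.mem_center_iff.2 fun x => (Algebra.commutes c x).symm
  exact ⟨Subring.center R, inferInstance, inferInstance, ⟨fun x hx => ⟨⟨x, hx⟩, rfl⟩⟩, p.map φ,
    p.natDegree_map φ, polyCommutators_map rfl p⟩

end Assembly

end PolynomialCommutator

open PolynomialCommutator

/-- Let `R` be an infinite, noncommutative, simple unital `F`-algebra
and `p ∈ F[x]` nonconstant. Then the additive subgroup generated by the additive
`p`-commutators `p(ab) − p(ba)` equals the additive subgroup generated by all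
commutators, and the subring generated by the additive `p`-commutators is all of `R`. -/
theorem stmt_17 (F : Type*) [Field F] (R : Type*) [Ring R] [Algebra F R]
    [Infinite R]
    (hnc : ∃ a b : R, a * b ≠ b * a)
    (hsimple : IsSimpleRing R)
    (p : Polynomial F) (hdeg : 1 ≤ p.natDegree) :
    AddSubgroup.closure
        {x : R | ∃ a b : R,
          x = Polynomial.aeval (a * b) p - Polynomial.aeval (b * a) p} =
      AddSubgroup.closure {x : R | ∃ a b : R, x = a * b - b * a} ∧
    Subring.closure
        {x : R | ∃ a b : R,
          x = Polynomial.aeval (a * b) p - Polynomial.aeval (b * a) p} = ⊤ := by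
  obtain ⟨Z, _, _, _, q, hq, hqp⟩ := exists_isCentral_polyCommutators_eq (R := R) p
  obtain ⟨L, hLp, hL, x, hx, y, hy, hxy⟩ := exists_isLieIdeal_lie_ne_zero hnc (p := q) (by lia)
  rw [hqp] at hLp
  refine ⟨(closure_polyCommutators_le p).antisymm ((AddSubgroup.closure_le _).2 ?_),
    subringClosure_eq_top_of_isLieIdeal hLp hL hx hy hxy⟩
  rintro _ ⟨a, b, rfl⟩
  exact hLp (lie_mem_of_isLieIdeal hL hx hy hxy a b)
end
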